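/- arXiv:1201.5055 — 10 statements merged into one kernel-verified Lean document; each statement's English description precedes it below -/
import Mathlib

section
/- Let n ≥ 1 and let W ∈ ℝ^{2n×2n} be skew-Hamiltonian. Then there exists a real Hamiltonian matrix H ∈ ℝ^{2n×2n} such that H² = W. -/
/-!
The matrix equation is a statement about an endomorphism `W` of a finite-dimensional real space `V`
that is self-adjoint for a nondegenerate alternating form `ω`: there is an `H` with `H² = W` which
is skew-adjoint for `ω`. This is `exists_sqrt`, proved by induction on `dim V`.

For self-adjoint `W`, every cyclic subspace `ℝ[W]x` is isotropic. A primary component of the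
minimal polynomial provides vectors `x ≠ 0` and `y` such that `ω` pairs `ℝ[W]x` and `ℝ[W]y`
perfectly (`exists_dual_pair`). Then `U = ℝ[W]x ⊕ ℝ[W]y` is a nondegenerate `W`-invariant subspace,
and on it the map `a(W)x + b(W)y ↦ (X b)(W)x + a(W)y`, which interchanges the two cyclic summands,
is well defined, squares to `W`, and is skew-adjoint (`exists_sqrt_on_block`, `omega_pairMap`).
The orthogonal complement of `U` is again nondegenerate and `W`-invariant, of smaller dimension.
-/

open Matrix Polynomial
variable {V : Type*} [AddCommGroup V] [Module ℝ V]

theorem omega_aeval (ω : LinearMap.BilinForm ℝ V) (W : Module.End ℝ V)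
    (hW : ∀ u v, ω (W u) v = ω u (W v)) (r : ℝ[X]) (u v : V) :
    ω (aeval W r u) v = ω u (aeval W r v) := by
  induction r using Polynomial.induction_on' generalizing u v with
  | add p q hp hq => simp [hp, hq]
  | monomial k a =>
    have key : ∀ u v, ω ((W ^ k) u) v = ω u ((W ^ k) v) := by
      induction k with
      | zero => simp
      | succ k ih =>
        intro u v
        rw [pow_succ, Module.End.mul_apply, ih, hW, ← Module.End.mul_apply, ← pow_succ', pow_succ]
    simp [aeval_monomial, key]

/-- There are `x ≠ 0` and `y` such that the pairing `(r, s) ↦ ω (r(W) s(W) x) y` on `ℝ[X]` has no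
radical beyond the polynomials annihilating both `x` and `y`. Writing the minimal polynomial as
`p ^ (j + 1) * q` with `p` irreducible and `p ∤ q`, both vectors are taken in the range of `q(W)`,
with `ω (p ^ j (W) x) y ≠ 0`. -/
theorem exists_dual_pair [FiniteDimensional ℝ V] [Nontrivial V]
    (ω : LinearMap.BilinForm ℝ V) (W : Module.End ℝ V)
    (hnd : ∀ v, (∀ w, ω v w = 0) → v = 0)
    (hW : ∀ u v, ω (W u) v = ω u (W v)) :
    ∃ x y : V, x ≠ 0 ∧ ∀ r : ℝ[X], (∀ s : ℝ[X], ω (aeval W (s * r) x) y = 0) →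
      aeval W r x = 0 ∧ aeval W r y = 0 := by
  have hm0 : minpoly ℝ W ≠ 0 := minpoly.ne_zero (Algebra.IsIntegral.isIntegral W)
  have hmu : ¬ IsUnit (minpoly ℝ W) := minpoly.not_isUnit ℝ W
  obtain ⟨p, hp, hpm⟩ := WfDvdMonoid.exists_irreducible_factor hmu hm0
  obtain ⟨k, q, hpq, hm⟩ := WfDvdMonoid.max_power_factor hm0 hp
  obtain ⟨j, rfl⟩ : ∃ j, k = j + 1 := by
    rcases k with _ | j
    · exact absurd (by simpa [hm] using hpm) hpq
    · exact ⟨j, rfl⟩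
  have hN : aeval W (p ^ j * q) ≠ 0 := by
    intro h
    have h1 := minpoly.dvd ℝ W h
    rw [hm] at h1
    have hq0 : q ≠ 0 := by rintro rfl; simp at hpq
    have h2 := (mul_dvd_mul_iff_right hq0).1 h1
    rw [pow_dvd_pow_iff hp.ne_zero hp.not_isUnit] at h2
    omega
  obtain ⟨v, hv⟩ : ∃ v, aeval W (p ^ j * q) v ≠ 0 := by
    by_contra! h
    exact hN (LinearMap.ext h)
  have hmz : ∀ z, aeval W (p ^ (j + 1)) (aeval W q z) = 0 := fun z => by
    rw [← Module.End.mul_apply, ← map_mul, ← hm, minpoly.aeval]; rfl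
  obtain ⟨x, hx⟩ : ∃ x, x = aeval W q v := ⟨_, rfl⟩
  have hx1 : aeval W (p ^ j) x ≠ 0 := by
    rwa [hx, ← Module.End.mul_apply, ← map_mul]
  have hx2 : aeval W (p ^ (j + 1)) x = 0 := hx ▸ hmz v
  have hqx : aeval W q (aeval W (p ^ j) x) ≠ 0 := by
    intro h
    obtain ⟨a, b, hab⟩ : IsCoprime (p ^ (j + 1)) q :=
      ((hp.coprime_iff_not_dvd).2 hpq).pow_left
    apply hx1
    have e : p ^ j = (a * p ^ j) * p ^ (j + 1) + b * (q * p ^ j) := by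
      linear_combination (-p ^ j) * hab
    rw [e, map_add, map_mul, map_mul _ b, map_mul _ q, LinearMap.add_apply]
    simp only [Module.End.mul_apply, hx2, h, map_zero, add_zero]
  obtain ⟨y', hy'⟩ : ∃ y', ω (aeval W q (aeval W (p ^ j) x)) y' ≠ 0 := by
    by_contra! h
    exact hqx (hnd _ h)
  refine ⟨x, aeval W q y', ?_, fun r hr => ?_⟩
  · rintro rfl
    simp at hx1
  · suffices hd : p ^ (j + 1) ∣ r by
      obtain ⟨c, rfl⟩ := hd
      rw [mul_comm, map_mul, Module.End.mul_apply, Module.End.mul_apply, hx2, hmz]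
      simp
    -- Otherwise `gcd(r, p ^ (j + 1))` divides `p ^ j`, so `p ^ j (W) x` is a multiple of `r(W) x`,
    -- although it pairs nontrivially with `y`.
    by_contra hd
    obtain ⟨i, hi, hg⟩ := (dvd_prime_pow hp.prime (j + 1)).1
      (EuclideanDomain.gcd_dvd_right r (p ^ (j + 1)))
    have hij : i ≤ j := by
      by_contra hlt
      obtain rfl : i = j + 1 := by omega
      exact hd (hg.symm.dvd.trans (EuclideanDomain.gcd_dvd_left _ _))
    obtain ⟨c, hc⟩ := hg.dvd.trans (pow_dvd_pow p hij)
    rw [EuclideanDomain.gcd_eq_gcd_ab] at hc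
    apply hy'
    rw [omega_aeval ω W hW]
    have e : p ^ j = (c * EuclideanDomain.gcdA r (p ^ (j + 1))) * r
        + (c * EuclideanDomain.gcdB r (p ^ (j + 1))) * p ^ (j + 1) := by
      rw [hc]; ring
    rw [e, map_add, LinearMap.add_apply, map_add, LinearMap.add_apply, hr, map_mul _ _ (p ^ (j+1)),
      Module.End.mul_apply, hx2]
    simp

/-- The linear map `(a, b) ↦ a(W) x + b(W) y`; its range is `ℝ[W]x + ℝ[W]y`. -/
noncomputable def pairMap (W : Module.End ℝ V) (x y : V) : ℝ[X] × ℝ[X] →ₗ[ℝ] V :=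
  ((LinearMap.applyₗ x) ∘ₗ (aeval W).toLinearMap).coprod
    ((LinearMap.applyₗ y) ∘ₗ (aeval W).toLinearMap)

theorem pairMap_apply (W : Module.End ℝ V) (x y : V) (a b : ℝ[X]) :
    pairMap W x y (a, b) = aeval W a x + aeval W b y := rfl

/-- In the coordinates `(a, b)` of `pairMap`, the form is `φ (a d - b c)` with `φ r = ω (r(W) x) y`,
because each cyclic subspace of a self-adjoint map is isotropic. -/
theorem omega_pairMap (ω : LinearMap.BilinForm ℝ V) (W : Module.End ℝ V) (hω : ω.IsAlt)
    (hW : ∀ u v, ω (W u) v = ω u (W v)) (x y : V) (a b c d : ℝ[X]) :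
    ω (pairMap W x y (a, b)) (pairMap W x y (c, d)) = ω (aeval W (a * d - b * c) x) y := by
  have iso : ∀ (z : V) (r s : ℝ[X]), ω (aeval W r z) (aeval W s z) = 0 := by
    intro z r s
    have h1 : ω (aeval W r z) (aeval W s z) = ω (aeval W (s * r) z) z := by
      rw [map_mul, Module.End.mul_apply, omega_aeval ω W hW s]
    have h2 : ω (aeval W (s * r) z) z = ω z (aeval W (s * r) z) := omega_aeval ω W hW _ _ _
    have h3 := hω.neg_eq z (aeval W (s * r) z)
    linarith
  have h1 : ω (aeval W a x) (aeval W d y) = ω (aeval W (a * d) x) y := by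
    rw [mul_comm, map_mul, Module.End.mul_apply, omega_aeval ω W hW d]
  have h2 : ω (aeval W b y) (aeval W c x) = - ω (aeval W (b * c) x) y := by
    rw [← hω.neg_eq, map_mul, Module.End.mul_apply, omega_aeval ω W hW b]
  simp only [pairMap_apply, map_add, LinearMap.add_apply, iso, h1, h2, map_sub, LinearMap.sub_apply]
  ring

/-- For a pair as in `exists_dual_pair`, the subspace `ℝ[W]x + ℝ[W]y` meets its orthogonal
complement trivially, and the interchange `(a, b) ↦ (X b, a)` descends to it. The square of the
interchange is `(a, b) ↦ (X a, X b)`, that is, `W`. -/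
theorem exists_sqrt_on_block (ω : LinearMap.BilinForm ℝ V) (W : Module.End ℝ V) (hω : ω.IsAlt)
    (hW : ∀ u v, ω (W u) v = ω u (W v)) (x y : V)
    (hxy : ∀ r : ℝ[X], (∀ s : ℝ[X], ω (aeval W (s * r) x) y = 0) →
      aeval W r x = 0 ∧ aeval W r y = 0) :
    Disjoint (LinearMap.range (pairMap W x y)) (ω.orthogonal (LinearMap.range (pairMap W x y))) ∧
    ∃ h : LinearMap.range (pairMap W x y) →ₗ[ℝ] V, ∀ (a b : ℝ[X])
      (hab : pairMap W x y (a, b) ∈ LinearMap.range (pairMap W x y)),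
      h ⟨pairMap W x y (a, b), hab⟩ = pairMap W x y (X * b, a) := by
  have key : ∀ a b : ℝ[X],
      pairMap W x y (a, b) ∈ ω.orthogonal (LinearMap.range (pairMap W x y)) →
      (aeval W a x = 0 ∧ aeval W a y = 0) ∧ (aeval W b x = 0 ∧ aeval W b y = 0) := by
    intro a b hab
    rw [LinearMap.BilinForm.mem_orthogonal_iff] at hab
    refine ⟨hxy a fun s => ?_, hxy b fun s => ?_⟩
    · have := hab _ ⟨(0, s), rfl⟩
      rw [omega_pairMap ω W hω hW] at this
      simpa using this
    · have := hab _ ⟨(s, 0), rfl⟩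
      rw [omega_pairMap ω W hω hW] at this
      simpa using this
  refine ⟨?_, ?_⟩
  · rw [Submodule.disjoint_def]
    rintro _ ⟨⟨a, b⟩, rfl⟩ h
    obtain ⟨⟨h1, -⟩, -, h2⟩ := key a b h
    rw [pairMap_apply, h1, h2, add_zero]
  -- The map is defined through a linear section `g` of `pairMap`; the kernel computation `key`
  -- makes it independent of the section.
  · obtain ⟨g, hg⟩ := (pairMap W x y).rangeRestrict.exists_rightInverse_of_surjective
      (LinearMap.range_rangeRestrict _)
    refine ⟨pairMap W x y ∘ₗ
      (((LinearMap.mulLeft ℝ (X : ℝ[X])) ∘ₗ LinearMap.snd ℝ _ _).prod (LinearMap.fst ℝ _ _)) ∘ₗ g,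
      fun a b hab => ?_⟩
    obtain ⟨⟨a', b'⟩, hz⟩ : ∃ z, z = g ⟨pairMap W x y (a, b), hab⟩ := ⟨_, rfl⟩
    have h1 : pairMap W x y (a', b') = pairMap W x y (a, b) := by
      rw [hz]
      exact congrArg Subtype.val (LinearMap.congr_fun hg ⟨pairMap W x y (a, b), hab⟩)
    have h2 : pairMap W x y (a' - a, b' - b) = 0 := by
      rw [← Prod.mk_sub_mk, map_sub, h1, sub_self]
    obtain ⟨⟨-, h3⟩, h4, -⟩ := key (a' - a) (b' - b) (h2 ▸ Submodule.zero_mem _)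
    simp only [LinearMap.comp_apply, ← hz]
    change pairMap W x y (X * b', a') = _
    rw [← sub_eq_zero, ← map_sub, Prod.mk_sub_mk, ← mul_sub, pairMap_apply, h3, map_mul,
      Module.End.mul_apply, h4]
    simp

/-- A self-adjoint endomorphism of a finite-dimensional real symplectic space has a skew-adjoint
square root. -/
theorem exists_sqrt (N : ℕ) : ∀ (V : Type*) [AddCommGroup V] [Module ℝ V]
    [FiniteDimensional ℝ V] (ω : LinearMap.BilinForm ℝ V) (W : Module.End ℝ V),
    Module.finrank ℝ V = N → ω.IsAlt → (∀ v, (∀ w, ω v w = 0) → v = 0) →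
    (∀ u v, ω (W u) v = ω u (W v)) →
    ∃ H : Module.End ℝ V, (∀ u v, ω (H u) v = - ω u (H v)) ∧ ∀ v, H (H v) = W v := by
  induction N using Nat.strong_induction_on with
  | _ N ih =>
  intro V _ _ _ ω W hN hω hnd hW
  rcases subsingleton_or_nontrivial V with hV | hV
  · exact ⟨0, by simp, fun v => Subsingleton.elim _ _⟩
  obtain ⟨x, y, hx, hxy⟩ := exists_dual_pair ω W hnd hW
  obtain ⟨hdis, h, hh⟩ := exists_sqrt_on_block ω W hω hW x y hxy
  obtain ⟨U, hU⟩ : ∃ U, U = LinearMap.range (pairMap W x y) := ⟨_, rfl⟩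
  have hUmem : ∀ a b, pairMap W x y (a, b) ∈ U := fun a b => hU ▸ ⟨_, rfl⟩
  have hUex : ∀ u ∈ U, ∃ a b, u = pairMap W x y (a, b) := by
    rw [hU]; rintro _ ⟨⟨a, b⟩, rfl⟩; exact ⟨a, b, rfl⟩
  rw [← hU] at hdis
  have hcompl : IsCompl U (ω.orthogonal U) :=
    LinearMap.BilinForm.isCompl_orthogonal_of_restrict_nondegenerate hω.isRefl
      (LinearMap.BilinForm.nondegenerate_restrict_of_disjoint_orthogonal ω hω.isRefl hdis)
  have hWpair : ∀ a b, W (pairMap W x y (a, b)) = pairMap W x y (X * a, X * b) := by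
    intro a b
    simp [pairMap_apply]
  have horth : ∀ u ∈ U, ∀ w ∈ ω.orthogonal U, ω u w = 0 := fun u hu w hw =>
    LinearMap.BilinForm.mem_orthogonal_iff.1 hw u hu
  have horth' : ∀ u ∈ U, ∀ w ∈ ω.orthogonal U, ω w u = 0 := fun u hu w hw =>
    hω.isRefl _ _ (horth u hu w hw)
  have hWperp : ∀ w ∈ ω.orthogonal U, W w ∈ ω.orthogonal U := by
    intro w hw
    rw [LinearMap.BilinForm.mem_orthogonal_iff]
    intro u hu
    obtain ⟨a, b, rfl⟩ := hUex u hu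
    rw [← hW, hWpair]
    exact horth _ (hUmem _ _) _ hw
  have hxU : x ∈ U := by simpa [pairMap_apply] using hUmem 1 0
  have hlt : Module.finrank ℝ (ω.orthogonal U) < N := by
    rw [← hN]
    apply Submodule.finrank_lt
    intro htop
    exact hx (Submodule.disjoint_def.1 hdis x hxU (htop ▸ Submodule.mem_top))
  obtain ⟨H', hH'1, hH'2⟩ := ih _ hlt (ω.orthogonal U) (ω.restrict (ω.orthogonal U))
    (W.restrict hWperp) rfl (fun v => hω v)
    (by
      intro v hv
      apply Subtype.ext
      apply hnd
      intro w
      obtain ⟨u, hu, w', hw', rfl⟩ := Submodule.mem_sup.1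
        (show w ∈ U ⊔ ω.orthogonal U from hcompl.sup_eq_top ▸ Submodule.mem_top)
      rw [map_add, horth' u hu v v.2, zero_add]
      exact hv ⟨w', hw'⟩)
    (fun u v => hW u v)
  subst hU
  have hHU := fun a b => (LinearMap.ofIsCompl_apply_left hcompl (φ := h)
    (ψ := (ω.orthogonal _).subtype ∘ₗ H') ⟨_, hUmem a b⟩).trans (hh a b _)
  have hHp := fun w => LinearMap.ofIsCompl_apply_right hcompl (φ := h)
    (ψ := (ω.orthogonal _).subtype ∘ₗ H') w
  generalize LinearMap.ofIsCompl hcompl h ((ω.orthogonal _).subtype ∘ₗ H') = H at hHU hHp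
  simp only [LinearMap.comp_apply, Submodule.subtype_apply] at hHU hHp
  have hdec : ∀ v : V, ∃ a b, ∃ w : ω.orthogonal (LinearMap.range (pairMap W x y)),
      v = pairMap W x y (a, b) + w := by
    intro v
    obtain ⟨u, hu, w', hw', rfl⟩ := Submodule.mem_sup.1
        (show v ∈ LinearMap.range (pairMap W x y) ⊔ ω.orthogonal _ from
          hcompl.sup_eq_top ▸ Submodule.mem_top)
    obtain ⟨a, b, rfl⟩ := hUex u hu
    exact ⟨a, b, ⟨w', hw'⟩, rfl⟩
  refine ⟨H, fun u v => ?_, fun v => ?_⟩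
  · obtain ⟨a, b, w, rfl⟩ := hdec u
    obtain ⟨c, d, w', rfl⟩ := hdec v
    have e := hH'1 w w'
    simp only [LinearMap.BilinForm.restrict_apply, LinearMap.domRestrict_apply] at e
    simp only [map_add, LinearMap.add_apply, hHU, hHp, horth _ (hUmem _ _) _ (Subtype.prop _),
      horth' _ (hUmem _ _) _ (Subtype.prop _), omega_pairMap ω W hω hW, e, add_zero, zero_add]
    rw [show X * b * d - a * c = -(a * c - b * (X * d)) by ring, map_neg]
    simp only [LinearMap.neg_apply, map_neg]
    ring
  · obtain ⟨a, b, w, rfl⟩ := hdec v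
    simp only [map_add, hHU, hHp, hH'2, hWpair]
    rfl

theorem skewHamiltonian_has_hamiltonian_sqrt (n : ℕ) (hn : 1 ≤ n)
    (J W : Matrix (Fin n ⊕ Fin n) (Fin n ⊕ Fin n) ℝ)
    (hJ : J = Matrix.fromBlocks 0 1 (-1) 0)
    (hW : (W * J)ᵀ = -(W * J)) :
    ∃ H : Matrix (Fin n ⊕ Fin n) (Fin n ⊕ Fin n) ℝ,
      (H * J)ᵀ = H * J ∧ H * H = W := by
  have hJJ : J * J = -1 := by
    rw [hJ, Matrix.fromBlocks_multiply, ← Matrix.fromBlocks_one, Matrix.fromBlocks_neg]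
    simp
  have hJT : Jᵀ = -J := by
    rw [hJ, Matrix.fromBlocks_transpose, Matrix.fromBlocks_neg]
    simp
  -- The skew-Hamiltonian condition says that `W` is self-adjoint for the form `(u, v) ↦ uᵀ J v`.
  have hWJ : Wᵀ * J = J * W := by
    have h1 : J * Wᵀ = W * J := by
      rw [Matrix.transpose_mul, hJT, neg_mul] at hW
      exact neg_injective hW
    calc Wᵀ * J = -((J * J) * Wᵀ * J) := by rw [hJJ]; simp
      _ = -(J * (J * Wᵀ) * J) := by simp only [Matrix.mul_assoc]
      _ = -(J * W * (J * J)) := by rw [h1]; simp only [Matrix.mul_assoc]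
      _ = J * W := by rw [hJJ]; simp
  have hform : ∀ u v, Matrix.toBilin' J u v = u ⬝ᵥ J *ᵥ v := fun u v =>
    Matrix.toBilin'_apply' J u v
  obtain ⟨H, hH1, hH2⟩ := exists_sqrt _ _ (Matrix.toBilin' J) (Matrix.toLin' W) rfl
    (by
      intro v
      have h : v ⬝ᵥ J *ᵥ v = -(v ⬝ᵥ J *ᵥ v) := by
        conv_lhs => rw [Matrix.dotProduct_mulVec, ← Matrix.mulVec_transpose, hJT,
          Matrix.neg_mulVec, neg_dotProduct, dotProduct_comm]
      rw [hform]
      linarith)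
    (by
      intro v hv
      have h : v ᵥ* J = 0 := dotProduct_eq_zero _ fun w => by
        rw [← Matrix.dotProduct_mulVec, ← hform]; exact hv w
      have h2 : v ᵥ* (J * J) = 0 := by rw [← Matrix.vecMul_vecMul, h, Matrix.zero_vecMul]
      rw [hJJ, Matrix.vecMul_neg, Matrix.vecMul_one] at h2
      exact neg_eq_zero.1 h2)
    (by
      intro u v
      rw [hform, hform, Matrix.toLin'_apply, Matrix.toLin'_apply, Matrix.mulVec_mulVec, ← hWJ,
        ← Matrix.mulVec_mulVec, Matrix.dotProduct_mulVec u, Matrix.vecMul_transpose])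
  obtain ⟨M, rfl⟩ := Matrix.toLin'.surjective H
  have hMJ : Mᵀ * J = -(J * M) := by
    apply Matrix.ext_of_mulVec_single
    intro i
    apply dotProduct_eq
    intro u
    have := hH1 u (Pi.single i 1)
    rw [hform, hform, Matrix.toLin'_apply, Matrix.toLin'_apply] at this
    rw [dotProduct_comm, ← Matrix.mulVec_mulVec, Matrix.dotProduct_mulVec u, Matrix.vecMul_transpose,
      this, Matrix.neg_mulVec, neg_dotProduct, dotProduct_comm _ u, Matrix.mulVec_mulVec]
  refine ⟨M, ?_, ?_⟩
  · rw [Matrix.transpose_mul, hJT]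
    calc -J * Mᵀ = J * (Mᵀ * (J * J)) := by rw [hJJ]; simp
      _ = J * (Mᵀ * J) * J := by simp only [Matrix.mul_assoc]
      _ = -((J * J) * M * J) := by rw [hMJ]; simp only [Matrix.mul_assoc, mul_neg, neg_mul]
      _ = M * J := by rw [hJJ]; simp
  · apply Matrix.toLin'.injective
    apply LinearMap.ext
    intro v
    rw [Matrix.toLin'_mul, LinearMap.comp_apply, hH2]
end

section
/- Let n ≥ 1 and let W ∈ ℝ^{2n×2n} be skew-Hamiltonian. Then there exist a real symplectic matrix Ψ ∈ ℝ^{2n×2n} (which is necessarily invertible) and a matrix N ∈ ℝ^{n×n} such that Ψ⁻¹WΨ equals the block-diagonal matrix [[N, 0],[0, Nᵀ]]. -/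
/-!
With `ω x y = xᵀ J y`, the matrix `W` is skew-Hamiltonian exactly when it is self-adjoint for the
symplectic form `ω`. The matrix `Ψ` has as columns a symplectic basis adapted to a decomposition of
the space into two `W`-invariant Lagrangian subspaces (`exists_lagrangian_pair`,
`exists_dual_bases`); self-adjointness then forces the second diagonal block to be the transpose of
the first.

The decomposition comes from cyclic subspaces. Every cyclic subspace `ℝ[W] x` is isotropic, because
`ω (p(W) x) (q(W) x) = ω x ((p q)(W) x)` is both symmetric and antisymmetric. Let the annihilator
of `x` be the minimal polynomial `m` of `W` (`exists_vector_minpoly`), and let `y` represent, via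
`ω`, a functional extending `p(W) x ↦ coefficient of X ^ (deg m - 1) in p mod m`. Then `ω` pairs
`ℝ[W] x` and `ℝ[W] y` nondegenerately (`exists_cyclic_pair`), since that coefficient makes
`ℝ[X] / (m)` a Frobenius algebra (`exists_modByMonic_coeff_ne_zero`). The sum of the two cyclic
subspaces therefore splits off orthogonally, and one concludes by induction on the dimension.
-/

open Matrix

open Polynomial in
/-- Some vector has the minimal polynomial of `T` as its annihilator. Otherwise every vector would
be killed by `(minpoly ℝ T / q)(T)` for one of the finitely many prime factors `q`, and a real
vector space is not a finite union of proper subspaces. -/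
lemma exists_vector_minpoly {V : Type*} [AddCommGroup V] [Module ℝ V] [FiniteDimensional ℝ V]
    (T : Module.End ℝ V) :
    ∃ x : V, ∀ p : ℝ[X], aeval T p x = 0 → minpoly ℝ T ∣ p := by
  classical
  have hm0 : minpoly ℝ T ≠ 0 := minpoly.ne_zero (Algebra.IsIntegral.isIntegral T)
  by_contra! hcon
  obtain ⟨⟨q, hq⟩, htop⟩ := Subspace.exists_eq_top_of_iUnion_eq_univ
    (ι := {q // q ∈ (UniqueFactorizationMonoid.normalizedFactors (minpoly ℝ T)).toFinset})
    (p := fun q => LinearMap.ker (aeval T (minpoly ℝ T / q.1))) (by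
      rw [Set.eq_univ_iff_forall]
      intro x
      obtain ⟨p, hpx, hp⟩ := hcon x
      -- The gcd `g` of `p` and the minimal polynomial still kills `x`, and is a proper divisor.
      have hg : aeval T (EuclideanDomain.gcd p (minpoly ℝ T)) x = 0 := by
        rw [EuclideanDomain.gcd_eq_gcd_ab, mul_comm p]
        simp [hpx]
      obtain ⟨h, hh⟩ := EuclideanDomain.gcd_dvd_right p (minpoly ℝ T)
      have hgp := EuclideanDomain.gcd_dvd_left p (minpoly ℝ T)
      generalize EuclideanDomain.gcd p (minpoly ℝ T) = g at hg hh hgp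
      have hh0 : h ≠ 0 := by rintro rfl; simp at hh; exact hm0 hh
      have hhu : ¬ IsUnit h := by
        rintro hu
        apply hp
        rw [hh]
        exact (hu.mul_right_dvd).2 hgp
      obtain ⟨q, hq⟩ := UniqueFactorizationMonoid.exists_mem_normalizedFactors hh0 hhu
      have hq0 : q ≠ 0 := (UniqueFactorizationMonoid.prime_of_normalized_factor q hq).ne_zero
      obtain ⟨r, rfl⟩ := UniqueFactorizationMonoid.dvd_of_mem_normalizedFactors hq
      refine Set.mem_iUnion.2 ⟨⟨q, ?_⟩, ?_⟩
      · rw [Multiset.mem_toFinset]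
        exact Multiset.mem_of_le
          ((UniqueFactorizationMonoid.dvd_iff_normalizedFactors_le_normalizedFactors hh0 hm0).1
            (Dvd.intro_left g hh.symm)) hq
      · have : minpoly ℝ T / q = r * g := by
          rw [hh, show g * (q * r) = q * (r * g) by ring]
          exact mul_div_cancel_left₀ _ hq0
        simp [this, hg])
  simp only [Multiset.mem_toFinset] at hq
  have hprime := UniqueFactorizationMonoid.prime_of_normalized_factor q hq
  obtain ⟨r, hr⟩ := UniqueFactorizationMonoid.dvd_of_mem_normalizedFactors hq
  have hd : minpoly ℝ T / q = r := by
    rw [hr]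
    exact mul_div_cancel_left₀ _ hprime.ne_zero
  rw [hd, LinearMap.ker_eq_top] at htop
  obtain ⟨s, hs⟩ := minpoly.dvd ℝ T htop
  have hr0 : r ≠ 0 := by rintro rfl; simp at hr; exact hm0 hr
  apply hprime.not_isUnit
  refine IsUnit.of_mul_eq_one s (mul_left_cancel₀ hr0 ?_)
  conv_rhs => rw [mul_one, hs, hr]
  ring

open Polynomial in
lemma aeval_selfAdjoint {V : Type*} [AddCommGroup V] [Module ℝ V]
    (ω : LinearMap.BilinForm ℝ V) (T : Module.End ℝ V) (hT : ∀ x y, ω (T x) y = ω x (T y))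
    (p : ℝ[X]) : ∀ x y : V, ω (aeval T p x) y = ω x (aeval T p y) := by
  induction p using Polynomial.induction_on' with
  | add p q hp hq => intro x y; simp [hp, hq]
  | monomial k a =>
    have : ∀ x y, ω ((T ^ k) x) y = ω x ((T ^ k) y) := by
      induction k with
      | zero => simp
      | succ k ih =>
        intro x y
        rw [pow_succ, Module.End.mul_apply, ih, hT, ← Module.End.mul_apply, ← pow_succ',
          pow_succ]
    intro x y
    simp [aeval_monomial, this]

open Polynomial in
/-- The form `(p, q) ↦ top coefficient of p * q mod m` on `ℝ[X] / (m)` is nondegenerate. -/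
lemma exists_modByMonic_coeff_ne_zero {m : ℝ[X]} (hm : m.Monic) (p : ℝ[X]) (hp : ¬ m ∣ p) :
    ∃ k, ((p * X ^ k) %ₘ m).coeff (m.natDegree - 1) ≠ 0 := by
  have hr0 : p %ₘ m ≠ 0 := fun h => hp ((modByMonic_eq_zero_iff_dvd hm).1 h)
  have hm1 : m ≠ 1 := by rintro rfl; simp at hp
  have hlt : (p %ₘ m).natDegree < m.natDegree := natDegree_modByMonic_lt p hm hm1
  refine ⟨m.natDegree - 1 - (p %ₘ m).natDegree, ?_⟩
  have h1 : (p * X ^ (m.natDegree - 1 - (p %ₘ m).natDegree)) %ₘ m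
      = (p %ₘ m) * X ^ (m.natDegree - 1 - (p %ₘ m).natDegree) := by
    have h2 : ((p %ₘ m) * X ^ (m.natDegree - 1 - (p %ₘ m).natDegree)).natDegree
        < m.natDegree := by
      rw [natDegree_mul_X_pow _ hr0]; omega
    rw [← (modByMonic_eq_self_iff hm).2 (degree_lt_degree h2)]
    refine modByMonic_eq_of_dvd_sub hm ?_
    rw [← sub_mul]
    refine Dvd.dvd.mul_right ?_ _
    exact ⟨p /ₘ m, by rw [sub_eq_iff_eq_add', modByMonic_add_div]⟩
  rw [h1, coeff_mul_X_pow', if_pos (Nat.sub_le _ _),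
    show m.natDegree - 1 - (m.natDegree - 1 - (p %ₘ m).natDegree) = (p %ₘ m).natDegree by omega]
  simpa using hr0

open Polynomial in
/-- A nonzero symplectic space with a self-adjoint endomorphism contains a pair of isotropic
cyclic subspaces `C`, `D` on which the form restricts to a nondegenerate pairing. -/
lemma exists_cyclic_pair {V : Type*} [AddCommGroup V] [Module ℝ V] [FiniteDimensional ℝ V]
    [Nontrivial V] (ω : LinearMap.BilinForm ℝ V) (hω : ω.IsAlt) (hnd : ω.Nondegenerate)
    (T : Module.End ℝ V) (hT : ∀ x y, ω (T x) y = ω x (T y)) :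
    ∃ C D : Submodule ℝ V, C ≠ ⊥ ∧ (∀ c ∈ C, T c ∈ C) ∧ (∀ d ∈ D, T d ∈ D) ∧
      (∀ c ∈ C, ∀ c' ∈ C, ω c c' = 0) ∧ (∀ d ∈ D, ∀ d' ∈ D, ω d d' = 0) ∧
      (∀ c ∈ C, (∀ d ∈ D, ω d c = 0) → c = 0) ∧ (∀ d ∈ D, (∀ c ∈ C, ω d c = 0) → d = 0) := by
  obtain ⟨x, hx⟩ := exists_vector_minpoly T
  have hm : (minpoly ℝ T).Monic := minpoly.monic (Algebra.IsIntegral.isIntegral T)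
  let ev : V → ℝ[X] →ₗ[ℝ] V := fun v => (LinearMap.applyₗ v) ∘ₗ (aeval T).toLinearMap
  have hev : ∀ v p, ev v p = aeval T p v := fun v p => rfl
  let g : ℝ[X] →ₗ[ℝ] ℝ := lcoeff ℝ ((minpoly ℝ T).natDegree - 1) ∘ₗ modByMonicHom (minpoly ℝ T)
  have hgapp : ∀ p, g p = (p %ₘ minpoly ℝ T).coeff ((minpoly ℝ T).natDegree - 1) := fun p => rfl
  -- The top coefficient descends to the cyclic subspace of `x` and extends to a functional on `V`.
  obtain ⟨φ, hφ⟩ : ∃ φ : Module.Dual ℝ V, ∀ p, φ (aeval T p x) = g p := by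
    have : g ∈ LinearMap.range (ev x).dualMap := by
      rw [LinearMap.range_dualMap_eq_dualAnnihilator_ker, Submodule.mem_dualAnnihilator]
      intro p hp
      rw [hgapp, (modByMonic_eq_zero_iff_dvd hm).2 (hx p (by simpa [hev] using hp))]
      simp
    obtain ⟨φ, hφ⟩ := this
    exact ⟨φ, fun p => by rw [← hφ]; rfl⟩
  let y := (LinearMap.BilinForm.toDual ω hnd).symm φ
  have hy : ∀ z, ω y z = φ z := fun z =>
    LinearMap.BilinForm.apply_toDual_symm_apply (hB := hnd) φ z
  have hpair : ∀ p q, ω (aeval T q y) (aeval T p x) = g (p * q) := by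
    intro p q
    rw [aeval_selfAdjoint ω T hT, hy, ← hφ, mul_comm, map_mul, Module.End.mul_apply]
  have hinv : ∀ v, ∀ c ∈ LinearMap.range (ev v), T c ∈ LinearMap.range (ev v) := by
    rintro v _ ⟨p, rfl⟩
    exact ⟨X * p, by simp [hev]⟩
  have hiso : ∀ v, ∀ c ∈ LinearMap.range (ev v), ∀ c' ∈ LinearMap.range (ev v), ω c c' = 0 := by
    rintro v _ ⟨p, rfl⟩ _ ⟨q, rfl⟩
    have h1 : ω (aeval T p v) (aeval T q v) = ω v (aeval T (p * q) v) := by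
      rw [aeval_selfAdjoint ω T hT, map_mul, Module.End.mul_apply]
    have h2 := hω.neg_eq v (aeval T (p * q) v)
    rw [aeval_selfAdjoint ω T hT] at h2
    rw [hev, hev, h1]
    linarith
  refine ⟨LinearMap.range (ev x), LinearMap.range (ev y), ?_, hinv x, hinv y, hiso x, hiso y,
    ?_, ?_⟩
  · intro hbot
    have hx0 : aeval T (1 : ℝ[X]) x = 0 := by
      have : ev x 1 ∈ LinearMap.range (ev x) := ⟨1, rfl⟩
      rw [hbot] at this
      simpa [hev] using this
    exact minpoly.not_isUnit ℝ T (isUnit_of_dvd_one (hx 1 hx0))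
  · rintro _ ⟨p, rfl⟩ h
    by_cases hp : minpoly ℝ T ∣ p
    · obtain ⟨r, rfl⟩ := hp
      simp [hev]
    · obtain ⟨k, hk⟩ := exists_modByMonic_coeff_ne_zero hm p hp
      exact absurd ((hpair p (X ^ k)).symm.trans (h _ ⟨X ^ k, rfl⟩)) hk
  · rintro _ ⟨q, rfl⟩ h
    by_cases hq : minpoly ℝ T ∣ q
    · obtain ⟨r, rfl⟩ := hq
      simp [hev]
    · obtain ⟨k, hk⟩ := exists_modByMonic_coeff_ne_zero hm q hq
      rw [mul_comm] at hk
      exact absurd ((hpair (X ^ k) q).symm.trans (h _ ⟨X ^ k, rfl⟩)) hk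

/-- A symplectic space with a self-adjoint endomorphism is the sum of two invariant isotropic
subspaces: split off the span of a cyclic pair and recurse on its orthogonal complement. -/
lemma exists_lagrangian_pair (k : ℕ) : ∀ {V : Type} [AddCommGroup V] [Module ℝ V]
    [FiniteDimensional ℝ V] (ω : LinearMap.BilinForm ℝ V) (_ : ω.IsAlt) (_ : ω.Nondegenerate)
    (T : Module.End ℝ V) (_ : ∀ x y, ω (T x) y = ω x (T y)) (_ : Module.finrank ℝ V = k),
    ∃ L M : Submodule ℝ V, L ⊔ M = ⊤ ∧ (∀ c ∈ L, T c ∈ L) ∧ (∀ d ∈ M, T d ∈ M) ∧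
      (∀ c ∈ L, ∀ c' ∈ L, ω c c' = 0) ∧ (∀ d ∈ M, ∀ d' ∈ M, ω d d' = 0) := by
  induction k using Nat.strong_induction_on with
  | _ k ih =>
  intro V _ _ _ ω hω hnd T hT hk
  rcases subsingleton_or_nontrivial V with hV | hV
  · exact ⟨⊥, ⊥, Subsingleton.elim _ _, by simp, by simp, by simp, by simp⟩
  obtain ⟨C, D, hC0, hC, hD, hCi, hDi, hCD, hDC⟩ := exists_cyclic_pair ω hω hnd T hT
  have hdisj : Disjoint (C ⊔ D) (ω.orthogonal (C ⊔ D)) := by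
    rw [Submodule.disjoint_def]
    intro z hz hz'
    obtain ⟨c, hc, d, hd, rfl⟩ := Submodule.mem_sup.1 hz
    rw [LinearMap.BilinForm.mem_orthogonal_iff] at hz'
    have hc0 : c = 0 := hCD c hc fun d' hd' => by
      have := hz' d' (Submodule.mem_sup_right hd')
      simpa [hDi d' hd' d hd] using this
    have hd0 : d = 0 := hDC d hd fun c' hc' => by
      have := hz' c' (Submodule.mem_sup_left hc')
      rw [hω.eq_iff] at this
      simpa [hCi c hc c' hc'] using this
    simp [hc0, hd0]
  have hcompl : IsCompl (C ⊔ D) (ω.orthogonal (C ⊔ D)) :=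
    (LinearMap.BilinForm.isCompl_orthogonal_iff_disjoint hω.isRefl).2 hdisj
  have hT' : ∀ z ∈ ω.orthogonal (C ⊔ D), T z ∈ ω.orthogonal (C ⊔ D) := by
    intro z hz
    rw [LinearMap.BilinForm.mem_orthogonal_iff] at hz ⊢
    intro u hu
    rw [← hT]
    refine hz _ ?_
    obtain ⟨c, hc, d, hd, rfl⟩ := Submodule.mem_sup.1 hu
    rw [map_add]
    exact Submodule.add_mem_sup (hC c hc) (hD d hd)
  have hnd' : (ω.restrict (ω.orthogonal (C ⊔ D))).Nondegenerate := by
    refine LinearMap.BilinForm.nondegenerate_restrict_of_disjoint_orthogonal ω hω.isRefl ?_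
    rw [LinearMap.BilinForm.orthogonal_orthogonal hnd hω.isRefl]
    exact hdisj.symm
  have hperp : ∀ u ∈ C ⊔ D, ∀ z ∈ ω.orthogonal (C ⊔ D), ω u z = 0 := fun u hu z hz =>
    (LinearMap.BilinForm.mem_orthogonal_iff.1 hz) u hu
  generalize ω.orthogonal (C ⊔ D) = E at hdisj hcompl hT' hnd' hperp
  have hlt : Module.finrank ℝ E < k := by
    rw [← hk]
    refine Submodule.finrank_lt ?_
    rintro rfl
    rw [disjoint_top] at hdisj
    exact hC0 (eq_bot_iff.2 (hdisj ▸ le_sup_left))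
  obtain ⟨A, B, hAB, hA, hB, hAi, hBi⟩ := ih _ hlt (ω.restrict E) (fun z => hω z) hnd'
    (T.restrict hT') (fun a b => hT a b) rfl
  have hinv : ∀ (C : Submodule ℝ V) (A : Submodule ℝ E), (∀ c ∈ C, T c ∈ C) →
      (∀ c ∈ A, T.restrict hT' c ∈ A) →
      ∀ c ∈ C ⊔ A.map E.subtype, T c ∈ C ⊔ A.map E.subtype := by
    intro C A hC hA u hu
    obtain ⟨c, hc, _, ⟨a, ha, rfl⟩, rfl⟩ := Submodule.mem_sup.1 hu
    rw [map_add]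
    exact Submodule.add_mem_sup (hC c hc) ⟨_, hA a ha, rfl⟩
  have hiso : ∀ (C' : Submodule ℝ V) (A : Submodule ℝ E), C' ≤ C ⊔ D →
      (∀ c ∈ C', ∀ c' ∈ C', ω c c' = 0) → (∀ c ∈ A, ∀ c' ∈ A, ω.restrict E c c' = 0) →
      ∀ c ∈ C' ⊔ A.map E.subtype, ∀ c' ∈ C' ⊔ A.map E.subtype, ω c c' = 0 := by
    intro C' A hle hC hA u hu u' hu'
    obtain ⟨c, hc, _, ⟨a, ha, rfl⟩, rfl⟩ := Submodule.mem_sup.1 hu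
    obtain ⟨c', hc', _, ⟨a', ha', rfl⟩, rfl⟩ := Submodule.mem_sup.1 hu'
    have h1 : ω c a' = 0 := hperp c (hle hc) a' a'.2
    have h2 : ω a c' = 0 := hω.eq_iff.1 (hperp c' (hle hc') a a.2)
    have h3 : ω a a' = 0 := hA a ha a' ha'
    simp [hC c hc c' hc', h1, h2, h3]
  refine ⟨C ⊔ A.map E.subtype, D ⊔ B.map E.subtype, ?_, hinv C A hC hA, hinv D B hD hB,
    hiso C A le_sup_left hCi hAi, hiso D B le_sup_right hDi hBi⟩
  rw [sup_sup_sup_comm, ← Submodule.map_sup, hAB, Submodule.map_top, Submodule.range_subtype]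
  exact hcompl.sup_eq_top

/-- Two isotropic subspaces spanning a symplectic space of dimension `2 * n` have bases that are
dual to each other under the form. -/
lemma exists_dual_bases {V : Type*} [AddCommGroup V] [Module ℝ V] [FiniteDimensional ℝ V]
    (ω : LinearMap.BilinForm ℝ V) (hω : ω.IsAlt) (hnd : ω.Nondegenerate) (n : ℕ)
    (hn : Module.finrank ℝ V = 2 * n) (L M : Submodule ℝ V) (hLM : L ⊔ M = ⊤)
    (hL : ∀ c ∈ L, ∀ c' ∈ L, ω c c' = 0) (hM : ∀ d ∈ M, ∀ d' ∈ M, ω d d' = 0) :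
    ∃ (e : Module.Basis (Fin n) ℝ L) (f : Module.Basis (Fin n) ℝ M),
      ∀ i j, ω (e i) (f j) = if i = j then 1 else 0 := by
  have key : ∀ z : V, (∀ l ∈ L, ω l z = 0) → (∀ m ∈ M, ω m z = 0) → z = 0 := by
    intro z h1 h2
    refine hnd.2 z fun u => ?_
    obtain ⟨l, hl, m, hm, rfl⟩ := Submodule.mem_sup.1 (hLM ▸ Submodule.mem_top : u ∈ L ⊔ M)
    simp [h1 l hl, h2 m hm]
  let P : M →ₗ[ℝ] Module.Dual ℝ L := ω.flip.domRestrict₁₂ M L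
  let Q : L →ₗ[ℝ] Module.Dual ℝ M := ω.domRestrict₁₂ L M
  have hP : ∀ m l, P m l = ω l m := fun m l => rfl
  have hQ : ∀ l m, Q l m = ω l m := fun m l => rfl
  have hPi : Function.Injective P := by
    rw [injective_iff_map_eq_zero]
    intro m hm
    refine Subtype.ext (key m (fun l hl => ?_) fun m' hm' => hM m' hm' m m.2)
    rw [← hP m ⟨l, hl⟩, hm, LinearMap.zero_apply]
  have hQi : Function.Injective Q := by
    rw [injective_iff_map_eq_zero]
    intro l hl
    refine Subtype.ext (key l (fun l' hl' => hL l' hl' l l.2) fun m hm => ?_)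
    rw [hω.eq_iff, ← hQ l ⟨m, hm⟩, hl, LinearMap.zero_apply]
  have h1 := LinearMap.finrank_le_finrank_of_injective hPi
  have h2 := LinearMap.finrank_le_finrank_of_injective hQi
  rw [Subspace.dual_finrank_eq] at h1 h2
  have hinf : L ⊓ M = ⊥ := by
    rw [eq_bot_iff]
    intro z hz
    exact key z (fun l hl => hL l hl z hz.1) (fun m hm => hM m hm z hz.2)
  have h3 := Submodule.finrank_sup_add_finrank_inf_eq L M
  rw [hLM, hinf, finrank_top, finrank_bot, hn] at h3
  have hLn : Module.finrank ℝ L = n := by omega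
  have hdim : Module.finrank ℝ M = Module.finrank ℝ (Module.Dual ℝ L) := by
    rw [Subspace.dual_finrank_eq]; omega
  let e := Module.finBasisOfFinrankEq ℝ L hLn
  let P' : M ≃ₗ[ℝ] Module.Dual ℝ L := LinearEquiv.ofInjectiveOfFinrankEq P hPi hdim
  refine ⟨e, e.dualBasis.map P'.symm, fun i j => ?_⟩
  rw [← hP, Module.Basis.map_apply]
  have : P (P'.symm (e.dualBasis j)) = e.dualBasis j := P'.apply_symm_apply _
  rw [this, Module.Basis.dualBasis_apply_self]

theorem skewHamiltonian_symplectic_block_diagonalization (n : ℕ) (hn : 1 ≤ n)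
    (J W : Matrix (Fin n ⊕ Fin n) (Fin n ⊕ Fin n) ℝ)
    (hJ : J = Matrix.fromBlocks 0 1 (-1) 0)
    (hW : (W * J)ᵀ = -(W * J)) :
    ∃ (Ψ : Matrix (Fin n ⊕ Fin n) (Fin n ⊕ Fin n) ℝ) (N : Matrix (Fin n) (Fin n) ℝ),
      Ψ * J * Ψᵀ = J ∧ IsUnit Ψ.det ∧
      Ψ⁻¹ * W * Ψ = Matrix.fromBlocks N 0 0 Nᵀ := by
  have hJJ : J * J = -1 := by
    rw [hJ, Matrix.fromBlocks_multiply, ← Matrix.fromBlocks_one, Matrix.fromBlocks_neg]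
    simp
  have hJt : Jᵀ = -J := by
    rw [hJ, Matrix.fromBlocks_transpose, Matrix.fromBlocks_neg]
    simp
  have hJW : Wᵀ * J = J * W := by
    rw [Matrix.transpose_mul, hJt, Matrix.neg_mul, neg_inj] at hW
    calc Wᵀ * J = -(J * J) * Wᵀ * J := by rw [hJJ]; simp
      _ = -(J * (J * Wᵀ) * J) := by noncomm_ring
      _ = -(J * W * (J * J)) := by rw [hW]; noncomm_ring
      _ = J * W := by rw [hJJ]; simp
  let ω : LinearMap.BilinForm ℝ ((Fin n ⊕ Fin n) → ℝ) := Matrix.toBilin' J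
  have hωapp : ∀ v w, ω v w = v ⬝ᵥ J *ᵥ w := fun v w => Matrix.toBilin'_apply' J v w
  have hω : ω.IsAlt := by
    intro v
    have h : v ⬝ᵥ J *ᵥ v = -(v ⬝ᵥ J *ᵥ v) := by
      conv_lhs => rw [dotProduct_comm, ← Matrix.vecMul_transpose, ← Matrix.dotProduct_mulVec, hJt,
        Matrix.neg_mulVec, dotProduct_neg]
    rw [hωapp]
    linarith
  have hJdet : J.det ≠ 0 := by
    intro h
    have := congrArg Matrix.det hJJ
    rw [Matrix.det_mul, h, Matrix.det_neg] at this
    simp at this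
  have hnd : ω.Nondegenerate := LinearMap.BilinForm.nondegenerate_toBilin'_of_det_ne_zero' J hJdet
  have hT : ∀ x y, ω (Matrix.toLin' W x) y = ω x (Matrix.toLin' W y) := by
    intro x y
    rw [hωapp, hωapp, Matrix.toLin'_apply, Matrix.toLin'_apply, Matrix.mulVec_mulVec, ← hJW,
      ← Matrix.mulVec_mulVec, Matrix.dotProduct_mulVec x Wᵀ, Matrix.vecMul_transpose]
  obtain ⟨L, M, hLM, hLinv, hMinv, hL, hM⟩ := exists_lagrangian_pair _ ω hω hnd _ hT rfl
  obtain ⟨e, f, hef⟩ := exists_dual_bases ω hω hnd n (by simp [two_mul]) L M hLM hL hM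
  let Ψ : Matrix (Fin n ⊕ Fin n) (Fin n ⊕ Fin n) ℝ :=
    Matrix.of fun a s => Sum.elim (fun i => (e i : (Fin n ⊕ Fin n) → ℝ) a)
      (fun i => (f i : (Fin n ⊕ Fin n) → ℝ) a) s
  let N : Matrix (Fin n) (Fin n) ℝ :=
    Matrix.of fun i j => e.repr ⟨Matrix.toLin' W (e j), hLinv _ (e j).2⟩ i
  let N' : Matrix (Fin n) (Fin n) ℝ :=
    Matrix.of fun i j => f.repr ⟨Matrix.toLin' W (f j), hMinv _ (f j).2⟩ i
  have hentry : ∀ s t, (Ψᵀ * J * Ψ) s t = ω (fun a => Ψ a s) (fun a => Ψ a t) := by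
    intro s t
    rw [hωapp, Matrix.mul_assoc]
    rfl
  have hΨ : Ψᵀ * J * Ψ = J := by
    ext s t
    rw [hentry]
    rcases s with i | i <;> rcases t with j | j
    · rw [hJ, Matrix.fromBlocks_apply₁₁]
      exact hL _ (e i).2 _ (e j).2
    · rw [hJ, Matrix.fromBlocks_apply₁₂, Matrix.one_apply]
      exact hef i j
    · rw [hJ, Matrix.fromBlocks_apply₂₁, Matrix.neg_apply, Matrix.one_apply]
      have := hω.neg_eq (e j : (Fin n ⊕ Fin n) → ℝ) (f i)
      rw [hef, eq_comm] at this
      simp only [eq_comm (a := j)] at this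
      exact this
    · rw [hJ, Matrix.fromBlocks_apply₂₂]
      exact hM _ (f i).2 _ (f j).2
  have hWΨ : W * Ψ = Ψ * Matrix.fromBlocks N 0 0 N' := by
    ext a s
    rw [Matrix.mul_apply, Matrix.mul_apply, Fintype.sum_sum_type (fun t => Ψ a t * _)]
    rcases s with j | j
    · have h := congrArg (fun z : L => (z : (Fin n ⊕ Fin n) → ℝ) a)
        (e.sum_repr ⟨Matrix.toLin' W (e j), hLinv _ (e j).2⟩)
      simp only [Submodule.coe_sum, Finset.sum_apply, Submodule.coe_smul, Pi.smul_apply,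
        smul_eq_mul] at h
      simp only [Matrix.fromBlocks_apply₁₁, Matrix.fromBlocks_apply₂₁, Matrix.zero_apply,
        mul_zero, Finset.sum_const_zero, add_zero]
      refine Eq.trans h.symm ?_
      exact Finset.sum_congr rfl fun i _ => mul_comm _ _
    · have h := congrArg (fun z : M => (z : (Fin n ⊕ Fin n) → ℝ) a)
        (f.sum_repr ⟨Matrix.toLin' W (f j), hMinv _ (f j).2⟩)
      simp only [Submodule.coe_sum, Finset.sum_apply, Submodule.coe_smul, Pi.smul_apply,
        smul_eq_mul] at h
      simp only [Matrix.fromBlocks_apply₁₂, Matrix.fromBlocks_apply₂₂, Matrix.zero_apply,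
        mul_zero, Finset.sum_const_zero, zero_add]
      refine Eq.trans h.symm ?_
      exact Finset.sum_congr rfl fun i _ => mul_comm _ _
  have hinv : -(J * Ψᵀ * J) * Ψ = 1 := by
    calc -(J * Ψᵀ * J) * Ψ = -(J * (Ψᵀ * J * Ψ)) := by noncomm_ring
      _ = 1 := by rw [hΨ, hJJ, neg_neg]
  have hdet : IsUnit Ψ.det :=
    (Matrix.isUnit_iff_isUnit_det Ψ).1 (IsUnit.of_mul_eq_one_right _ hinv)
  -- Self-adjointness of `W` in the new basis, read off in the upper right block.
  have hN : N' = Nᵀ := by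
    have h : (Matrix.fromBlocks N 0 0 N')ᵀ * J = J * Matrix.fromBlocks N 0 0 N' := by
      calc (Matrix.fromBlocks N 0 0 N')ᵀ * J
          = (Ψ * Matrix.fromBlocks N 0 0 N')ᵀ * J * Ψ := by
            rw [Matrix.transpose_mul, Matrix.mul_assoc, Matrix.mul_assoc, ← Matrix.mul_assoc Ψᵀ,
              hΨ]
        _ = Ψᵀ * (Wᵀ * J) * Ψ := by rw [← hWΨ, Matrix.transpose_mul]; noncomm_ring
        _ = Ψᵀ * J * (W * Ψ) := by rw [hJW]; noncomm_ring
        _ = (Ψᵀ * J * Ψ) * Matrix.fromBlocks N 0 0 N' := by rw [hWΨ]; noncomm_ring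
        _ = _ := by rw [hΨ]
    rw [hJ, Matrix.fromBlocks_transpose, Matrix.fromBlocks_multiply, Matrix.fromBlocks_multiply,
      Matrix.fromBlocks_inj] at h
    simpa using h.2.1.symm
  refine ⟨Ψ, N, ?_, hdet, ?_⟩
  · have h := mul_eq_one_comm.1 hinv
    calc Ψ * J * Ψᵀ = -(Ψ * J * Ψᵀ * (J * J)) := by rw [hJJ]; simp
      _ = (Ψ * -(J * Ψᵀ * J)) * J := by noncomm_ring
      _ = J := by rw [h, Matrix.one_mul]
  · rw [Matrix.mul_assoc, hWΨ, hN, Matrix.nonsing_inv_mul_cancel_left _ _ hdet]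
end

section
/- Let n ≥ 1 and let W ∈ ℝ^{2n×2n} be skew-Hamiltonian. Then there exists a monic polynomial q ∈ ℝ[x] of degree n such that the characteristic polynomial of W equals q². In particular, every complex eigenvalue of W has even algebraic multiplicity. -/
/-!
The matrix `(x I - W) J` is skew-symmetric over `ℝ[x]` (both `J` and `W J` are), and `det J = 1`,
so the characteristic polynomial of `W` is the determinant of a skew-symmetric matrix. Over a field
of characteristic different from `2` such a determinant is a square
(`skewHamiltonian_isSquare_det`): split off an invertible `2 × 2` block and pass to its Schur
complement, which is again skew-symmetric. Applied over the fraction field `ℝ(x)`, this gives a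
square root of the characteristic polynomial in `ℝ(x)`; it lies in `ℝ[x]` because `ℝ[x]` is
integrally closed, and up to sign it is monic.
-/

open Matrix Polynomial

/-- Induction on the size: a nonzero entry `A i j` gives the invertible principal block on `{i, j}`,
of determinant `(A i j) ^ 2`, and its Schur complement is skew-symmetric of size two less. -/
theorem skewHamiltonian_isSquare_det {K : Type*} [Field K] (h2 : (2 : K) ≠ 0) (n : ℕ) :
    ∀ (m : Type) [Fintype m] [DecidableEq m] (A : Matrix m m K),
      Fintype.card m = n → Aᵀ = -A → IsSquare A.det := by
  induction n using Nat.strong_induction_on with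
  | _ n ih =>
  intro m _ _ A hm hA
  have hsk : ∀ i j, A j i = - A i j := fun i j => congrFun (congrFun hA i) j
  have hdiag : ∀ i, A i i = 0 := by
    intro i
    have h : (2 : K) * A i i = 0 := by linear_combination hsk i i
    exact (mul_eq_zero.mp h).resolve_left h2
  by_cases h0 : A = 0
  · subst h0
    cases isEmpty_or_nonempty m
    · rw [Matrix.det_isEmpty]; exact IsSquare.one
    · rw [Matrix.det_zero]; exact IsSquare.zero
  obtain ⟨i, j, hij⟩ : ∃ i j, A i j ≠ 0 := by
    by_contra! h
    exact h0 (Matrix.ext h)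
  have hne : i ≠ j := by
    rintro rfl
    exact hij (hdiag i)
  let f : Fin 2 ⊕ {k : m // k ≠ i ∧ k ≠ j} → m := Sum.elim ![i, j] Subtype.val
  have hf : Function.Bijective f := by
    clear hsk hdiag hA ih hm
    constructor
    · rintro (a | ⟨a, ha⟩) (b | ⟨b, hb⟩) h
      · fin_cases a <;> fin_cases b <;> simp_all [f]
      · fin_cases a
        · exact absurd h.symm hb.1
        · exact absurd h.symm hb.2
      · fin_cases b
        · exact absurd h ha.1
        · exact absurd h ha.2
      · simp_all [f]
    · intro k
      by_cases h1 : k = i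
      · exact ⟨Sum.inl 0, by simp [f, h1]⟩
      by_cases h3 : k = j
      · exact ⟨Sum.inl 1, by simp [f, h3]⟩
      exact ⟨Sum.inr ⟨k, h1, h3⟩, rfl⟩
  let e := Equiv.ofBijective f hf
  have hcard := Fintype.card_congr e
  rw [Fintype.card_sum, Fintype.card_fin] at hcard
  set B := A.submatrix e e with hB
  have hBsk : ∀ i j, B j i = - B i j := fun i j => hsk _ _
  rw [← Matrix.det_submatrix_equiv_self e A, ← hB, ← Matrix.fromBlocks_toBlocks B]
  have hdet : B.toBlocks₁₁.det = A i j * A i j := by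
    have h00 : B.toBlocks₁₁ 0 0 = 0 := hdiag i
    have h01 : B.toBlocks₁₁ 0 1 = A i j := rfl
    have h10 : B.toBlocks₁₁ 1 0 = - A i j := hsk i j
    rw [Matrix.det_fin_two, h00, h01, h10]
    ring
  have hu : IsUnit B.toBlocks₁₁.det := by
    rw [hdet]
    exact (mul_ne_zero hij hij).isUnit
  let := Matrix.invertibleOfIsUnitDet _ hu
  have t11 : B.toBlocks₁₁ᵀ = -B.toBlocks₁₁ := Matrix.ext fun a b => hBsk (Sum.inl a) (Sum.inl b)
  have t12 : B.toBlocks₁₂ᵀ = -B.toBlocks₂₁ := Matrix.ext fun a b => hBsk (Sum.inr a) (Sum.inl b)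
  have t21 : B.toBlocks₂₁ᵀ = -B.toBlocks₁₂ := Matrix.ext fun a b => hBsk (Sum.inl a) (Sum.inr b)
  have t22 : B.toBlocks₂₂ᵀ = -B.toBlocks₂₂ := Matrix.ext fun a b => hBsk (Sum.inr a) (Sum.inr b)
  have tinv : (B.toBlocks₁₁⁻¹)ᵀ = -B.toBlocks₁₁⁻¹ := by
    rw [Matrix.transpose_nonsing_inv, t11]
    apply Matrix.inv_eq_right_inv
    rw [neg_mul_neg, Matrix.mul_nonsing_inv _ hu]
  rw [Matrix.det_fromBlocks₁₁, hdet]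
  refine IsSquare.mul ⟨_, rfl⟩ (ih _ (by omega) _ _ rfl ?_)
  rw [Matrix.invOf_eq_nonsing_inv, Matrix.transpose_sub, Matrix.transpose_mul,
    Matrix.transpose_mul, t12, t21, t22, tinv]
  simp only [Matrix.mul_assoc, neg_neg, Matrix.neg_mul, Matrix.mul_neg]
  abel

theorem skewHamiltonian_charpoly_is_square (n : ℕ) (hn : 1 ≤ n)
    (J W : Matrix (Fin n ⊕ Fin n) (Fin n ⊕ Fin n) ℝ)
    (hJ : J = Matrix.fromBlocks 0 1 (-1) 0)
    (hW : (W * J)ᵀ = -(W * J)) :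
    (∃ q : Polynomial ℝ, q.Monic ∧ q.natDegree = n ∧ W.charpoly = q ^ 2) ∧
    (∀ μ : ℂ, Even ((W.charpoly.map (algebraMap ℝ ℂ)).rootMultiplicity μ)) := by
  have hJt : Jᵀ = -J := by
    rw [hJ, Matrix.fromBlocks_transpose, Matrix.fromBlocks_neg]
    simp
  have hJdet : J.det = 1 := by
    -- `J * J = -1` gives `det J = ± 1`, and `det J` is a square since `J` is skew-symmetric.
    have hJJ : J * J = -1 := by
      rw [hJ, Matrix.fromBlocks_multiply, ← Matrix.fromBlocks_one, Matrix.fromBlocks_neg]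
      simp
    have h1 : J.det * J.det = 1 := by
      rw [← Matrix.det_mul, hJJ, Matrix.det_neg]
      simp
    obtain ⟨r, hr⟩ := skewHamiltonian_isSquare_det (two_ne_zero : (2 : ℝ) ≠ 0) _ _ J rfl hJt
    rcases mul_self_eq_one_iff.mp h1 with h | h
    · exact h
    · nlinarith [mul_self_nonneg r]
  have hM : (W.charmatrix * J.map C)ᵀ = -(W.charmatrix * J.map C) := by
    have h1 : W.charmatrix * J.map C = (X : ℝ[X]) • J.map C - (W * J).map C := by
      rw [Matrix.charmatrix, sub_mul, Matrix.map_mul]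
      simp [Matrix.scalar_apply, ← Matrix.smul_eq_diagonal_mul]
    rw [h1, Matrix.transpose_sub, Matrix.transpose_smul, ← Matrix.transpose_map,
      ← Matrix.transpose_map, hW, hJt]
    ext a b : 1
    simp only [Matrix.sub_apply, Matrix.smul_apply, Matrix.map_apply, Matrix.neg_apply, map_neg,
      smul_eq_mul]
    ring
  have hdet : (W.charmatrix * J.map C).det = W.charpoly := by
    have : (J.map (C : ℝ →+* ℝ[X])).det = 1 := by
      have := (C : ℝ →+* ℝ[X]).map_det J
      rw [hJdet, map_one] at this
      exact this.symm
    rw [Matrix.det_mul, this, mul_one, Matrix.charpoly]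
  have hsq : IsSquare (algebraMap ℝ[X] (FractionRing ℝ[X]) W.charpoly) := by
    rw [← hdet, RingHom.map_det]
    refine skewHamiltonian_isSquare_det two_ne_zero _ _ _ rfl ?_
    rw [RingHom.mapMatrix_apply, ← Matrix.transpose_map, hM]
    ext a b : 1
    simp only [Matrix.map_apply, Matrix.neg_apply, map_neg]
  obtain ⟨r, hr⟩ := hsq
  obtain ⟨p, rfl⟩ : ∃ p, algebraMap ℝ[X] (FractionRing ℝ[X]) p = r :=
    IsIntegrallyClosed.exists_algebraMap_eq_of_isIntegral_pow two_pos
      (by rw [pow_two, ← hr]; exact isIntegral_algebraMap)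
  rw [← map_mul] at hr
  have hp : W.charpoly = p * p := IsFractionRing.injective _ _ hr
  have hq : ∃ q : ℝ[X], q.Monic ∧ W.charpoly = q ^ 2 := by
    have hlead : p.leadingCoeff * p.leadingCoeff = 1 := by
      rw [← Polynomial.leadingCoeff_mul, ← hp]
      exact W.charpoly_monic
    rcases mul_self_eq_one_iff.mp hlead with h | h
    · exact ⟨p, h, by rw [hp, pow_two]⟩
    · exact ⟨-p, by rw [Polynomial.Monic, Polynomial.leadingCoeff_neg, h, neg_neg],
        by rw [hp]; ring⟩
  obtain ⟨q, hqm, hq⟩ := hq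
  refine ⟨⟨q, hqm, ?_, hq⟩, fun μ => ?_⟩
  · have h := W.charpoly_natDegree_eq_dim
    rw [hq, hqm.natDegree_pow, Fintype.card_sum, Fintype.card_fin] at h
    omega
  · have hne : q.map (algebraMap ℝ ℂ) ≠ 0 := (hqm.map _).ne_zero
    rw [hq, Polynomial.map_pow, pow_two, Polynomial.rootMultiplicity_mul (mul_ne_zero hne hne)]
    exact ⟨_, rfl⟩
end

section
/- Let n ≥ 1 and let W ∈ ℝ^{2n×2n} be skew-Hamiltonian. Then there exists an orthogonal-symplectic matrix U ∈ ℝ^{2n×2n} such that UᵀWU = [[W₁, W₂],[0, W₁ᵀ]] in n×n block form, where W₂ᵀ = −W₂ and W₁ is upper Hessenberg, i.e. (W₁)ᵢⱼ = 0 whenever i > j + 1. -/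
/-!
A Krylov-type (Arnoldi) construction. Vectors `u 0, u 1, …` are built one at a time so that they are
orthonormal, span an isotropic subspace (`J u i ⟂ u j` for all `i`, `j`), and `W u j` lies in the
span of `u 0, …, u (j + 1)`. The next vector is the normalised residual of `W u (k - 1)` modulo the
span of the earlier ones, or, if that residual vanishes, any unit vector orthogonal to all `u i` and
`J u i`, which exists by counting dimensions as long as `k < n` (`exists_next_vector`).
Isotropy persists because the form `(x, y) ↦ ⟨J x, W y⟩` is alternating when `W` is
skew-Hamiltonian: `⟨J u i, W u (k - 1)⟩ = -⟨J u (k - 1), W u i⟩ = 0`, as `W u i` lies in the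
isotropic span of the vectors already built (`IsArnoldi.isotropic_image`).

Once `n` vectors are available, let `Q` be the matrix with columns `u j` and put `U = [Q, -J Q]`.
It is orthogonal and commutes with `J`, hence is symplectic. The lower left block of `Uᵀ W U` has
entries `⟨J u i, W u j⟩` up to sign, so it vanishes; the span condition makes `Qᵀ W Q` upper
Hessenberg; the shape of the two right-hand blocks follows from `W` being skew-Hamiltonian.
-/

open Matrix

section Arnoldi

variable {n : ℕ} {J W : Matrix (Fin n ⊕ Fin n) (Fin n ⊕ Fin n) ℝ}

/-- The first `k` vectors of `u` are orthonormal, span a `J`-isotropic subspace, and `W u j` lies in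
the span of `u 0, …, u (j + 1)` whenever `j + 1 < k`. The span condition is stated dually: every
vector orthogonal to `u 0, …, u (j + 1)` is orthogonal to `W u j`. -/
structure IsArnoldi (J W : Matrix (Fin n ⊕ Fin n) (Fin n ⊕ Fin n) ℝ) (k : ℕ)
    (u : ℕ → Fin n ⊕ Fin n → ℝ) : Prop where
  orthonormal : ∀ i < k, ∀ j < k, u i ⬝ᵥ u j = if i = j then 1 else 0
  isotropic : ∀ i < k, ∀ j < k, (J *ᵥ u i) ⬝ᵥ u j = 0
  span : ∀ j, j + 1 < k → ∀ x : Fin n ⊕ Fin n → ℝ, (∀ i ≤ j + 1, x ⬝ᵥ u i = 0) →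
    x ⬝ᵥ (W *ᵥ u j) = 0

/-- A skew-symmetric matrix defines an antisymmetric bilinear form. -/
lemma dotProduct_mulVec_antisymm {m : Type*} [Fintype m] {K : Matrix m m ℝ} (hK : Kᵀ = -K)
    (x y : m → ℝ) : x ⬝ᵥ (K *ᵥ y) = -(y ⬝ᵥ (K *ᵥ x)) := by
  rw [dotProduct_mulVec, ← mulVec_transpose, hK, neg_mulVec, neg_dotProduct, dotProduct_comm]

lemma mulVec_dotProduct_of_skew {m : Type*} [Fintype m] {K : Matrix m m ℝ} (hK : Kᵀ = -K)
    (x y : m → ℝ) : (K *ᵥ x) ⬝ᵥ y = -(x ⬝ᵥ (K *ᵥ y)) := by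
  rw [dotProduct_comm, dotProduct_mulVec_antisymm hK]

/-- Fewer than `n` vectors `u i`, together with their images `J u i`, do not span `ℝ²ⁿ`. -/
lemma exists_orthogonal_vector {k : ℕ} (hk : k < n) (u : ℕ → Fin n ⊕ Fin n → ℝ) :
    ∃ v : Fin n ⊕ Fin n → ℝ, v ≠ 0 ∧ ∀ i < k, u i ⬝ᵥ v = 0 ∧ (J *ᵥ u i) ⬝ᵥ v = 0 := by
  let A : Matrix (Fin k ⊕ Fin k) (Fin n ⊕ Fin n) ℝ :=
    Matrix.of (Sum.elim (fun i => u i) (fun i => J *ᵥ u i))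
  have hker : LinearMap.ker A.mulVecLin ≠ ⊥ := by
    apply LinearMap.ker_ne_bot_of_finrank_lt
    simp
    omega
  obtain ⟨v, hv, hv0⟩ := (Submodule.ne_bot_iff _).1 hker
  have hv' : A *ᵥ v = 0 := by simpa using hv
  exact ⟨v, hv0, fun i hi => ⟨congrFun hv' (Sum.inl ⟨i, hi⟩), congrFun hv' (Sum.inr ⟨i, hi⟩)⟩⟩

lemma exists_normalize {m : Type*} [Fintype m] {v : m → ℝ} (hv : v ≠ 0) :
    ∃ c : ℝ, c ≠ 0 ∧ (c • v) ⬝ᵥ (c • v) = 1 := by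
  have hpos : 0 < v ⬝ᵥ v := lt_of_le_of_ne
    (Finset.sum_nonneg fun i _ => mul_self_nonneg (v i))
    (fun h => hv (dotProduct_self_eq_zero.1 h.symm))
  refine ⟨(√(v ⬝ᵥ v))⁻¹, inv_ne_zero (Real.sqrt_pos.2 hpos).ne', ?_⟩
  rw [smul_dotProduct, dotProduct_smul, smul_eq_mul, smul_eq_mul, ← mul_assoc, ← mul_inv,
    Real.mul_self_sqrt hpos.le, inv_mul_cancel₀ hpos.ne']

/-- One Gram–Schmidt step: given `w` orthogonal to every `J u i`, a unit vector `v` orthogonal to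
all `u i` and `J u i` such that `w` lies in the span of the `u i` and `v`. -/
lemma exists_next_vector {k : ℕ} (hk : k < n) {u : ℕ → Fin n ⊕ Fin n → ℝ}
    (hu : IsArnoldi J W k u) (w : Fin n ⊕ Fin n → ℝ) (hw : ∀ i < k, (J *ᵥ u i) ⬝ᵥ w = 0) :
    ∃ v : Fin n ⊕ Fin n → ℝ, v ⬝ᵥ v = 1 ∧ (∀ i < k, u i ⬝ᵥ v = 0 ∧ (J *ᵥ u i) ⬝ᵥ v = 0) ∧
      ∀ x : Fin n ⊕ Fin n → ℝ, (∀ i < k, x ⬝ᵥ u i = 0) → x ⬝ᵥ v = 0 → x ⬝ᵥ w = 0 := by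
  set r := w - ∑ i ∈ Finset.range k, (u i ⬝ᵥ w) • u i with hr
  have hxr : ∀ x : Fin n ⊕ Fin n → ℝ, (∀ i < k, x ⬝ᵥ u i = 0) → x ⬝ᵥ r = x ⬝ᵥ w := by
    intro x hx
    rw [hr, dotProduct_sub, dotProduct_sum, Finset.sum_eq_zero, sub_zero]
    intro i hi
    rw [dotProduct_smul, hx i (Finset.mem_range.1 hi), smul_zero]
  by_cases h0 : r = 0
  · obtain ⟨v, hv0, hv⟩ := exists_orthogonal_vector (J := J) hk u
    obtain ⟨c, -, hc⟩ := exists_normalize hv0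
    refine ⟨c • v, hc, fun i hi => ?_, fun x hx _ => ?_⟩
    · simp [dotProduct_smul, hv i hi]
    · rw [← hxr x hx, h0, dotProduct_zero]
  · obtain ⟨c, hc0, hc⟩ := exists_normalize h0
    refine ⟨c • r, hc, fun i hi => ⟨?_, ?_⟩, fun x hx hxv => ?_⟩
    · rw [dotProduct_smul, hr, dotProduct_sub, dotProduct_sum, Finset.sum_eq_single i]
      · simp [dotProduct_smul, hu.orthonormal i hi i hi]
      · intro j hj hji
        rw [dotProduct_smul, hu.orthonormal i hi j (Finset.mem_range.1 hj), if_neg hji.symm,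
          smul_zero]
      · intro h
        exact absurd (Finset.mem_range.2 hi) h
    · rw [dotProduct_smul, hxr _ (hu.isotropic i hi), hw i hi, smul_zero]
    · rw [dotProduct_smul, smul_eq_mul] at hxv
      rw [← hxr x hx]
      exact (mul_eq_zero.1 hxv).resolve_left hc0

/-- `W` maps the span of the vectors built so far into the orthogonal complement of its image
under `J`, including `W u (k - 1)`, on which the span condition says nothing. -/
lemma IsArnoldi.isotropic_image {k : ℕ} {u : ℕ → Fin n ⊕ Fin n → ℝ} (hu : IsArnoldi J W k u)
    (hJ : Jᵀ = -J) (hJW : (J * W)ᵀ = -(J * W)) (i j : ℕ) (hi : i < k) (hj : j < k) :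
    (J *ᵥ u i) ⬝ᵥ (W *ᵥ u j) = 0 := by
  have key : ∀ a b, a < k → b + 1 < k → (J *ᵥ u a) ⬝ᵥ (W *ᵥ u b) = 0 := fun a b ha hb =>
    hu.span b hb _ fun c hc => hu.isotropic a ha c (by omega)
  have anti : ∀ x y, (J *ᵥ x) ⬝ᵥ (W *ᵥ y) = -((J *ᵥ y) ⬝ᵥ (W *ᵥ x)) := by
    intro x y
    rw [mulVec_dotProduct_of_skew hJ, mulVec_dotProduct_of_skew hJ, mulVec_mulVec, mulVec_mulVec,
      dotProduct_mulVec_antisymm hJW]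
  rcases Nat.lt_or_ge (j + 1) k with h | h
  · exact key i j hi h
  rcases Nat.lt_or_ge (i + 1) k with h' | h'
  · rw [anti, key j i hj h', neg_zero]
  · obtain rfl : i = j := by omega
    have := anti (u i) (u i)
    linarith

lemma exists_isArnoldi (hJ : Jᵀ = -J) (hJW : (J * W)ᵀ = -(J * W)) :
    ∀ k ≤ n, ∃ u, IsArnoldi J W k u := by
  intro k
  induction k with
  | zero => exact fun _ => ⟨0, by simp, by simp, by simp⟩
  | succ k ih =>
    intro hk
    obtain ⟨u, hu⟩ := ih (by omega)
    -- For `k = 0` the vector `u (k - 1)` is `u 0`, not yet constructed; this is harmless since the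
    -- orthogonality required of it is vacuous and no span condition involves it.
    obtain ⟨v, hv1, hv, hvw⟩ := exists_next_vector (by omega) hu (W *ᵥ u (k - 1))
      fun i hi => hu.isotropic_image hJ hJW i (k - 1) hi (by omega)
    have hne : ∀ i < k, Function.update u k v i = u i := fun i hi =>
      Function.update_of_ne hi.ne v u
    have heq : Function.update u k v k = v := Function.update_self k v u
    refine ⟨Function.update u k v, fun i hi j hj => ?_, fun i hi j hj => ?_, fun j hj x hx => ?_⟩
    · rcases Nat.lt_succ_iff_lt_or_eq.1 hi with hi | rfl <;>
        rcases Nat.lt_succ_iff_lt_or_eq.1 hj with hj | rfl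
      · rw [hne i hi, hne j hj, hu.orthonormal i hi j hj]
      · rw [hne i hi, heq, (hv i hi).1, if_neg hi.ne]
      · rw [hne j hj, heq, dotProduct_comm, (hv j hj).1, if_neg hj.ne']
      · rw [heq, hv1, if_pos rfl]
    · rcases Nat.lt_succ_iff_lt_or_eq.1 hi with hi | rfl <;>
        rcases Nat.lt_succ_iff_lt_or_eq.1 hj with hj | rfl
      · rw [hne i hi, hne j hj, hu.isotropic i hi j hj]
      · rw [hne i hi, heq, (hv i hi).2]
      · rw [hne j hj, heq, mulVec_dotProduct_of_skew hJ, dotProduct_comm, (hv j hj).2, neg_zero]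
      · rw [heq]
        have h1 := mulVec_dotProduct_of_skew hJ v v
        have h2 := dotProduct_comm v (J *ᵥ v)
        linarith
    · rw [hne j (by omega)]
      rcases Nat.lt_or_ge (j + 1) k with h | h
      · exact hu.span j h x fun i hi => by rw [← hne i (by omega)]; exact hx i hi
      · obtain rfl : k = j + 1 := by omega
        refine hvw x (fun i hi => ?_) ?_
        · rw [← hne i hi]
          exact hx i hi.le
        · rw [← heq]
          exact hx _ le_rfl

end Arnoldi

theorem skewHamiltonian_PVL_form (n : ℕ) (hn : 1 ≤ n)
    (J W : Matrix (Fin n ⊕ Fin n) (Fin n ⊕ Fin n) ℝ)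
    (hJ : J = Matrix.fromBlocks 0 1 (-1) 0)
    (hW : (W * J)ᵀ = -(W * J)) :
    ∃ (U : Matrix (Fin n ⊕ Fin n) (Fin n ⊕ Fin n) ℝ)
      (W₁ W₂ : Matrix (Fin n) (Fin n) ℝ),
      Uᵀ * U = 1 ∧ U * J * Uᵀ = J ∧
      Uᵀ * W * U = Matrix.fromBlocks W₁ W₂ 0 W₁ᵀ ∧
      W₂ᵀ = -W₂ ∧
      (∀ i j : Fin n, (j : ℕ) + 1 < (i : ℕ) → W₁ i j = 0) := by
  have hJt : Jᵀ = -J := by simp [hJ, fromBlocks_transpose, fromBlocks_neg]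
  have hJJ : J * J = -1 := by
    rw [hJ, fromBlocks_multiply, ← fromBlocks_one, fromBlocks_neg]
    simp
  have hJWt : J * Wᵀ = W * J := by
    rw [transpose_mul, hJt, Matrix.neg_mul] at hW
    exact neg_injective hW
  have hWtJ : Wᵀ * J = J * W := by
    have h : J * (J * Wᵀ) * J = J * (W * J) * J := by rw [hJWt]
    rw [← Matrix.mul_assoc, hJJ, Matrix.mul_assoc J, Matrix.mul_assoc W, hJJ] at h
    simpa using h
  have hJW : (J * W)ᵀ = -(J * W) := by rw [transpose_mul, hJt, Matrix.mul_neg, hWtJ]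
  obtain ⟨u, hu⟩ := exists_isArnoldi hJt hJW n le_rfl
  let Q : Matrix (Fin n ⊕ Fin n) (Fin n) ℝ := Matrix.of fun p j => u j p
  have hQ : Qᵀ * Q = 1 := by
    ext i j
    rw [one_apply]
    simp only [Fin.ext_iff]
    exact hu.orthonormal i i.2 j j.2
  have hJQ : Qᵀ * (J * Q) = 0 := by
    ext i j
    have := hu.isotropic j j.2 i i.2
    rw [dotProduct_comm] at this
    exact this
  have hJQWQ : Qᵀ * (J * (W * Q)) = 0 := by
    ext i j
    have := hu.isotropic_image hJt hJW i j i.2 j.2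
    rw [mulVec_dotProduct_of_skew hJt, mulVec_mulVec, neg_eq_zero] at this
    rw [← Matrix.mul_assoc J]
    exact this
  have hJJl : ∀ M : Matrix (Fin n ⊕ Fin n) (Fin n) ℝ, J * (J * M) = -M := fun M => by
    rw [← Matrix.mul_assoc, hJJ, Matrix.neg_mul, Matrix.one_mul]
  have hUU : (fromCols Q (-(J * Q)))ᵀ * fromCols Q (-(J * Q)) = 1 := by
    rw [transpose_fromCols, fromRows_mul_fromCols, ← fromBlocks_one]
    simp [transpose_mul, hJt, Matrix.mul_assoc, hJJl, hJQ, hQ]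
  have hcomm : fromCols Q (-(J * Q)) * J = J * fromCols Q (-(J * Q)) := by
    rw [mul_fromCols, Matrix.mul_neg, hJJl]
    conv_lhs => rw [hJ]
    rw [fromCols_mul_fromBlocks]
    simp [← hJ]
  refine ⟨fromCols Q (-(J * Q)), Qᵀ * W * Q, -(Qᵀ * (W * J) * Q), hUU, ?_, ?_, ?_, ?_⟩
  · rw [hcomm, Matrix.mul_assoc, mul_eq_one_comm.1 hUU, Matrix.mul_one]
  · have hJWJ : J * (W * (J * Q)) = -(Wᵀ * Q) := by
      rw [← Matrix.mul_assoc W, ← hJWt, Matrix.mul_assoc, hJJl]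
    rw [transpose_fromCols, fromRows_mul, fromRows_mul_fromCols]
    simp [transpose_mul, hJt, Matrix.mul_assoc, hJQWQ, hJWJ]
  · rw [transpose_neg, transpose_mul, transpose_mul, hW]
    simp [Matrix.mul_assoc]
  · intro i j hij
    rw [Matrix.mul_assoc]
    refine hu.span j (by omega) (u i) fun l hl => ?_
    rw [hu.orthonormal i i.2 l (by omega), if_neg (by omega)]
end

section
/- Let n ≥ 1 and let W ∈ ℝ^{2n×2n} be skew-Hamiltonian. Then there exists an orthogonal-symplectic matrix U ∈ ℝ^{2n×2n} such that UᵀWU = [[N₁, N₂],[0, N₁ᵀ]] in n×n block form, where N₂ᵀ = −N₂ and N₁ is quasi-upper triangular (in real Schur form). -/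
/-! The alternating form `ω(x, y) = ⟪x, J y⟫` is nondegenerate on `ℝ²ⁿ`, and `W` is
skew-Hamiltonian exactly when it is `ω`-self-adjoint and `ω(x, W x) = 0` for all `x`. Then
`ω(Wᵃ x, Wᵇ x) = ω(x, Wᵃ⁺ᵇ x) = 0` for all `a, b`, so every Krylov space of `W` is isotropic
(`krylov_isotropic`). An isotropic `W`-invariant subspace `L` of maximal dimension therefore equals
its symplectic complement, since the Krylov space of any vector of the complement can be adjoined
to `L`; hence `L` is Lagrangian, of dimension `n` (`exists_lagrangian`).

The restriction of `W` to `L` has a real Schur form in some orthonormal basis (`hasSchurForm`):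
split off an eigenvector if there is one, and otherwise a plane spanned by `v, T v` with `v` killed
by a quadratic polynomial in `T`; then recurse on the orthogonal complement.

Writing that basis as the columns of `Q`, so that `QᵀQ = 1`, `QᵀJQ = 0` and `WQ = QN₁`, the matrix
`U = [Q, -JQ]` has all required properties (`block_form_of_frame`). -/

open Matrix

/-- A real `n × n` matrix is quasi-upper triangular (real Schur form) if it is upper
Hessenberg, no two consecutive subdiagonal entries are both nonzero, and each nonzero
subdiagonal entry determines a `2 × 2` diagonal block with nonreal complex conjugate
eigenvalues. -/
def QuasiUpperTriangular {n : ℕ} (R : Matrix (Fin n) (Fin n) ℝ) : Prop :=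
  (∀ i j : Fin n, (j : ℕ) + 1 < (i : ℕ) → R i j = 0) ∧
  (∀ i : ℕ, ∀ h2 : i + 2 < n,
      R ⟨i + 1, by omega⟩ ⟨i, by omega⟩ ≠ 0 →
      R ⟨i + 2, h2⟩ ⟨i + 1, by omega⟩ = 0) ∧
  (∀ i : ℕ, ∀ h1 : i + 1 < n,
      R ⟨i + 1, h1⟩ ⟨i, by omega⟩ ≠ 0 →
      (R ⟨i, by omega⟩ ⟨i, by omega⟩ - R ⟨i + 1, h1⟩ ⟨i + 1, h1⟩) ^ 2 +
        4 * R ⟨i, by omega⟩ ⟨i + 1, h1⟩ * R ⟨i + 1, h1⟩ ⟨i, by omega⟩ < 0)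

/-! ### Real Schur form of an endomorphism -/

/-- Prepending a real eigenvalue to a real Schur form. -/
lemma QuasiUpperTriangular.of_one {m : ℕ} (R : Matrix (Fin (m + 1)) (Fin (m + 1)) ℝ)
    (h0 : ∀ i : Fin m, R i.succ 0 = 0)
    (hR : QuasiUpperTriangular (R.submatrix Fin.succ Fin.succ)) : QuasiUpperTriangular R := by
  obtain ⟨h1, h2, h3⟩ := hR
  refine ⟨?_, ?_, ?_⟩
  · intro i j hij
    induction i using Fin.cases with
    | zero => simp at hij
    | succ i =>
      induction j using Fin.cases with
      | zero => exact h0 i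
      | succ j => exact h1 i j (by simpa using hij)
  · rintro (_ | i) hi hne
    · exact absurd (h0 ⟨0, by omega⟩) hne
    · exact h2 i (by omega) hne
  · rintro (_ | i) hi hne
    · exact absurd (h0 ⟨0, by omega⟩) hne
    · exact h3 i (by omega) hne

/-- Prepending a `2 × 2` block to a real Schur form; the block is split (`R 1 0 = 0`) or has
nonreal eigenvalues. -/
lemma QuasiUpperTriangular.of_two {m : ℕ} (R : Matrix (Fin (m + 2)) (Fin (m + 2)) ℝ)
    (h0 : ∀ i : Fin m, R i.succ.succ 0 = 0) (h0' : ∀ i : Fin m, R i.succ.succ 1 = 0)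
    (hd : R 1 0 ≠ 0 → (R 0 0 - R 1 1) ^ 2 + 4 * R 0 1 * R 1 0 < 0)
    (hR : QuasiUpperTriangular
      (R.submatrix (fun i => Fin.succ (Fin.succ i)) (fun i => Fin.succ (Fin.succ i)))) :
    QuasiUpperTriangular R := by
  obtain ⟨h1, h2, h3⟩ := hR
  refine ⟨?_, ?_, ?_⟩
  · intro i j hij
    induction i using Fin.cases with
    | zero => simp at hij
    | succ i =>
      induction i using Fin.cases with
      | zero => simp at hij
      | succ i =>
        induction j using Fin.cases with
        | zero => exact h0 i
        | succ j =>
          induction j using Fin.cases with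
          | zero => exact h0' i
          | succ j => exact h1 i j (by simpa using hij)
  · rintro (_ | _ | i) hi hne
    · exact h0' ⟨0, by omega⟩
    · exact absurd (h0' ⟨0, by omega⟩) hne
    · exact h2 i (by omega) hne
  · rintro (_ | _ | i) hi hne
    · exact hd hne
    · exact absurd (h0' ⟨0, by omega⟩) hne
    · exact h3 i (by omega) hne

/-- A real endomorphism kills some nonzero vector through a polynomial of degree at most two,
because irreducible real polynomials have degree at most two. -/
lemma exists_quadratic_vector {V : Type*} [AddCommGroup V] [Module ℝ V] [FiniteDimensional ℝ V]
    [Nontrivial V] (T : V →ₗ[ℝ] V) :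
    ∃ v : V, v ≠ 0 ∧ ∃ c d : ℝ, T (T v) = c • T v + d • v := by
  have hint : IsIntegral ℝ T := Algebra.IsIntegral.isIntegral T
  obtain ⟨p, hp, q, hq⟩ := WfDvdMonoid.exists_irreducible_factor
    (minpoly.not_isUnit ℝ T) (minpoly.ne_zero hint)
  have hq0 : q ≠ 0 := by
    rintro rfl
    exact minpoly.ne_zero hint (by simpa using hq)
  -- By minimality of the degree, the cofactor `q` does not annihilate `T`.
  have hqT : Polynomial.aeval T q ≠ 0 := by
    intro h
    have h1 := minpoly.degree_le_of_ne_zero ℝ T hq0 h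
    rw [hq, Polynomial.degree_mul] at h1
    have h2 := Polynomial.natDegree_pos_iff_degree_pos.1 hp.natDegree_pos
    rw [Polynomial.degree_eq_natDegree hp.ne_zero, Polynomial.degree_eq_natDegree hq0] at h1
    have h3 := hp.natDegree_pos
    norm_cast at h1
    omega
  obtain ⟨u, hu⟩ : ∃ u, Polynomial.aeval T q u ≠ 0 := by
    by_contra! h
    exact hqT (LinearMap.ext h)
  refine ⟨Polynomial.aeval T q u, hu, ?_⟩
  set v := Polynomial.aeval T q u
  have hv : Polynomial.aeval T p v = 0 := by
    have := minpoly.aeval ℝ T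
    rw [hq, map_mul] at this
    exact congrArg (fun f : V →ₗ[ℝ] V => f u) this
  have hquad := Polynomial.eq_quadratic_of_degree_le_two hp.degree_le_two
  have hpos := hp.natDegree_pos
  set a := p.coeff 2
  set b := p.coeff 1
  set c := p.coeff 0
  have hv' : a • T (T v) + b • T v + c • v = 0 := by
    rw [hquad] at hv
    simpa [pow_two, Module.algebraMap_end_apply] using hv
  by_cases ha : a = 0
  · have hb : b ≠ 0 := by
      intro hb
      rw [hquad, ha, hb] at hpos
      simp at hpos
    have hTv : T v = (-c / b) • v := by
      have : b • T v = (-c) • v := by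
        rw [ha] at hv'
        rw [neg_smul, ← add_eq_zero_iff_eq_neg]
        simpa using hv'
      rw [div_eq_inv_mul, mul_smul, ← this, smul_smul, inv_mul_cancel₀ hb, one_smul]
    refine ⟨-c / b, 0, ?_⟩
    nth_rw 1 [hTv]
    simp
  · refine ⟨-b / a, -c / a, ?_⟩
    have : a • T (T v) = (-b) • T v + (-c) • v := by
      rw [← sub_eq_zero, ← hv']
      module
    rw [div_eq_inv_mul, div_eq_inv_mul, mul_smul, mul_smul, ← smul_add, ← this, smul_smul,
      inv_mul_cancel₀ ha, one_smul]

/-- The assertion that every endomorphism of every `n`-dimensional real inner product space has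
an orthonormal family of length `n` in which it is in real Schur form. -/
def HasSchurForm (n : ℕ) : Prop :=
  ∀ (V : Type) [NormedAddCommGroup V] [InnerProductSpace ℝ V] [FiniteDimensional ℝ V]
    (T : V →ₗ[ℝ] V), Module.finrank ℝ V = n →
    ∃ b : Fin n → V, Orthonormal ℝ b ∧
      QuasiUpperTriangular (Matrix.of fun i j => inner ℝ (b i) (T (b j)))

/-- Schur form for the compression of `T` to the orthogonal complement of an orthonormal
family `u`. -/
lemma HasSchurForm.compl {m k : ℕ} (ih : HasSchurForm m) {V : Type} [NormedAddCommGroup V]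
    [InnerProductSpace ℝ V] [FiniteDimensional ℝ V] (T : V →ₗ[ℝ] V)
    (hV : Module.finrank ℝ V = m + k) (u : Fin k → V) (hu : Orthonormal ℝ u) :
    ∃ c : Fin m → V, Orthonormal ℝ c ∧ (∀ i j, inner ℝ (u i) (c j) = 0) ∧
      QuasiUpperTriangular (Matrix.of fun i j => inner ℝ (c i) (T (c j))) := by
  set P := Submodule.span ℝ (Set.range u)
  have hP : Module.finrank ℝ P = k := by
    simpa using finrank_span_eq_card hu.linearIndependent
  have hPo : Module.finrank ℝ Pᗮ = m := by
    have := P.finrank_add_finrank_orthogonal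
    omega
  obtain ⟨c, hc, hq⟩ := ih Pᗮ
    ((Pᗮ.orthogonalProjectionOnto : V →ₗ[ℝ] Pᗮ) ∘ₗ T ∘ₗ Pᗮ.subtype) hPo
  refine ⟨fun i => c i, hc.comp_linearIsometry Pᗮ.subtypeₗᵢ, ?_, ?_⟩
  · intro i j
    exact (Submodule.mem_orthogonal _ _).1 (c j).2 _ (Submodule.subset_span ⟨i, rfl⟩)
  · convert hq using 1
    ext i j
    exact (Submodule.inner_orthogonalProjectionOnto_eq_of_mem_left (c i) (T (c j))).symm

/-- If `T` has no eigenvector, its block on an invariant plane has negative discriminant: a real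
root `l` of the characteristic polynomial would give the eigenvector `(l - d) v + c w`. -/
lemma disc_neg_of_no_eigenvector {V : Type*} [NormedAddCommGroup V] [InnerProductSpace ℝ V]
    (T : V →ₗ[ℝ] V) (hT : ¬ ∃ x : V, x ≠ 0 ∧ ∃ l : ℝ, T x = l • x) (v w : V)
    (hw : ‖w‖ = 1) (hvw : inner ℝ v w = 0) (a b c d : ℝ)
    (hTv : T v = a • v + c • w) (hTw : T w = b • v + d • w) (hc : c ≠ 0) :
    (a - d) ^ 2 + 4 * b * c < 0 := by
  by_contra! hdisc
  set s := Real.sqrt ((a - d) ^ 2 + 4 * b * c)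
  have hs : s ^ 2 = (a - d) ^ 2 + 4 * b * c := Real.sq_sqrt hdisc
  set l := (a + d + s) / 2 with hl
  have hchar : (l - d) * a + c * b = l * (l - d) := by
    rw [hl]
    linear_combination (-1 / 4 : ℝ) * hs
  refine hT ⟨(l - d) • v + c • w, ?_, l, ?_⟩
  · intro h
    have h1 : inner ℝ w ((l - d) • v + c • w) = c := by
      rw [inner_add_right, inner_smul_right, inner_smul_right, real_inner_comm, hvw,
        real_inner_self_eq_norm_sq, hw]
      ring
    rw [h, inner_zero_right] at h1
    exact hc h1.symm
  · rw [map_add, map_smul, map_smul, hTv, hTw]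
    have : (l - d) • (a • v + c • w) + c • (b • v + d • w)
        = ((l - d) * a + c * b) • v + (l * c) • w := by module
    rw [this, hchar]
    module

theorem hasSchurForm (n : ℕ) : HasSchurForm n := by
  induction n using Nat.strong_induction_on with
  | _ n ih =>
  intro V _ _ _ T hV
  rcases Nat.eq_zero_or_pos n with rfl | hn
  · refine ⟨fun i => i.elim0, ⟨fun i => i.elim0, fun i => i.elim0⟩, ⟨fun i => i.elim0, ?_, ?_⟩⟩
    · intro i h
      omega
    · intro i h
      omega
  have : Nontrivial V := Module.nontrivial_of_finrank_pos (R := ℝ) (by omega)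
  by_cases hT : ∃ x : V, x ≠ 0 ∧ ∃ l : ℝ, T x = l • x
  · obtain ⟨x, hx, l, hl⟩ := hT
    obtain ⟨m, rfl⟩ : ∃ m, n = m + 1 := ⟨n - 1, by omega⟩
    set v := (‖x‖⁻¹ : ℝ) • x with hvdef
    have hv : ‖v‖ = 1 := by simp [hvdef, norm_smul, hx]
    have hTv : T v = l • v := by rw [hvdef, map_smul, hl, smul_comm]
    have hu : Orthonormal ℝ ![v] := by
      rw [orthonormal_vecCons_iff]
      exact ⟨hv, fun i => i.elim0, ⟨fun i => i.elim0, fun i => i.elim0⟩⟩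
    obtain ⟨c, hc, huc, hq⟩ := (ih m (by omega)).compl T hV ![v] hu
    have hvc : ∀ j, inner ℝ v (c j) = 0 := huc 0
    refine ⟨Matrix.vecCons v c, orthonormal_vecCons_iff.2 ⟨hv, hvc, hc⟩, ?_⟩
    refine QuasiUpperTriangular.of_one _ ?_ hq
    intro i
    simp [hTv, inner_smul_right, real_inner_comm v, hvc]
  · obtain ⟨x, hx, e, f, hef⟩ := exists_quadratic_vector T
    set v := (‖x‖⁻¹ : ℝ) • x with hvdef
    have hv : ‖v‖ = 1 := by simp [hvdef, norm_smul, hx]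
    have hv0 : v ≠ 0 := by
      intro h
      simp [h] at hv
    have hTTv : T (T v) = e • T v + f • v := by
      rw [hvdef, map_smul, map_smul, hef]
      module
    clear_value v
    -- Gram–Schmidt on `v, T v`; the remainder is nonzero as `v` is not an eigenvector.
    set a := inner ℝ v (T v) with ha
    set y := T v - a • v with hy
    have hy0 : y ≠ 0 := fun h => hT ⟨v, hv0, a, sub_eq_zero.1 h⟩
    have hvy : inner ℝ v y = 0 := by
      rw [hy, inner_sub_right, inner_smul_right, real_inner_self_eq_norm_sq, hv, ← ha]
      ring
    set r := ‖y‖ with hr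
    have hr0 : r ≠ 0 := norm_ne_zero_iff.2 hy0
    set w := r⁻¹ • y with hwdef
    have hw : ‖w‖ = 1 := by
      rw [hwdef, norm_smul, norm_inv, hr, norm_norm, inv_mul_cancel₀ hr0]
    have hvw : inner ℝ v w = 0 := by rw [hwdef, inner_smul_right, hvy, mul_zero]
    have hyw : y = r • w := by rw [hwdef, smul_smul, mul_inv_cancel₀ hr0, one_smul]
    have hTv : T v = a • v + r • w := by rw [← hyw, hy]; abel
    clear_value w r y
    obtain ⟨b, d, hTw⟩ : ∃ b d : ℝ, T w = b • v + d • w := by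
      refine ⟨r⁻¹ * ((e - a) * a + f), (e - a), ?_⟩
      have h1 : T y = (e - a) • T v + f • v := by
        rw [hy, map_sub, map_smul, hTTv]
        module
      have h2 : r⁻¹ * ((e - a) * r) = e - a := by field_simp
      calc T w = (r⁻¹ * ((e - a) * a + f)) • v + (r⁻¹ * ((e - a) * r)) • w := by
            rw [hwdef, map_smul, h1, ← hwdef, hTv]
            module
        _ = _ := by rw [h2]
    have hu : Orthonormal ℝ ![v, w] := by
      rw [orthonormal_vecCons_iff, orthonormal_vecCons_iff]
      refine ⟨hv, ?_, hw, fun i => i.elim0, ⟨fun i => i.elim0, fun i => i.elim0⟩⟩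
      intro i
      fin_cases i
      exact hvw
    have hn2 : 2 ≤ n := by
      have := hu.linearIndependent.fintype_card_le_finrank
      rw [hV] at this
      simpa using this
    obtain ⟨m, rfl⟩ : ∃ m, n = m + 2 := ⟨n - 2, by omega⟩
    obtain ⟨c, hc, huc, hq⟩ := (ih m (by omega)).compl T hV ![v, w] hu
    have hvc : ∀ j, inner ℝ v (c j) = 0 := huc 0
    have hwc : ∀ j, inner ℝ w (c j) = 0 := huc 1
    have hvc' : ∀ j, inner ℝ (c j) v = 0 := fun j => by rw [real_inner_comm, hvc]
    have hwc' : ∀ j, inner ℝ (c j) w = 0 := fun j => by rw [real_inner_comm, hwc]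
    have hwv : inner ℝ w v = 0 := by rw [real_inner_comm, hvw]
    refine ⟨Matrix.vecCons v (Matrix.vecCons w c), ?_, ?_⟩
    · rw [orthonormal_vecCons_iff, orthonormal_vecCons_iff]
      refine ⟨hv, ?_, hw, hwc, hc⟩
      intro i
      induction i using Fin.cases with
      | zero => exact hvw
      | succ i => exact hvc i
    · refine QuasiUpperTriangular.of_two _ ?_ ?_ ?_ hq
      · intro i
        simp [hTv, inner_add_right, inner_smul_right, hvc', hwc']
      · intro i
        simp [hTw, inner_add_right, inner_smul_right, hvc', hwc']
      · intro _
        have := disc_neg_of_no_eigenvector T hT v w hw hvw a b r d hTv hTw hr0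
        simpa [hTv, hTw, inner_add_right, inner_smul_right, hv, hw, hvw, hwv] using this

/-! ### Invariant Lagrangian subspaces -/

/-- Every Krylov space of an operator that is self-adjoint for the alternating form
`(x, y) ↦ ⟪x, J y⟫` is isotropic for that form. -/
lemma krylov_isotropic {E : Type*} [NormedAddCommGroup E] [InnerProductSpace ℝ E]
    (J W : E →ₗ[ℝ] E) (hJ : ∀ x, inner ℝ x (J x) = 0)
    (hW : ∀ x y, inner ℝ (W x) (J y) = inner ℝ x (J (W y)))
    (hJW : ∀ x, inner ℝ x (J (W x)) = 0) (x : E) (a b : ℕ) :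
    inner ℝ ((W ^ a) x) (J ((W ^ b) x)) = 0 := by
  have hpow : ∀ (k : ℕ) (y z : E), inner ℝ ((W ^ k) y) (J z) = inner ℝ y (J ((W ^ k) z)) := by
    intro k
    induction k with
    | zero => intro y z; simp
    | succ k ih =>
      intro y z
      rw [pow_succ, Module.End.mul_apply, ih, hW, ← Module.End.mul_apply W, ← pow_succ', pow_succ]
  rw [hpow, ← Module.End.mul_apply (W ^ a), ← pow_add]
  obtain ⟨k, hk | hk⟩ := Nat.even_or_odd' (a + b)
  · rw [hk, two_mul, pow_add, Module.End.mul_apply, ← hpow]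
    exact hJ _
  · rw [hk, show 2 * k + 1 = k + (1 + k) by ring, pow_add, Module.End.mul_apply, ← hpow, pow_add,
      pow_one]
    exact hJW _

/-- An isotropic invariant subspace of maximal dimension is Lagrangian: otherwise adjoining the
Krylov space of a vector in its symplectic complement would enlarge it. -/
lemma exists_lagrangian {E : Type*} [NormedAddCommGroup E] [InnerProductSpace ℝ E]
    [FiniteDimensional ℝ E] (J W : E →ₗ[ℝ] E) (hJJ : ∀ x, J (J x) = -x)
    (hJ : ∀ x y, inner ℝ (J x) y = -inner ℝ x (J y))
    (hW : ∀ x y, inner ℝ (W x) (J y) = inner ℝ x (J (W y))) :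
    ∃ L : Submodule ℝ E, (∀ x ∈ L, W x ∈ L) ∧ (∀ x ∈ L, ∀ y ∈ L, inner ℝ x (J y) = 0) ∧
      2 * Module.finrank ℝ L = Module.finrank ℝ E := by
  let S : Set (Submodule ℝ E) :=
    {L | (∀ x ∈ L, W x ∈ L) ∧ ∀ x ∈ L, ∀ y ∈ L, inner ℝ x (J y) = 0}
  have hS : S.Nonempty := ⟨⊥, by simp [S]⟩
  obtain ⟨L, ⟨hinv, hiso⟩, hmax⟩ := WellFounded.has_min
    (wellFounded_gt : WellFounded (α := Submodule ℝ E) (· > ·)) S hS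
  refine ⟨L, hinv, hiso, ?_⟩
  have hanti : ∀ x y, inner ℝ x (J y) = -inner ℝ y (J x) := fun x y => by
    rw [real_inner_comm, hJ]
  have hJ0 : ∀ x, inner ℝ x (J x) = 0 := fun x => by linarith [hanti x x]
  have hJW0 : ∀ x, inner ℝ x (J (W x)) = 0 := fun x => by
    linarith [hanti x (W x), hW x x]
  -- The symplectic complement of `L` is the orthogonal complement of `J L`.
  have hle : L ≤ (L.map J)ᗮ := by
    intro x hx
    rw [Submodule.mem_orthogonal]
    rintro _ ⟨y, hy, rfl⟩
    rw [real_inner_comm]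
    exact hiso x hx y hy
  have hge : (L.map J)ᗮ ≤ L := by
    intro x hx
    have hxL : ∀ y ∈ L, inner ℝ x (J y) = 0 := fun y hy => by
      rw [real_inner_comm]
      exact (Submodule.mem_orthogonal _ _).1 hx _ ⟨y, hy, rfl⟩
    let K : Submodule ℝ E := Submodule.span ℝ (Set.range fun k : ℕ => (W ^ k) x)
    have hKW : ∀ y ∈ K, W y ∈ K := by
      intro y hy
      induction hy using Submodule.span_induction with
      | mem y hy =>
        obtain ⟨k, rfl⟩ := hy
        refine Submodule.subset_span ⟨k + 1, ?_⟩
        simp [pow_succ']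
      | zero => simp
      | add y z _ _ h1 h2 => rw [map_add]; exact K.add_mem h1 h2
      | smul c y _ h1 => rw [map_smul]; exact K.smul_mem c h1
    have hpowL : ∀ (k : ℕ), ∀ y ∈ L, inner ℝ ((W ^ k) x) (J y) = 0 := by
      intro k
      induction k with
      | zero => simpa using hxL
      | succ k ih =>
        intro y hy
        rw [pow_succ', Module.End.mul_apply, hW]
        exact ih _ (hinv y hy)
    have hKL : ∀ z ∈ K, ∀ y ∈ L, inner ℝ z (J y) = 0 := by
      intro z hz y hy
      induction hz using Submodule.span_induction with
      | mem z hz => obtain ⟨k, rfl⟩ := hz; exact hpowL k y hy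
      | zero => simp
      | add z z' _ _ h1 h2 => rw [inner_add_left, h1, h2, add_zero]
      | smul c z _ h1 => rw [inner_smul_left, h1, mul_zero]
    have hKK : ∀ z ∈ K, ∀ y ∈ K, inner ℝ z (J y) = 0 := by
      intro z hz y hy
      induction hz, hy using Submodule.span_induction₂ with
      | mem_mem z y hz hy =>
        obtain ⟨a, rfl⟩ := hz
        obtain ⟨b, rfl⟩ := hy
        exact krylov_isotropic J W hJ0 hW hJW0 x a b
      | zero_left => simp
      | zero_right => simp
      | add_left z z' y _ _ _ h1 h2 => rw [inner_add_left, h1, h2, add_zero]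
      | add_right z y y' _ _ _ h1 h2 => rw [map_add, inner_add_right, h1, h2, add_zero]
      | smul_left c z y _ _ h1 => rw [inner_smul_left, h1, mul_zero]
      | smul_right c z y _ _ h1 => rw [map_smul, inner_smul_right, h1, mul_zero]
    have hmem : L ⊔ K ∈ S := by
      refine ⟨?_, ?_⟩
      · intro y hy
        obtain ⟨l, hl, k, hk, rfl⟩ := Submodule.mem_sup.1 hy
        rw [map_add]
        exact Submodule.add_mem_sup (hinv l hl) (hKW k hk)
      · intro y hy z hz
        obtain ⟨l, hl, k, hk, rfl⟩ := Submodule.mem_sup.1 hy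
        obtain ⟨l', hl', k', hk', rfl⟩ := Submodule.mem_sup.1 hz
        rw [map_add, inner_add_left, inner_add_right, inner_add_right, hiso l hl l' hl',
          hKL k hk l' hl', hKK k hk k' hk', hanti l k', hKL k' hk' l hl]
        simp
    have hxK : x ∈ K := Submodule.subset_span ⟨0, by simp⟩
    by_contra hxn
    refine hmax (L ⊔ K) hmem (lt_of_le_of_ne le_sup_left ?_)
    intro h
    exact hxn (h ▸ Submodule.mem_sup_right hxK)
  have heq : L = (L.map J)ᗮ := le_antisymm hle hge
  have hinj : Function.Injective J := by
    intro x y h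
    have := congrArg J h
    rw [hJJ, hJJ] at this
    exact neg_injective this
  have hdim : Module.finrank ℝ (L.map J) = Module.finrank ℝ L :=
    (Submodule.equivMapOfInjective J hinj L).finrank_eq.symm
  have := (L.map J).finrank_add_finrank_orthogonal
  rw [← heq, hdim] at this
  omega

/-! ### From an invariant Lagrangian frame to the block form -/

/-- `U = [Q, -JQ]` completes a Lagrangian orthonormal frame `Q` to an orthogonal-symplectic
matrix; if the frame spans a `W`-invariant subspace, `U` block-triangularizes `W`. -/
lemma block_form_of_frame {n : ℕ} (J W : Matrix (Fin n ⊕ Fin n) (Fin n ⊕ Fin n) ℝ)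
    (hJ : J = Matrix.fromBlocks 0 1 (-1) 0) (hJW : J * Wᵀ = W * J)
    (Q : Matrix (Fin n ⊕ Fin n) (Fin n) ℝ) (N : Matrix (Fin n) (Fin n) ℝ)
    (hQ : Qᵀ * Q = 1) (hQJ : Qᵀ * J * Q = 0) (hWQ : W * Q = Q * N) :
    ∃ (U : Matrix (Fin n ⊕ Fin n) (Fin n ⊕ Fin n) ℝ) (N₂ : Matrix (Fin n) (Fin n) ℝ),
      Uᵀ * U = 1 ∧ U * J * Uᵀ = J ∧
      Uᵀ * W * U = Matrix.fromBlocks N N₂ 0 Nᵀ ∧ N₂ᵀ = -N₂ := by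
  have hJT : Jᵀ = -J := by
    rw [hJ, Matrix.fromBlocks_transpose, Matrix.fromBlocks_neg]
    simp
  have hJJ : J * J = -1 := by
    rw [hJ, Matrix.fromBlocks_multiply, ← Matrix.fromBlocks_one, Matrix.fromBlocks_neg]
    simp
  have hJJ' : ∀ {k : Type} (X : Matrix (Fin n ⊕ Fin n) k ℝ), J * (J * X) = -X := fun X => by
    rw [← Matrix.mul_assoc, hJJ, Matrix.neg_mul, Matrix.one_mul]
  have hQJ' : Qᵀ * (J * Q) = 0 := by rw [← Matrix.mul_assoc, hQJ]
  have hQW : Qᵀ * Wᵀ = Nᵀ * Qᵀ := by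
    rw [← Matrix.transpose_mul, hWQ, Matrix.transpose_mul]
  have hU : (Matrix.fromCols Q (-(J * Q)))ᵀ * Matrix.fromCols Q (-(J * Q)) = 1 := by
    rw [Matrix.transpose_fromCols, Matrix.fromRows_mul_fromCols, ← Matrix.fromBlocks_one]
    congr 1
    · simp [hQJ']
    · simp [Matrix.transpose_mul, hJT, hQJ', Matrix.mul_assoc]
    · simp [Matrix.transpose_mul, hJT, hJJ', hQ, Matrix.mul_assoc]
  refine ⟨Matrix.fromCols Q (-(J * Q)), -(Qᵀ * (W * (J * Q))), hU, ?_, ?_, ?_⟩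
  · have hcomm : Matrix.fromCols Q (-(J * Q)) * J = J * Matrix.fromCols Q (-(J * Q)) := by
      rw [Matrix.mul_fromCols, Matrix.mul_neg, hJJ']
      nth_rw 2 [hJ]
      rw [Matrix.fromCols_mul_fromBlocks]
      simp
    rw [hcomm, Matrix.mul_assoc, mul_eq_one_comm.1 hU, Matrix.mul_one]
  · rw [Matrix.transpose_fromCols, Matrix.mul_assoc, Matrix.mul_fromCols,
      Matrix.fromRows_mul_fromCols]
    congr 1
    · rw [hWQ, ← Matrix.mul_assoc, hQ, Matrix.one_mul]
    · simp
    · rw [hWQ]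
      simp only [Matrix.transpose_neg, Matrix.transpose_mul, hJT]
      rw [← Matrix.mul_assoc]
      simp [hQJ]
    · have h : W * (J * Q) = J * (Wᵀ * Q) := by
        rw [← Matrix.mul_assoc, ← hJW, Matrix.mul_assoc]
      simp only [Matrix.transpose_neg, Matrix.transpose_mul, hJT, Matrix.mul_neg,
        neg_neg, h, Matrix.mul_assoc, hJJ']
      rw [← Matrix.mul_assoc, hQW, Matrix.mul_assoc, hQ, Matrix.mul_one]
  · simp only [Matrix.transpose_neg, Matrix.transpose_mul, Matrix.transpose_transpose, hJT,
      Matrix.mul_neg, Matrix.neg_mul, neg_neg]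
    rw [Matrix.mul_assoc, Matrix.mul_assoc, ← Matrix.mul_assoc J, hJW, Matrix.mul_assoc]

theorem skewHamiltonian_real_Schur_form (n : ℕ) (hn : 1 ≤ n)
    (J W : Matrix (Fin n ⊕ Fin n) (Fin n ⊕ Fin n) ℝ)
    (hJ : J = Matrix.fromBlocks 0 1 (-1) 0)
    (hW : (W * J)ᵀ = -(W * J)) :
    ∃ (U : Matrix (Fin n ⊕ Fin n) (Fin n ⊕ Fin n) ℝ)
      (N₁ N₂ : Matrix (Fin n) (Fin n) ℝ),
      Uᵀ * U = 1 ∧ U * J * Uᵀ = J ∧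
      Uᵀ * W * U = Matrix.fromBlocks N₁ N₂ 0 N₁ᵀ ∧
      N₂ᵀ = -N₂ ∧ QuasiUpperTriangular N₁ := by
  have hJT : Jᵀ = -J := by
    rw [hJ, Matrix.fromBlocks_transpose, Matrix.fromBlocks_neg]
    simp
  have hJJ : J * J = -1 := by
    rw [hJ, Matrix.fromBlocks_multiply, ← Matrix.fromBlocks_one, Matrix.fromBlocks_neg]
    simp
  have hJW : J * Wᵀ = W * J := by
    rw [Matrix.transpose_mul, hJT, Matrix.neg_mul] at hW
    exact neg_injective hW
  have hWJ : Wᵀ * J = J * W := by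
    have h : J * (J * Wᵀ) * J = J * (W * J) * J := by rw [hJW]
    rw [← Matrix.mul_assoc, hJJ, Matrix.mul_assoc J, Matrix.mul_assoc W, hJJ] at h
    simpa using h
  -- Moving a matrix across the inner product.
  have hadj : ∀ (A : Matrix (Fin n ⊕ Fin n) (Fin n ⊕ Fin n) ℝ)
      (x y : EuclideanSpace ℝ (Fin n ⊕ Fin n)),
      inner ℝ (Matrix.toEuclideanLin A x) y = inner ℝ x (Matrix.toEuclideanLin Aᵀ y) := by
    intro A x y
    rw [← Matrix.conjTranspose_eq_transpose_of_trivial,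
      Matrix.toEuclideanLin_conjTranspose_eq_adjoint, LinearMap.adjoint_inner_right]
  have hmul : ∀ (A B : Matrix (Fin n ⊕ Fin n) (Fin n ⊕ Fin n) ℝ)
      (x : EuclideanSpace ℝ (Fin n ⊕ Fin n)),
      Matrix.toEuclideanLin A (Matrix.toEuclideanLin B x) = Matrix.toEuclideanLin (A * B) x := by
    intro A B x
    simp
  obtain ⟨L, hinv, hiso, hdim⟩ := exists_lagrangian (Matrix.toEuclideanLin J)
    (Matrix.toEuclideanLin W)
    (fun x => by rw [hmul, hJJ]; simp)
    (fun x y => by rw [hadj, hJT]; simp)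
    (fun x y => by rw [hadj, hmul, hmul, hWJ])
  have hL : Module.finrank ℝ L = n := by
    rw [finrank_euclideanSpace] at hdim
    simp at hdim
    omega
  let T : L →ₗ[ℝ] L := (Matrix.toEuclideanLin W).restrict hinv
  obtain ⟨b, hb, hq⟩ := hasSchurForm n L T hL
  have hne : Nonempty (Fin n) := ⟨⟨0, hn⟩⟩
  have hspan : ⊤ ≤ Submodule.span ℝ (Set.range b) := by
    rw [hb.linearIndependent.span_eq_top_of_card_eq_finrank (by simp [hL])]
  let B : OrthonormalBasis (Fin n) ℝ L := OrthonormalBasis.mk hb hspan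
  have hB : ∀ i, B i = b i := fun i => by simp [B]
  let Q : Matrix (Fin n ⊕ Fin n) (Fin n) ℝ := Matrix.of fun a j => (b j : EuclideanSpace ℝ _) a
  have hQ : Qᵀ * Q = 1 := by
    ext i j
    have h := orthonormal_iff_ite.1 hb i j
    rw [Submodule.coe_inner, PiLp.inner_apply] at h
    rw [Matrix.one_apply, ← h, Matrix.mul_apply]
    exact Finset.sum_congr rfl fun a _ => by simp [Q, mul_comm]
  have hQJ : Qᵀ * J * Q = 0 := by
    ext i j
    have h := hiso _ (b i).2 _ (b j).2
    rw [PiLp.inner_apply] at h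
    rw [Matrix.zero_apply, ← h, Matrix.mul_assoc, Matrix.mul_apply]
    refine Finset.sum_congr rfl fun a _ => ?_
    simp [Q, Matrix.toLpLin_apply, Matrix.mul_apply, Matrix.mulVec, dotProduct, mul_comm]
  have hWQ : W * Q = Q * Matrix.of fun i j => inner ℝ (b i) (T (b j)) := by
    ext a j
    have h := B.sum_repr' (T (b j))
    have h' := congrArg (fun z : L => (z : EuclideanSpace ℝ (Fin n ⊕ Fin n)) a) h
    have hT : ((T (b j) : L) : EuclideanSpace ℝ (Fin n ⊕ Fin n)) a = (W * Q) a j := by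
      simp [T, Q, Matrix.toLpLin_apply, Matrix.mul_apply, Matrix.mulVec, dotProduct]
    rw [← hT, ← h']
    simp [hB, Q, Matrix.mul_apply, mul_comm]
  obtain ⟨U, N₂, h1, h2, h3, h4⟩ := block_form_of_frame J W hJ hJW Q _ hQ hQJ hWQ
  exact ⟨U, _, N₂, h1, h2, h3, h4, hq⟩
end

section
/- Let n ≥ 1 and let H ∈ ℝ^{2n×2n} be Hamiltonian with no nonzero purely imaginary eigenvalue (i.e., every eigenvalue λ ∈ ℂ of H with Re λ = 0 satisfies λ = 0). Then there exists an orthogonal-symplectic matrix U ∈ ℝ^{2n×2n} such that UᵀHU = [[H₁, H₂],[0, −H₁ᵀ]] in n×n block form, where H₂ᵀ = H₂ and H₁ is quasi-upper triangular (in real Schur form). -/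
/-!
The columns of `U` are `q₁, …, qₙ, -J q₁, …, -J qₙ`, where `q₁, …, qₙ` is an orthonormal basis of
an `H`-invariant Lagrangian subspace in which `H` is quasi-upper triangular. Orthonormality and
isotropy make `U` orthogonal and `J`-commuting, hence symplectic; invariance kills the lower left
block of `UᵀHU`; the Hamiltonian symmetry of `UᵀHU` then gives the remaining block identities.

The `qᵢ` are built one or two at a time, as an orthonormal isotropic family (`IsSchurFlag`) with
`H`-invariant span `W` (`IsSchurFlag.step`). If the family has fewer than `n` members, the
orthogonal complement `M` of `W + J W` is nonzero, and the compression `T` of `H` to `M` differs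
from `H` by a map into `W`. It is again skew for the form `ω(x, y) = ⟪J x, y⟫`. A real endomorphism
has either a real eigenvector or a pair `x, y` with `T x = a x - b y`, `T y = b x + a y`, `b ≠ 0`
(`exists_real_or_complex_eigenvector`). A single vector is always isotropic. For a pair, skewness
gives `2 a ω(x, y) = 0`, so it is enough that `a ≠ 0`. If `a = 0`, then `H² + b²` maps `W` to
itself and `x` into `W`; being injective because `H` has no eigenvalue `±ib`
(`eq_zero_of_sq_add_sq`), it is bijective on `W`, so `x ∈ W ∩ M = 0`, a contradiction.
Orthonormalizing the pair gives a `2 × 2` diagonal block of discriminant `-4b² < 0`.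
Isotropic orthonormal families have at most `n` members, so a maximal one has exactly `n`
(`exists_isSchurFlag`).
-/

open Matrix Polynomial

open scoped InnerProductSpace

/-! ### Real and complex eigenvectors of a real endomorphism -/

/-- The second alternative says that `x + iy` is an eigenvector of the complexification for the
nonreal eigenvalue `a + ib`. The vectors come from a real linear or quadratic factor of the minimal
polynomial. -/
theorem exists_real_or_complex_eigenvector {M : Type*} [AddCommGroup M] [Module ℝ M]
    [FiniteDimensional ℝ M] [Nontrivial M] (T : M →ₗ[ℝ] M) :
    (∃ (a : ℝ) (x : M), x ≠ 0 ∧ T x = a • x) ∨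
    (∃ (a b : ℝ) (x y : M), b ≠ 0 ∧ x ≠ 0 ∧ T x = a • x - b • y ∧ T y = b • x + a • y) := by
  have hint : IsIntegral ℝ T := Algebra.IsIntegral.isIntegral T
  -- The cofactor of `p` has smaller degree than the minimal polynomial, so it does not annihilate
  -- `T`; any nonzero vector in its range is killed by `p(T)`.
  have key : ∀ p : ℝ[X], p ∣ minpoly ℝ T → 0 < p.natDegree →
      ∃ x : M, x ≠ 0 ∧ aeval T p x = 0 := by
    rintro p ⟨r, hr⟩ hp
    have hm0 := minpoly.ne_zero hint
    have hr0 : r ≠ 0 := by rintro rfl; simp [hr] at hm0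
    have hp0 : p ≠ 0 := by rintro rfl; simp at hp
    have hrT : aeval T r ≠ 0 := by
      intro h
      have h1 := minpoly.degree_le_of_ne_zero ℝ T hr0 h
      have h2 := natDegree_le_natDegree h1
      rw [hr, natDegree_mul hp0 hr0] at h2
      omega
    obtain ⟨z, hz⟩ : ∃ z, aeval T r z ≠ 0 := by
      by_contra! h
      exact hrT (LinearMap.ext h)
    refine ⟨aeval T r z, hz, ?_⟩
    have h3 : aeval T (p * r) = 0 := by rw [← hr]; exact minpoly.aeval ℝ T
    rw [map_mul] at h3
    exact LinearMap.congr_fun h3 z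
  obtain ⟨μ, hμ⟩ : ∃ μ : ℂ, aeval μ (minpoly ℝ T) = 0 := by
    apply IsAlgClosed.exists_aeval_eq_zero ℂ
    exact (minpoly.degree_pos hint).ne'
  by_cases him : μ.im = 0
  · left
    have hdvd : (X - C μ.re) ∣ minpoly ℝ T := by
      rw [dvd_iff_isRoot, IsRoot.def]
      have : μ = algebraMap ℝ ℂ μ.re := by
        apply Complex.ext <;> simp [him]
      rw [this, aeval_algebraMap_apply] at hμ
      simpa using hμ
    obtain ⟨x, hx, h⟩ := key _ hdvd (by simp)
    refine ⟨μ.re, x, hx, ?_⟩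
    simpa [sub_eq_zero, Algebra.algebraMap_eq_smul_one] using h
  · right
    have hdvd := Polynomial.quadratic_dvd_of_aeval_eq_zero_im_ne_zero _ hμ him
    obtain ⟨x, hx, h⟩ := key _ hdvd (by
      have : (X ^ 2 - C (2 * μ.re) * X + C (‖μ‖ ^ 2) : ℝ[X]).natDegree = 2 := by compute_degree!
      omega)
    refine ⟨μ.re, μ.im, x, μ.im⁻¹ • (μ.re • x - T x), him, hx, ?_, ?_⟩
    · rw [smul_smul, mul_inv_cancel₀ him]; simp
    · have hn : ‖μ‖ ^ 2 = μ.re ^ 2 + μ.im ^ 2 := by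
        rw [Complex.sq_norm, Complex.normSq_apply]; ring
      have h' : T (T x) = (2 * μ.re) • T x - (μ.re ^ 2 + μ.im ^ 2) • x := by
        have h1 : T (T x) - (2 * μ.re) • T x + (μ.re ^ 2 + μ.im ^ 2) • x = 0 := by
          rw [← hn]
          simpa [Algebra.algebraMap_eq_smul_one, pow_two, mul_smul, smul_comm μ.re (2 : ℝ)] using h
        rw [← sub_eq_zero, ← h1]; abel
      simp only [map_smul, map_sub, h']
      match_scalars <;> field_simp <;> ring

/-! ### Isotropic flags in real Schur form -/

section

variable {V : Type*} [NormedAddCommGroup V] [InnerProductSpace ℝ V]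

/-- The vectors `q 0, …, q (k - 1)` are orthonormal, isotropic for the form `⟪J x, y⟫`, span an
`H`-invariant subspace, and the matrix `⟪q i, H (q j)⟫` of `H` in this basis is quasi-upper
triangular (`hess`, `sub`, `disc`). The family is indexed by `ℕ` to make extensions easy; the values
`q i` with `k ≤ i` are irrelevant. -/
structure IsSchurFlag (J H : V →ₗ[ℝ] V) (k : ℕ) (q : ℕ → V) : Prop where
  orth : ∀ i < k, ∀ j < k, ⟪q i, q j⟫_ℝ = if i = j then 1 else 0
  iso : ∀ i < k, ∀ j < k, ⟪J (q i), q j⟫_ℝ = 0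
  inv : ∀ j < k, H (q j) ∈ Submodule.span ℝ (q '' Set.Iio k)
  hess : ∀ i < k, ∀ j < k, j + 1 < i → ⟪q i, H (q j)⟫_ℝ = 0
  sub : ∀ i, i + 2 < k → ⟪q (i + 1), H (q i)⟫_ℝ ≠ 0 → ⟪q (i + 2), H (q (i + 1))⟫_ℝ = 0
  disc : ∀ i, i + 1 < k → ⟪q (i + 1), H (q i)⟫_ℝ ≠ 0 →
    (⟪q i, H (q i)⟫_ℝ - ⟪q (i + 1), H (q (i + 1))⟫_ℝ) ^ 2 +
      4 * ⟪q i, H (q (i + 1))⟫_ℝ * ⟪q (i + 1), H (q i)⟫_ℝ < 0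

theorem inner_eq_zero_of_mem_span {s : Set V} {v w : V} (hw : w ∈ Submodule.span ℝ s)
    (h : ∀ x ∈ s, ⟪v, x⟫_ℝ = 0) : ⟪v, w⟫_ℝ = 0 := by
  induction hw using Submodule.span_induction with
  | mem x hx => exact h x hx
  | zero => simp
  | add x y _ _ hx hy => rw [inner_add_right, hx, hy, add_zero]
  | smul a x _ hx => rw [inner_smul_right, hx, mul_zero]

/-- Appending `m ≤ 2` orthonormal isotropic vectors `u`, taken from the complement of `W + J W` and
spanning modulo `W` an `H`-invariant subspace, yields a longer flag: the new rows vanish in the old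
columns, so only the new diagonal block matters for the quasi-triangular shape. -/
theorem IsSchurFlag.extend {J H : V →ₗ[ℝ] V} {k : ℕ} {q : ℕ → V}
    (hJ : ∀ x y, ⟪J x, y⟫_ℝ = -⟪x, J y⟫_ℝ)
    (hq : IsSchurFlag J H k q) (m : ℕ) (hm : m ≤ 2) (u : ℕ → V)
    (horth : ∀ i < m, ∀ j < m, ⟪u i, u j⟫_ℝ = if i = j then 1 else 0)
    (hiso : ∀ i < m, ∀ j < m, ⟪J (u i), u j⟫_ℝ = 0)
    (hqu : ∀ i < k, ∀ j < m, ⟪q i, u j⟫_ℝ = 0)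
    (hJqu : ∀ i < k, ∀ j < m, ⟪J (q i), u j⟫_ℝ = 0)
    (hinv : ∀ j < m, H (u j) ∈
      Submodule.span ℝ (q '' Set.Iio k) ⊔ Submodule.span ℝ (u '' Set.Iio m))
    (hdisc : m = 2 → (⟪u 0, H (u 0)⟫_ℝ - ⟪u 1, H (u 1)⟫_ℝ) ^ 2 +
      4 * ⟪u 0, H (u 1)⟫_ℝ * ⟪u 1, H (u 0)⟫_ℝ < 0) :
    ∃ qe, IsSchurFlag J H (k + m) qe := by
  set qe : ℕ → V := fun i => if i < k then q i else u (i - k) with hqe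
  have e1 : ∀ i, i < k → qe i = q i := fun i hi => by simp [hqe, hi]
  have e2 : ∀ i, qe (k + i) = u i := fun i => by simp [hqe]
  have hcases : ∀ i, i < k + m → i < k ∨ ∃ j < m, i = k + j := fun i hi => by
    by_cases h : i < k
    · exact Or.inl h
    · exact Or.inr ⟨i - k, by omega, by omega⟩
  have hs1 : q '' Set.Iio k ⊆ qe '' Set.Iio (k + m) := by
    rintro _ ⟨i, hi, rfl⟩
    exact ⟨i, by simp at hi ⊢; omega, e1 i hi⟩
  have hs2 : u '' Set.Iio m ⊆ qe '' Set.Iio (k + m) := by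
    rintro _ ⟨i, hi, rfl⟩
    exact ⟨k + i, by simp at hi ⊢; omega, e2 i⟩
  -- The old span is `H`-invariant, so new rows vanish in old columns.
  have hnew : ∀ i < m, ∀ j < k, ⟪qe (k + i), H (qe j)⟫_ℝ = 0 := by
    intro i hi j hj
    rw [e1 j hj, e2]
    refine inner_eq_zero_of_mem_span (hq.inv j hj) ?_
    rintro _ ⟨l, hl, rfl⟩
    rw [real_inner_comm]
    exact hqu l hl i hi
  refine ⟨qe, ?_, ?_, ?_, ?_, ?_, ?_⟩
  · intro i hi0 j hj0
    rcases hcases i hi0 with hi | ⟨i, hi, rfl⟩ <;> rcases hcases j hj0 with hj | ⟨j, hj, rfl⟩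
    · rw [e1 i hi, e1 j hj, hq.orth i hi j hj]
    · rw [e1 i hi, e2, hqu i hi j hj, if_neg (by omega)]
    · rw [e1 j hj, e2, real_inner_comm, hqu j hj i hi, if_neg (by omega)]
    · rw [e2, e2, horth i hi j hj]; simp
  · intro i hi0 j hj0
    rcases hcases i hi0 with hi | ⟨i, hi, rfl⟩ <;> rcases hcases j hj0 with hj | ⟨j, hj, rfl⟩
    · rw [e1 i hi, e1 j hj, hq.iso i hi j hj]
    · rw [e1 i hi, e2, hJqu i hi j hj]
    · rw [e1 j hj, e2, hJ, real_inner_comm, hJqu j hj i hi, neg_zero]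
    · rw [e2, e2, hiso i hi j hj]
  · intro j hj0
    rcases hcases j hj0 with hj | ⟨j, hj, rfl⟩
    · rw [e1 j hj]
      exact Submodule.span_mono hs1 (hq.inv j hj)
    · rw [e2]
      have hle : Submodule.span ℝ (q '' Set.Iio k) ⊔ Submodule.span ℝ (u '' Set.Iio m) ≤
          Submodule.span ℝ (qe '' Set.Iio (k + m)) :=
        sup_le (Submodule.span_mono hs1) (Submodule.span_mono hs2)
      exact hle (hinv j hj)
  · intro i hi0 j hj0 hij
    rcases hcases i hi0 with hi | ⟨i, hi, rfl⟩
    · rw [e1 i hi, e1 j (by omega)]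
      exact hq.hess i hi j (by omega) hij
    · exact hnew i hi j (by omega)
  · intro i hi
    rcases hcases _ hi with h | ⟨j, hj, h⟩
    · rw [e1 _ h, e1 i (by omega), e1 (i + 1) (by omega)]
      exact hq.sub i h
    · intro _
      rw [h]
      exact hnew j hj (i + 1) (by
        by_contra hcon
        have : i + 1 = k := by omega
        have h0 := hnew 0 (by omega) i (by omega)
        subst this
        simp_all)
  · intro i hi hne
    rcases hcases _ hi with h | ⟨j, hj, h⟩
    · rw [e1 _ h, e1 i (by omega)] at hne ⊢
      exact hq.disc i h hne
    · by_cases hik : i < k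
      · exact absurd (by rw [h]; exact hnew j hj i hik) hne
      · have hik : i = k := by omega
        subst hik
        have := hdisc (by omega)
        rw [e2 1, show qe i = u 0 from e2 0]
        exact this


/-- These vectors are the columns of the orthogonal-symplectic matrix; their orthonormality also
bounds the length of a flag by half the dimension. -/
theorem IsSchurFlag.orthonormal {J H : V →ₗ[ℝ] V} {k : ℕ} {q : ℕ → V}
    (hJ : ∀ x y, ⟪J x, y⟫_ℝ = -⟪x, J y⟫_ℝ) (hJ2 : ∀ x, J (J x) = -x)
    (hq : IsSchurFlag J H k q) :
    Orthonormal ℝ (Sum.elim (fun i : Fin k => q i) (fun i : Fin k => -J (q i))) := by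
  rw [orthonormal_iff_ite]
  rintro (i | i) (j | j)
  · simp [hq.orth i i.2 j j.2, Fin.ext_iff]
  · have := hq.iso j j.2 i i.2
    rw [real_inner_comm] at this
    simp [this]
  · simp [hq.iso i i.2 j j.2]
  · simp [hJ, hJ2, hq.orth i i.2 j j.2, Fin.ext_iff]

/-- A flag shorter than half the dimension can be extended. The hypothesis `heig` says that `H` has
no eigenvalue `±ib` with `b ≠ 0`. -/
theorem IsSchurFlag.step [FiniteDimensional ℝ V] {J H : V →ₗ[ℝ] V} {n k : ℕ} {q : ℕ → V}
    (hdim : Module.finrank ℝ V = 2 * n)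
    (hJ : ∀ x y, ⟪J x, y⟫_ℝ = -⟪x, J y⟫_ℝ)
    (hH : ∀ x y, ⟪J (H x), y⟫_ℝ = -⟪J x, H y⟫_ℝ)
    (heig : ∀ b : ℝ, b ≠ 0 → ∀ z, H (H z) + b ^ 2 • z = 0 → z = 0)
    (hq : IsSchurFlag J H k q) (hk : k < n) :
    ∃ m qe, 0 < m ∧ IsSchurFlag J H (k + m) qe := by
  have hJself : ∀ x, ⟪J x, x⟫_ℝ = 0 := by
    intro x
    have := hJ x x
    rw [real_inner_comm x (J x)] at this
    rw [real_inner_comm]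
    linarith
  set W := Submodule.span ℝ (q '' Set.Iio k) with hW
  have hqW : ∀ i < k, q i ∈ W := fun i hi => Submodule.subset_span ⟨i, hi, rfl⟩
  have hHW : ∀ w ∈ W, H w ∈ W := by
    intro w hw
    have : W ≤ W.comap H := by
      rw [hW, Submodule.span_le]
      rintro _ ⟨i, hi, rfl⟩
      exact hq.inv i hi
    exact this hw
  let f : Fin k ⊕ Fin k → V := Sum.elim (fun i => q i) (fun i => J (q i))
  let M : Submodule ℝ V := (Submodule.span ℝ (Set.range f))ᗮ
  have hM : ∀ x, x ∈ M ↔ (∀ i < k, ⟪q i, x⟫_ℝ = 0) ∧ (∀ i < k, ⟪J (q i), x⟫_ℝ = 0) := by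
    intro x
    constructor
    · intro hx
      have h := (Submodule.mem_orthogonal _ _).1 hx
      exact ⟨fun i hi => h _ (Submodule.subset_span ⟨Sum.inl ⟨i, hi⟩, rfl⟩),
        fun i hi => h _ (Submodule.subset_span ⟨Sum.inr ⟨i, hi⟩, rfl⟩)⟩
    · rintro ⟨h1, h2⟩
      refine (Submodule.mem_orthogonal _ _).2 fun u hu => ?_
      rw [real_inner_comm]
      refine inner_eq_zero_of_mem_span hu ?_
      rintro _ ⟨i | i, rfl⟩
      · rw [real_inner_comm]; exact h1 i i.2
      · rw [real_inner_comm]; exact h2 i i.2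
  have hMW : ∀ x ∈ M, ∀ w ∈ W, ⟪x, w⟫_ℝ = 0 := by
    intro x hx w hw
    refine inner_eq_zero_of_mem_span hw ?_
    rintro _ ⟨i, hi, rfl⟩
    rw [real_inner_comm]
    exact ((hM x).1 hx).1 i hi
  have hMJW : ∀ x ∈ M, ∀ w ∈ W, ⟪J x, w⟫_ℝ = 0 := by
    intro x hx w hw
    refine inner_eq_zero_of_mem_span hw ?_
    rintro _ ⟨i, hi, rfl⟩
    rw [hJ, real_inner_comm, ((hM x).1 hx).2 i hi, neg_zero]
  have hMnt : Nontrivial M := by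
    have h1 := Submodule.finrank_add_finrank_orthogonal (Submodule.span ℝ (Set.range f))
    have h2 : Module.finrank ℝ (Submodule.span ℝ (Set.range f)) ≤ k + k := by
      have := finrank_range_le_card (R := ℝ) f
      simpa [Set.finrank] using this
    apply Module.nontrivial_of_finrank_pos (R := ℝ)
    change 0 < Module.finrank ℝ ↥(Submodule.span ℝ (Set.range f))ᗮ
    omega
  -- The compression of `H` to `M`; on `M` it differs from `H` only by vectors of `W`.
  let T : V →ₗ[ℝ] V := H - ∑ i ∈ Finset.range k,
    ((innerₛₗ ℝ (q i)).comp H).smulRight (q i)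
  have hT : ∀ x, T x = H x - ∑ i ∈ Finset.range k, ⟪q i, H x⟫_ℝ • q i := by
    intro x
    simp [T, LinearMap.sum_apply]
  have hTW : ∀ x, H x - T x ∈ W := by
    intro x
    rw [hT, sub_sub_cancel]
    exact Submodule.sum_mem _ fun i hi => W.smul_mem _ (hqW i (Finset.mem_range.1 hi))
  have hTM : ∀ x ∈ M, T x ∈ M := by
    intro x hx
    refine (hM _).2 ⟨fun i hi => ?_, fun i hi => ?_⟩
    · rw [hT, inner_sub_right, inner_sum, Finset.sum_eq_single i]
      · rw [inner_smul_right, hq.orth i hi i hi]; simp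
      · intro j hj hji
        rw [inner_smul_right, hq.orth i hi j (Finset.mem_range.1 hj), if_neg hji.symm, mul_zero]
      · intro h; exact absurd (Finset.mem_range.2 hi) h
    · rw [hT, inner_sub_right, inner_sum, Finset.sum_eq_zero, sub_zero]
      · have := hH (q i) x
        have h2 := hMJW x hx _ (hq.inv i hi)
        rw [hJ, real_inner_comm, ] at h2
        linarith
      · intro j hj
        rw [inner_smul_right, hq.iso i hi j (Finset.mem_range.1 hj), mul_zero]
  have hskew : ∀ x ∈ M, ∀ y ∈ M, ⟪J (T x), y⟫_ℝ = -⟪J x, T y⟫_ℝ := by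
    intro x hx y hy
    have h1 := hMJW x hx _ (hTW y)
    have h2 := hMJW y hy _ (hTW x)
    have h3 := hH x y
    rw [inner_sub_right] at h1 h2
    rw [hJ y, hJ y, real_inner_comm, real_inner_comm (J (T x)) y] at h2
    linarith
  rcases exists_real_or_complex_eigenvector (T.restrict hTM) with
    ⟨a, ⟨x, hx⟩, hx0, hTx⟩ | ⟨a, b, ⟨x, hx⟩, ⟨y, hy⟩, hb, hx0, hTx, hTy⟩
  · have hTx : T x = a • x := congrArg Subtype.val hTx
    have hx0 : x ≠ 0 := fun h => hx0 (Subtype.ext h)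
    have hnx : ‖x‖ ≠ 0 := norm_ne_zero_iff.2 hx0
    refine ⟨1, ?_⟩
    have huM : ‖x‖⁻¹ • x ∈ M := M.smul_mem _ hx
    obtain ⟨qe, hqe⟩ := hq.extend hJ 1 (by norm_num) (fun _ => ‖x‖⁻¹ • x)
      (by
        intro i hi j hj
        rw [if_pos (by omega), inner_smul_left, inner_smul_right, real_inner_self_eq_norm_sq]
        simp; field_simp)
      (fun _ _ _ _ => hJself _)
      (fun i hi _ _ => ((hM _).1 huM).1 i hi)
      (fun i hi _ _ => ((hM _).1 huM).2 i hi)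
      (by
        intro j hj
        have : H (‖x‖⁻¹ • x) = ‖x‖⁻¹ • (H x - T x) + a • (‖x‖⁻¹ • x) := by
          rw [hTx, map_smul]; module
        rw [this]
        exact Submodule.add_mem_sup (W.smul_mem _ (hTW x))
          (Submodule.smul_mem _ _ (Submodule.subset_span ⟨0, by simp, rfl⟩)))
      (by norm_num)
    exact ⟨qe, one_pos, hqe⟩
  · have hTx : T x = a • x - b • y := congrArg Subtype.val hTx
    have hTy : T y = b • x + a • y := congrArg Subtype.val hTy
    have hx0 : x ≠ 0 := fun h => hx0 (Subtype.ext h)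
    -- Otherwise `H² + b²` would be injective on `V`, bijective on `W`, and map `x ∉ W` into `W`.
    have ha : a ≠ 0 := by
      rintro rfl
      let A : V →ₗ[ℝ] V := H * H + b ^ 2 • 1
      have hA : ∀ z, A z = H (H z) + b ^ 2 • z := fun z => rfl
      have hinj : Function.Injective A :=
        (injective_iff_map_eq_zero A).2 fun z hz => heig b hb z hz
      have hAW : ∀ w ∈ W, A w ∈ W := fun w hw =>
        W.add_mem (hHW _ (hHW _ hw)) (W.smul_mem _ hw)
      have hsurj : Function.Surjective (A.restrict hAW) := by
        rw [← LinearMap.injective_iff_surjective]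
        intro u v huv
        exact Subtype.ext (hinj (congrArg Subtype.val huv))
      have hAx : A x ∈ W := by
        have : A x = H (H x - T x) - b • (H y - T y) := by
          rw [hA, map_sub, hTx, hTy]
          simp only [map_sub, map_smul]
          module
        rw [this]
        exact W.sub_mem (hHW _ (hTW x)) (W.smul_mem _ (hTW y))
      obtain ⟨⟨w, hw⟩, hwx⟩ := hsurj ⟨A x, hAx⟩
      have hwx : w = x := hinj (congrArg Subtype.val hwx)
      subst hwx
      exact hx0 (inner_self_eq_zero.1 (hMW w hx w hw))
    have hxy : ⟪J x, y⟫_ℝ = 0 := by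
      have h := hskew x hx y hy
      rw [hTx, hTy, map_sub, map_smul, map_smul, inner_sub_left, inner_smul_left,
        inner_smul_left, inner_add_right, inner_smul_right, inner_smul_right,
        hJself, hJself] at h
      simp at h
      have : 2 * a * ⟪J x, y⟫_ℝ = 0 := by linarith
      simpa [ha] using this
    -- Gram-Schmidt on `x, y`: `x = r u₀`, `y = t u₁ + s x`.
    set r := ‖x‖ with hr
    have hr0 : r ≠ 0 := norm_ne_zero_iff.2 hx0
    set s := ⟪x, y⟫_ℝ / r ^ 2 with hs
    set t := ‖y - s • x‖ with ht
    have ht0 : t ≠ 0 := by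
      intro h
      have hyx : y = s • x := sub_eq_zero.1 (norm_eq_zero.1 h)
      have h1 : (b * (1 + s ^ 2)) • x = 0 := by
        have h2 : T y = s • T x := by rw [← map_smul, ← hyx]
        rw [hTy, hTx, hyx] at h2
        calc (b * (1 + s ^ 2)) • x
            = (b • x + a • s • x) - s • (a • x - b • s • x) := by module
          _ = 0 := sub_eq_zero.2 h2
      rcases smul_eq_zero.1 h1 with h | h
      · rcases mul_eq_zero.1 h with h | h
        · exact hb h
        · nlinarith [sq_nonneg s]
      · exact hx0 h
    set u0 := r⁻¹ • x with hu0
    set u1 := t⁻¹ • (y - s • x) with hu1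
    have hxu : x = r • u0 := by rw [hu0, smul_smul, mul_inv_cancel₀ hr0, one_smul]
    have hyu : y = t • u1 + (s * r) • u0 := by
      rw [hu1, hu0, smul_smul, smul_smul, mul_inv_cancel₀ ht0, mul_assoc,
        mul_inv_cancel₀ hr0]; module
    have hu0M : u0 ∈ M := M.smul_mem _ hx
    have hu1M : u1 ∈ M := M.smul_mem _ (M.sub_mem hy (M.smul_mem _ hx))
    have h00 : ⟪u0, u0⟫_ℝ = 1 := by
      rw [hu0, inner_smul_left, inner_smul_right, real_inner_self_eq_norm_sq, ← hr]
      simp; field_simp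
    have h11 : ⟪u1, u1⟫_ℝ = 1 := by
      rw [hu1, inner_smul_left, inner_smul_right, real_inner_self_eq_norm_sq, ← ht]
      simp; field_simp
    have h01 : ⟪u0, u1⟫_ℝ = 0 := by
      rw [hu0, hu1, inner_smul_left, inner_smul_right, inner_sub_right, inner_smul_right,
        real_inner_self_eq_norm_sq, ← hr, hs]
      field_simp; simp
    have h10 : ⟪u1, u0⟫_ℝ = 0 := by rw [real_inner_comm]; exact h01
    have hJ01 : ⟪J u0, u1⟫_ℝ = 0 := by
      rw [hu0, hu1, map_smul, inner_smul_left, inner_smul_right, inner_sub_right,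
        inner_smul_right, hxy, hJself]
      simp
    have hJ10 : ⟪J u1, u0⟫_ℝ = 0 := by rw [hJ, real_inner_comm, hJ01, neg_zero]
    have hT0 : T u0 = (a - b * s) • u0 + (-(b * t / r)) • u1 := by
      have : T u0 = r⁻¹ • (a • x - b • y) := by rw [hu0, map_smul, hTx]
      rw [this, hyu, hxu]
      match_scalars
      · field_simp
        ring
      · field_simp
    have hT1 : T u1 = (b * r * (1 + s ^ 2) / t) • u0 + (a + s * b) • u1 := by
      have : T u1 = t⁻¹ • (b • x + a • y - s • (a • x - b • y)) := by
        rw [hu1, map_smul, map_sub, map_smul, hTx, hTy]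
      rw [this, hyu, hxu]
      match_scalars <;> field_simp <;> ring
    have hHT : ∀ u ∈ M, ∀ z, ⟪u, H z⟫_ℝ = ⟪u, T z⟫_ℝ := by
      intro u hu z
      have := hMW u hu _ (hTW z)
      rw [inner_sub_right] at this
      linarith
    let u : ℕ → V := fun i => if i = 0 then u0 else u1
    have hu0' : u 0 = u0 := rfl
    have hu1' : u 1 = u1 := rfl
    have huM : ∀ i, u i ∈ M := fun i => by
      by_cases hi : i = 0
      · simpa [u, hi] using hu0M
      · simpa [u, hi] using hu1M
    have hm0 : u0 ∈ Submodule.span ℝ (u '' Set.Iio 2) :=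
      Submodule.subset_span ⟨0, by simp, rfl⟩
    have hm1 : u1 ∈ Submodule.span ℝ (u '' Set.Iio 2) :=
      Submodule.subset_span ⟨1, by simp, rfl⟩
    refine ⟨2, ?_⟩
    obtain ⟨qe, hqe⟩ := hq.extend hJ 2 le_rfl u
      (by
        intro i hi j hj
        interval_cases i <;> interval_cases j
        exacts [h00, h01, h10, h11])
      (by
        intro i hi j hj
        interval_cases i <;> interval_cases j <;> simp [hu0', hu1', hJself, hJ01, hJ10])
      (fun i hi j _ => ((hM _).1 (huM j)).1 i hi)
      (fun i hi j _ => ((hM _).1 (huM j)).2 i hi)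
      (by
        intro j hj
        rw [show H (u j) = (H (u j) - T (u j)) + T (u j) by abel]
        refine Submodule.add_mem_sup (hTW _) ?_
        interval_cases j
        · rw [hu0', hT0]
          exact Submodule.add_mem _ (Submodule.smul_mem _ _ hm0) (Submodule.smul_mem _ _ hm1)
        · rw [hu1', hT1]
          exact Submodule.add_mem _ (Submodule.smul_mem _ _ hm0) (Submodule.smul_mem _ _ hm1))
      (by
        intro _
        rw [hu0', hu1', hHT _ hu0M, hHT _ hu1M, hHT _ hu0M, hHT _ hu1M, hT0, hT1]
        simp only [inner_add_right, inner_smul_right, h00, h01, h10, h11]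
        have : 0 < b ^ 2 := by positivity
        have e : (-(b * t / r)) * (b * r * (1 + s ^ 2) / t) = -(b ^ 2 * (1 + s ^ 2)) := by
          field_simp
        nlinarith)
    exact ⟨qe, two_pos, hqe⟩

theorem exists_isSchurFlag [FiniteDimensional ℝ V] {J H : V →ₗ[ℝ] V} {n : ℕ}
    (hdim : Module.finrank ℝ V = 2 * n)
    (hJ : ∀ x y, ⟪J x, y⟫_ℝ = -⟪x, J y⟫_ℝ) (hJ2 : ∀ x, J (J x) = -x)
    (hH : ∀ x y, ⟪J (H x), y⟫_ℝ = -⟪J x, H y⟫_ℝ)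
    (heig : ∀ b : ℝ, b ≠ 0 → ∀ z, H (H z) + b ^ 2 • z = 0 → z = 0) :
    ∃ q, IsSchurFlag J H n q := by
  classical
  have hle : ∀ k, (∃ q, IsSchurFlag J H k q) → k ≤ n := by
    rintro k ⟨q, hq⟩
    have := (hq.orthonormal hJ hJ2).linearIndependent.fintype_card_le_finrank
    simp [hdim] at this
    omega
  have h0 : ∃ q, IsSchurFlag J H 0 q :=
    ⟨fun _ => 0, by constructor <;> simp⟩
  have hspec := Nat.findGreatest_spec (P := fun k => ∃ q, IsSchurFlag J H k q) (Nat.zero_le n) h0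
  set k := Nat.findGreatest (fun k => ∃ q, IsSchurFlag J H k q) n with hk
  obtain ⟨q, hq⟩ := hspec
  rcases (hle k ⟨q, hq⟩).lt_or_eq with hlt | heq
  · obtain ⟨m, qe, hm, hqe⟩ := hq.step hdim hJ hH heig hlt
    have := Nat.le_findGreatest (P := fun k => ∃ q, IsSchurFlag J H k q) (hle _ ⟨qe, hqe⟩) ⟨qe, hqe⟩
    omega
  · exact heq ▸ ⟨q, hq⟩

end

/-! ### Matrices -/

/-- Over `ℂ`, `H² + b²` is the product of `ib - H` and `-ib - H`, so a nonzero vector in its kernel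
makes `ib` or `-ib` a root of the characteristic polynomial. -/
theorem eq_zero_of_sq_add_sq {ι : Type*} [Fintype ι] [DecidableEq ι] (H : Matrix ι ι ℝ)
    (heig : ∀ μ : ℂ, (H.charpoly.map (algebraMap ℝ ℂ)).IsRoot μ → μ.re = 0 → μ = 0)
    (b : ℝ) (hb : b ≠ 0) (z : ι → ℝ) (hz : H *ᵥ (H *ᵥ z) + b ^ 2 • z = 0) : z = 0 := by
  by_contra hz0
  have hdet : (H * H + b ^ 2 • (1 : Matrix ι ι ℝ)).det = 0 := by
    refine Matrix.exists_mulVec_eq_zero_iff.1 ⟨z, hz0, ?_⟩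
    rw [Matrix.add_mulVec, ← Matrix.mulVec_mulVec, Matrix.smul_mulVec, Matrix.one_mulVec, hz]
  set HC : Matrix ι ι ℂ := H.map (algebraMap ℝ ℂ) with hHC
  have hfac : (H * H + b ^ 2 • (1 : Matrix ι ι ℝ)).map (algebraMap ℝ ℂ) =
      (Matrix.scalar ι (b * Complex.I) - HC) * (Matrix.scalar ι (-(b * Complex.I)) - HC) := by
    have h1 : (H * H + b ^ 2 • (1 : Matrix ι ι ℝ)).map (algebraMap ℝ ℂ) =
        HC * HC + ((b : ℂ) ^ 2) • 1 := by
      rw [Matrix.map_add _ (map_add _), Matrix.map_mul]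
      congr 1
      ext i j
      by_cases h : i = j <;> simp [h]
    rw [h1, Matrix.scalar_apply, Matrix.scalar_apply, ← Matrix.smul_one_eq_diagonal,
      ← Matrix.smul_one_eq_diagonal]
    have h2 : (b : ℂ) ^ 2 = -((b * Complex.I) * (b * Complex.I)) := by
      linear_combination ((b : ℂ) ^ 2) * Complex.I_sq
    rw [h2]
    generalize (b : ℂ) * Complex.I = c
    simp only [sub_mul, mul_sub, smul_mul_assoc, mul_smul_comm, one_mul, mul_one]
    module
  have hdetC : (Matrix.scalar ι (b * Complex.I) - HC).det *
      (Matrix.scalar ι (-(b * Complex.I)) - HC).det = 0 := by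
    rw [← Matrix.det_mul, ← hfac]
    have := (RingHom.map_det (algebraMap ℝ ℂ) (H * H + b ^ 2 • (1 : Matrix ι ι ℝ))).symm
    rw [hdet, map_zero] at this
    exact this
  have hroot : ∀ μ : ℂ, (Matrix.scalar ι μ - HC).det = 0 →
      (H.charpoly.map (algebraMap ℝ ℂ)).IsRoot μ := by
    intro μ h
    rw [← Matrix.charpoly_map, IsRoot.def, Matrix.eval_charpoly]
    exact h
  rcases mul_eq_zero.1 hdetC with h | h
  · have := heig _ (hroot _ h) (by simp)
    simp [hb] at this
  · have := heig _ (hroot _ h) (by simp)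
    simp [hb] at this

theorem hamiltonian_real_Schur_form (n : ℕ) (hn : 1 ≤ n)
    (J H : Matrix (Fin n ⊕ Fin n) (Fin n ⊕ Fin n) ℝ)
    (hJ : J = Matrix.fromBlocks 0 1 (-1) 0)
    (hH : (H * J)ᵀ = H * J)
    (heig : ∀ μ : ℂ, (H.charpoly.map (algebraMap ℝ ℂ)).IsRoot μ → μ.re = 0 → μ = 0) :
    ∃ (U : Matrix (Fin n ⊕ Fin n) (Fin n ⊕ Fin n) ℝ)
      (H₁ H₂ : Matrix (Fin n) (Fin n) ℝ),
      Uᵀ * U = 1 ∧ U * J * Uᵀ = J ∧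
      Uᵀ * H * U = Matrix.fromBlocks H₁ H₂ 0 (-H₁ᵀ) ∧
      H₂ᵀ = H₂ ∧ QuasiUpperTriangular H₁ := by
  have hJT : Jᵀ = -J := by
    rw [hJ, Matrix.fromBlocks_transpose, Matrix.fromBlocks_neg]; simp
  have hJJ : J * J = -1 := by
    rw [hJ, Matrix.fromBlocks_multiply, ← Matrix.fromBlocks_one, Matrix.fromBlocks_neg]; simp
  have hHJ : Hᵀ * J = -(J * H) := by
    have h1 : J * Hᵀ = -(H * J) := by
      rw [← hH, Matrix.transpose_mul, hJT, Matrix.neg_mul, neg_neg]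
    have h2 : J * (J * Hᵀ) * J = -(J * H * (J * J)) := by
      rw [h1]; simp only [Matrix.mul_neg, Matrix.neg_mul, Matrix.mul_assoc]
    rw [← Matrix.mul_assoc, hJJ] at h2
    simpa using congrArg Neg.neg h2
  let E := EuclideanSpace ℝ (Fin n ⊕ Fin n)
  have hin : ∀ x y : E, ⟪x, y⟫_ℝ = x.ofLp ⬝ᵥ y.ofLp := by
    intro x y
    rw [EuclideanSpace.inner_eq_star_dotProduct, dotProduct_comm]; simp
  have hap : ∀ (A : Matrix (Fin n ⊕ Fin n) (Fin n ⊕ Fin n) ℝ) (x : E),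
      (Matrix.toEuclideanLin A x).ofLp = A *ᵥ x.ofLp := fun A x => rfl
  have hadj : ∀ (A : Matrix (Fin n ⊕ Fin n) (Fin n ⊕ Fin n) ℝ) (x y : Fin n ⊕ Fin n → ℝ),
      (A *ᵥ x) ⬝ᵥ y = x ⬝ᵥ (Aᵀ *ᵥ y) := by
    intro A x y
    rw [Matrix.dotProduct_mulVec, Matrix.vecMul_transpose]
  have hJskew : ∀ x y : E, ⟪Matrix.toEuclideanLin J x, y⟫_ℝ =
      -⟪x, Matrix.toEuclideanLin J y⟫_ℝ := by
    intro x y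
    rw [hin, hin, hap, hap, hadj, hJT, Matrix.neg_mulVec, dotProduct_neg]
  have hJ2 : ∀ x : E, Matrix.toEuclideanLin J (Matrix.toEuclideanLin J x) = -x := by
    intro x
    apply WithLp.ofLp_injective 2
    rw [hap, hap, Matrix.mulVec_mulVec, hJJ, Matrix.neg_mulVec, Matrix.one_mulVec]
    rfl
  obtain ⟨q, hq⟩ := exists_isSchurFlag (V := E) (J := Matrix.toEuclideanLin J)
    (H := Matrix.toEuclideanLin H) (n := n)
    (by simp [E]; ring) hJskew hJ2
    (by
      intro x y
      rw [hin, hin, hap, hap, hap, hap, hadj, hadj J, hadj H, Matrix.mulVec_mulVec,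
        Matrix.mulVec_mulVec, hJT, Matrix.mul_neg, hHJ, neg_neg, Matrix.neg_mul,
        Matrix.neg_mulVec, dotProduct_neg, neg_neg])
    (by
      intro b hb z hz
      apply WithLp.ofLp_injective 2
      exact eq_zero_of_sq_add_sq H heig b hb z.ofLp (congrArg WithLp.ofLp hz))
  let g : Fin n ⊕ Fin n → E :=
    Sum.elim (fun i : Fin n => q i) (fun i : Fin n => -Matrix.toEuclideanLin J (q i))
  have hg : Orthonormal ℝ g := hq.orthonormal hJskew hJ2
  let U : Matrix (Fin n ⊕ Fin n) (Fin n ⊕ Fin n) ℝ := Matrix.of fun i j => (g j).ofLp i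
  have hUAU : ∀ (A : Matrix (Fin n ⊕ Fin n) (Fin n ⊕ Fin n) ℝ) i j,
      (Uᵀ * A * U) i j = ⟪g i, Matrix.toEuclideanLin A (g j)⟫_ℝ := by
    intro A i j
    rw [hin, hap, Matrix.mul_assoc, Matrix.mul_apply']
    rfl
  have hUU : Uᵀ * U = 1 := by
    ext i j
    have := hUAU 1 i j
    rw [Matrix.mul_one] at this
    rw [this, Matrix.one_apply, ← orthonormal_iff_ite.1 hg i j, hin, hin, hap, Matrix.one_mulVec]
  have hUU' : U * Uᵀ = 1 := mul_eq_one_comm.1 hUU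
  have hUJ : U * J = J * U := by
    have hJg : ∀ j i, (J * U) i j = (Matrix.toEuclideanLin J (g j)).ofLp i := by
      intro j i
      rw [hap, Matrix.mul_apply']; rfl
    ext i j
    rw [hJg, hJ, Matrix.mul_apply, Fintype.sum_sum_type]
    rcases j with j | j
    · simp [Matrix.one_apply, U, g, ← hJ]
    · have := hJ2 (q j)
      simp [Matrix.one_apply, U, g, ← hJ, this]
  set A := Uᵀ * H * U with hA
  have hlow : A.toBlocks₂₁ = 0 := by
    ext i j
    change A (Sum.inr i) (Sum.inl j) = 0
    rw [hA, hUAU]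
    refine inner_eq_zero_of_mem_span (hq.inv j j.2) ?_
    rintro _ ⟨l, hl, rfl⟩
    simp [g, hq.iso i i.2 l hl]
  have hAJ : (A * J)ᵀ = A * J := by
    have : A * J = Uᵀ * (H * J) * U := by
      rw [hA, Matrix.mul_assoc, hUJ]; simp only [Matrix.mul_assoc]
    rw [this, Matrix.transpose_mul, Matrix.transpose_mul, hH, Matrix.transpose_transpose,
      ← Matrix.mul_assoc]
  have hAb : A = Matrix.fromBlocks A.toBlocks₁₁ A.toBlocks₁₂ 0 A.toBlocks₂₂ := by
    conv_lhs => rw [← Matrix.fromBlocks_toBlocks A, hlow]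
  rw [hAb, hJ, Matrix.fromBlocks_multiply, Matrix.fromBlocks_transpose] at hAJ
  obtain ⟨e1, e2, e3, e4⟩ := Matrix.fromBlocks_inj.1 hAJ
  simp at e1 e2 e3
  refine ⟨U, A.toBlocks₁₁, A.toBlocks₁₂, hUU, ?_, ?_, e1, ?_⟩
  · rw [hUJ, Matrix.mul_assoc, hUU', Matrix.mul_one]
  · rw [e3, neg_neg]; exact hAb
  · have hent : ∀ i j : Fin n, A.toBlocks₁₁ i j =
        ⟪q i, Matrix.toEuclideanLin H (q j)⟫_ℝ := fun i j => hUAU H (Sum.inl i) (Sum.inl j)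
    refine ⟨?_, ?_, ?_⟩
    · intro i j hij
      rw [hent]
      exact hq.hess i i.2 j j.2 hij
    · intro i h2
      rw [hent, hent]
      exact hq.sub i h2
    · intro i h1
      rw [hent, hent, hent, hent]
      exact hq.disc i h1
end

section
/- Let k ≥ 1 and let λ ∈ ℂ with λ ≠ 0. Then the Jordan block J_k(λ) has exactly two upper triangular square roots: the set {X ∈ ℂ^{k×k} : X is upper triangular and X² = J_k(λ)} has exactly two elements, and each of these two matrices is a polynomial in J_k(λ). -/
/-!
Since `μ ≠ 0`, Hensel lifting of a square root of `μ` along `X - C μ` gives a polynomial `q` with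
`(X - C μ) ^ k ∣ q ^ 2 - X`. The characteristic polynomial of `J = jordanBlock k μ` is
`(X - C μ) ^ k`, so by Cayley–Hamilton `Y = q(J)` satisfies `Y * Y = J`, and `Y` is upper
triangular.

Conversely, an upper triangular `Z` with `Z * Z = J` commutes with `J`, hence with `Y`, so
`(Z - Y) * (Z + Y) = 0`. Commuting with `J` also forces the diagonal of `Z` to be constant, equal to
a square root of `μ`, and likewise for `Y`. Thus one of `Z - Y`, `Z + Y` is upper triangular with
nonzero constant diagonal, hence invertible, and the other one vanishes: `Z = Y` or `Z = -Y`.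
-/

open Matrix Polynomial

/-- The `k × k` Jordan block with eigenvalue `μ`. -/
def jordanBlock (k : ℕ) (μ : ℂ) : Matrix (Fin k) (Fin k) ℂ :=
  Matrix.of fun i j => if i = j then μ else if (i : ℕ) + 1 = (j : ℕ) then 1 else 0

/-- Hensel lifting of a square root of `μ` to a square root of `X` modulo powers of `X - C μ`. -/
lemma exists_sq_sub_X_dvd (μ : ℂ) (hμ : μ ≠ 0) (k : ℕ) :
    ∃ q : ℂ[X], q.eval μ ≠ 0 ∧ (X - C μ) ^ (k + 1) ∣ q ^ 2 - X := by
  induction k with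
  | zero =>
    obtain ⟨s, hs⟩ := IsAlgClosed.exists_pow_nat_eq μ (n := 2) (by norm_num)
    refine ⟨C s, ?_, ?_⟩
    · rintro h
      rw [eval_C] at h
      exact hμ (by rw [← hs, h]; norm_num)
    · rw [zero_add, pow_one, dvd_iff_isRoot]
      simp [hs]
  | succ k ih =>
    obtain ⟨q, hq, r, hr⟩ := ih
    -- The correction `c` makes the cofactor of `(X - C μ) ^ (k + 1)` vanish at `μ`.
    set c : ℂ := -(r.eval μ) / (2 * q.eval μ) with hc
    refine ⟨q + C c * (X - C μ) ^ (k + 1), by simpa using hq, ?_⟩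
    have hroot : (X - C μ) ∣ r + 2 * C c * q + C c ^ 2 * (X - C μ) ^ (k + 1) := by
      rw [dvd_iff_isRoot]
      simp only [IsRoot, eval_add, eval_mul, eval_pow, eval_sub, eval_X, eval_C, eval_ofNat, hc]
      field_simp
      simp
    obtain ⟨t, ht⟩ := hroot
    refine ⟨t, ?_⟩
    linear_combination hr + (X - C μ) ^ (k + 1) * ht

lemma jordanBlock_blockTriangular (k : ℕ) (μ : ℂ) : (jordanBlock k μ).BlockTriangular id := by
  intro i j hij
  simp only [id, Fin.lt_def] at hij
  simp only [jordanBlock, of_apply]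
  rw [if_neg (by rintro rfl; omega), if_neg (by omega)]

lemma aeval_jordanBlock_pow (k : ℕ) (μ : ℂ) :
    aeval (jordanBlock k μ) ((X - C μ) ^ k) = 0 := by
  have h := aeval_self_charpoly (jordanBlock k μ)
  rw [charpoly_of_isUpperTriangular _ (jordanBlock_blockTriangular k μ)] at h
  simpa [jordanBlock] using h

lemma blockTriangular_aeval {k : ℕ} {A : Matrix (Fin k) (Fin k) ℂ} (hA : A.BlockTriangular id)
    (p : ℂ[X]) : (aeval A p).BlockTriangular id := by
  have hC (a : ℂ) : (algebraMap ℂ (Matrix (Fin k) (Fin k) ℂ) a).BlockTriangular id := by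
    rw [algebraMap_eq_diagonal]
    exact blockTriangular_diagonal _
  induction p using Polynomial.induction_on with
  | C a => simpa using hC a
  | add p q hp hq => simpa using hp.add hq
  | monomial n a h =>
    rw [pow_succ, ← mul_assoc, map_mul, aeval_X]
    exact h.mul hA

/-- Comparing the entries of `Z * J` and `J * Z` on the superdiagonal. -/
lemma diag_succ_of_commute {k : ℕ} {μ : ℂ} {Z : Matrix (Fin k) (Fin k) ℂ}
    (hZ : Commute Z (jordanBlock k μ)) (i j : Fin k) (hij : (i : ℕ) + 1 = j) :
    Z i i = Z j j := by
  have h := congrFun (congrFun hZ.eq i) j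
  have hne : i ≠ j := by rintro rfl; omega
  have h1 : (Z * jordanBlock k μ) i j = Z i i * 1 + Z i j * μ := by
    rw [mul_apply, Finset.sum_eq_add i j hne]
    · simp [jordanBlock, hne, hij]
    · rintro l - ⟨h1, h2⟩
      have : ¬ (l : ℕ) + 1 = j := fun h => h1 (Fin.ext (by omega))
      simp [jordanBlock, h2, this]
    all_goals simp
  have h2 : (jordanBlock k μ * Z) i j = μ * Z i j + 1 * Z j j := by
    rw [mul_apply, Finset.sum_eq_add i j hne]
    · simp [jordanBlock, hne, hij]
    · rintro l - ⟨h1, h2⟩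
      have : ¬ (i : ℕ) + 1 = l := fun h => h2 (Fin.ext (by omega))
      simp [jordanBlock, Ne.symm h1, this]
    all_goals simp
  rw [h1, h2] at h
  linear_combination h

lemma diag_eq_of_commute {k : ℕ} {μ : ℂ} {Z : Matrix (Fin k) (Fin k) ℂ}
    (hZ : Commute Z (jordanBlock k μ)) (hk : 0 < k) (i : Fin k) : Z i i = Z ⟨0, hk⟩ ⟨0, hk⟩ := by
  obtain ⟨n, hn⟩ := i
  induction n with
  | zero => rfl
  | succ n ih =>
    rw [← ih (by omega)]
    exact (diag_succ_of_commute hZ ⟨n, by omega⟩ ⟨n + 1, hn⟩ rfl).symm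

lemma diag_mul_self {k : ℕ} {Z : Matrix (Fin k) (Fin k) ℂ} (hZ : Z.BlockTriangular id)
    (i : Fin k) : (Z * Z) i i = Z i i * Z i i := by
  rw [mul_apply, Finset.sum_eq_single i]
  · intro l _ hl
    rcases lt_or_gt_of_ne hl with h | h
    · rw [hZ (show id l < id i from h), zero_mul]
    · rw [hZ (show id i < id l from h), mul_zero]
  · simp

lemma isUnit_of_blockTriangular {k : ℕ} {Z : Matrix (Fin k) (Fin k) ℂ} (hZ : Z.BlockTriangular id)
    (h : ∀ i, Z i i ≠ 0) : IsUnit Z := by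
  rw [isUnit_iff_isUnit_det, det_of_isUpperTriangular hZ, isUnit_iff_ne_zero]
  exact Finset.prod_ne_zero_iff.mpr fun i _ => h i

/-- Commuting upper triangular square roots of a Jordan block with nonzero eigenvalue agree up to
sign. -/
lemma eq_or_eq_neg_of_commute {k : ℕ} (hk : 0 < k) {μ : ℂ} (hμ : μ ≠ 0)
    {Y Z : Matrix (Fin k) (Fin k) ℂ} (hY : Y.BlockTriangular id) (hZ : Z.BlockTriangular id)
    (hYJ : Y * Y = jordanBlock k μ) (hZJ : Z * Z = jordanBlock k μ) (hc : Commute Z Y) :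
    Z = Y ∨ Z = -Y := by
  have hYd := diag_eq_of_commute (hYJ ▸ (Commute.refl Y).mul_right (Commute.refl Y)) hk
  have hZd := diag_eq_of_commute (hZJ ▸ (Commute.refl Z).mul_right (Commute.refl Z)) hk
  set z : Fin k := ⟨0, hk⟩
  have hy : Y z z * Y z z = μ := by rw [← diag_mul_self hY, hYJ]; simp [jordanBlock]
  have hz : Z z z * Z z z = μ := by rw [← diag_mul_self hZ, hZJ]; simp [jordanBlock]
  have hy0 : Y z z ≠ 0 := fun h => hμ (by rw [← hy, h, zero_mul])
  have hprod : (Z + Y) * (Z - Y) = 0 := by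
    rw [← hc.mul_self_sub_mul_self_eq, hYJ, hZJ, sub_self]
  rcases mul_self_eq_mul_self_iff.mp (hz.trans hy.symm) with h | h
  · left
    have hu : IsUnit (Z + Y) := isUnit_of_blockTriangular (hZ.add hY) fun i => by
      rw [Matrix.add_apply, hYd, hZd, h, ← two_mul]
      exact mul_ne_zero two_ne_zero hy0
    exact sub_eq_zero.mp (hu.mul_right_eq_zero.mp hprod)
  · right
    have hu : IsUnit (Z - Y) := isUnit_of_blockTriangular (hZ.sub hY) fun i => by
      rw [Matrix.sub_apply, hYd, hZd, h, ← neg_add', ← two_mul]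
      exact neg_ne_zero.mpr (mul_ne_zero two_ne_zero hy0)
    exact eq_neg_of_add_eq_zero_left (hu.mul_left_eq_zero.mp hprod)

theorem jordanBlock_two_upper_triangular_sqrts (k : ℕ) (hk : 1 ≤ k) (μ : ℂ) (hμ : μ ≠ 0) :
    ({X : Matrix (Fin k) (Fin k) ℂ |
        (∀ i j : Fin k, (j : ℕ) < (i : ℕ) → X i j = 0) ∧
        X * X = jordanBlock k μ}).ncard = 2 ∧
    ∀ X : Matrix (Fin k) (Fin k) ℂ,
      (∀ i j : Fin k, (j : ℕ) < (i : ℕ) → X i j = 0) → X * X = jordanBlock k μ →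
      ∃ p : Polynomial ℂ, X = Polynomial.aeval (jordanBlock k μ) p := by
  obtain ⟨q, hY, hYJ⟩ : ∃ q : ℂ[X], (aeval (jordanBlock k μ) q).BlockTriangular id ∧
      aeval (jordanBlock k μ) q * aeval (jordanBlock k μ) q = jordanBlock k μ := by
    obtain ⟨q, -, hq⟩ := exists_sq_sub_X_dvd μ hμ (k - 1)
    rw [Nat.sub_add_cancel hk] at hq
    refine ⟨q, blockTriangular_aeval (jordanBlock_blockTriangular k μ) q, ?_⟩
    obtain ⟨r, hr⟩ := hq
    have h := congrArg (aeval (jordanBlock k μ)) hr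
    rw [map_mul, aeval_jordanBlock_pow, zero_mul, map_sub, aeval_X, map_pow, sq] at h
    exact sub_eq_zero.mp h
  set Y := aeval (jordanBlock k μ) q
  have key (Z : Matrix (Fin k) (Fin k) ℂ) (hZ : ∀ i j : Fin k, (j : ℕ) < (i : ℕ) → Z i j = 0)
      (hZJ : Z * Z = jordanBlock k μ) : Z = Y ∨ Z = -Y := by
    refine eq_or_eq_neg_of_commute hk hμ hY (fun i j hij => hZ i j hij) hYJ hZJ ?_
    -- `Y = q(Z ^ 2)` is a polynomial in `Z`.
    have hYZ : Y = aeval Z (q.comp (X * X)) := by rw [aeval_comp, map_mul, aeval_X, hZJ]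
    have hcomm := (Commute.all X (q.comp (X * X))).map (aeval Z)
    rwa [aeval_X, ← hYZ] at hcomm
  have hYu (i j : Fin k) (hij : (j : ℕ) < (i : ℕ)) : Y i j = 0 := hY hij
  refine ⟨?_, fun Z hZ hZJ => ?_⟩
  · rw [Set.ncard_eq_two]
    refine ⟨Y, -Y, fun h => hμ ?_, ?_⟩
    · have hY0 : Y = 0 := by
        ext i j
        exact self_eq_neg.mp (congrFun (congrFun h i) j)
      have h00 := congrFun (congrFun hYJ ⟨0, hk⟩) ⟨0, hk⟩
      simpa [hY0, jordanBlock] using h00.symm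
    · ext Z
      simp only [Set.mem_ofPred_eq, Set.mem_insert_iff, Set.mem_singleton_iff]
      refine ⟨fun h => key Z h.1 h.2, ?_⟩
      rintro (rfl | rfl)
      · exact ⟨hYu, hYJ⟩
      · exact ⟨fun i j hij => by rw [Matrix.neg_apply, hYu i j hij, neg_zero], by rw [neg_mul_neg, hYJ]⟩
  · rcases key Z hZ hZJ with h | h
    · exact ⟨q, h⟩
    · exact ⟨-q, by rw [h, map_neg]⟩
end

section
/- Let k ≥ 1 and let λ ∈ ℂ with λ ≠ 0. Then the Jordan block J_k(λ) has exactly two square roots in ℂ^{k×k}: the set {X ∈ ℂ^{k×k} : X² = J_k(λ)} has exactly two elements (and these are the two upper triangular square roots of J_k(λ)). -/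
/-!
Write `J = μ + N` with `N = jordanBlock k 0` the nilpotent shift. A square root of `J` commutes
with `J`, hence with `N`. Since the zeroth row of `N ^ m` is the `m`-th standard row vector, a matrix
commuting with `N` is determined by its zeroth row, so it is a polynomial in `N`
(`exists_aeval_of_commute`); in particular it is upper triangular.

Two square roots `X = p(N)`, `Y = q(N)` thus commute with each other, and `p(0)² = μ = q(0)²`. After
replacing `Y` by `-Y` one has `p(0) = q(0) ≠ 0`, so `X + Y` is a nonzero scalar plus a nilpotent
matrix, hence invertible, and `(X - Y) (X + Y) = X² - Y² = 0` gives `X = Y`. Existence is Newton's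
method (Hensel lifting along nilpotents) for `T² - (μ + x)` in `ℂ[x] / (x ^ n)`, where `N ^ n = 0`,
starting from a complex square root of `μ`. Finally `X ≠ -X` because `J ≠ 0`.
-/

open Matrix

lemma jordanBlock_eq_add (k : ℕ) (μ : ℂ) :
    jordanBlock k μ = algebraMap ℂ _ μ + jordanBlock k 0 := by
  ext i j
  by_cases h : i = j <;> simp [jordanBlock, Matrix.algebraMap_matrix_apply, h]

lemma jordanBlock_zero_pow_apply (k m : ℕ) (i j : Fin k) :
    (jordanBlock k 0 ^ m) i j = if (i : ℕ) + m = j then 1 else 0 := by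
  induction m generalizing j with
  | zero => simp [Matrix.one_apply, Fin.ext_iff]
  | succ m ih =>
    have hN : ∀ l : Fin k, jordanBlock k 0 l j = if (l : ℕ) + 1 = j then 1 else 0 := by
      intro l
      by_cases h : l = j <;> simp [jordanBlock, h]
    simp only [pow_succ, Matrix.mul_apply, ih, hN]
    split_ifs with h
    · rw [Finset.sum_eq_single (⟨i + m, by omega⟩ : Fin k)]
      · simp; omega
      · intro b _ hb
        rw [if_neg (fun h' => hb (Fin.ext h'.symm)), zero_mul]
      · simp
    · refine Finset.sum_eq_zero fun l _ => ?_
      split_ifs <;> first | omega | simp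

lemma jordanBlock_zero_nilpotent (k : ℕ) : IsNilpotent (jordanBlock k 0) := by
  refine ⟨k, ?_⟩
  ext i j
  rw [jordanBlock_zero_pow_apply, if_neg (by omega)]
  rfl

/-- A matrix commuting with the nilpotent shift is determined by its zeroth row. -/
lemma eq_zero_of_commute_of_row {k : ℕ} (hk : 0 < k) {Z : Matrix (Fin k) (Fin k) ℂ}
    (hZ : Commute Z (jordanBlock k 0)) (h0 : ∀ j, Z ⟨0, hk⟩ j = 0) : Z = 0 := by
  ext i j
  -- Row `i` of `Z` is row `0` of `N ^ i * Z = Z * N ^ i`.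
  have h := congrFun (congrFun (hZ.pow_right (i : ℕ)).eq ⟨0, hk⟩) j
  simp only [Matrix.mul_apply, h0, zero_mul, Finset.sum_const_zero,
    jordanBlock_zero_pow_apply, zero_add, ite_mul, one_mul] at h
  simpa [← Fin.ext_iff] using h.symm

open Polynomial in
lemma exists_aeval_of_commute {k : ℕ} (hk : 0 < k) {X : Matrix (Fin k) (Fin k) ℂ}
    (hX : Commute X (jordanBlock k 0)) : ∃ p : ℂ[X], X = aeval (jordanBlock k 0) p := by
  refine ⟨∑ m : Fin k, C (X ⟨0, hk⟩ m) * Polynomial.X ^ (m : ℕ), ?_⟩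
  rw [← sub_eq_zero]
  refine eq_zero_of_commute_of_row hk (hX.sub_left ?_) fun j => ?_
  · have := Commute.map (Commute.all (∑ m : Fin k, C (X ⟨0, hk⟩ m) * Polynomial.X ^ (m : ℕ))
      (Polynomial.X : ℂ[X])) (aeval (jordanBlock k 0))
    rwa [aeval_X] at this
  · simp [Matrix.sum_apply, ← Algebra.smul_def, jordanBlock_zero_pow_apply, ← Fin.ext_iff]

open Polynomial in
lemma aeval_jordanBlock_upper {k : ℕ} (p : ℂ[X]) (i j : Fin k) (hij : (j : ℕ) < i) :
    aeval (jordanBlock k 0) p i j = 0 := by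
  rw [aeval_eq_sum_range, Matrix.sum_apply]
  refine Finset.sum_eq_zero fun m _ => ?_
  rw [Matrix.smul_apply, jordanBlock_zero_pow_apply, if_neg (by omega), smul_zero]

open Polynomial in
lemma aeval_sub_coeff_zero_nilpotent (k : ℕ) (p : ℂ[X]) :
    IsNilpotent (aeval (jordanBlock k 0) p - algebraMap ℂ _ (p.coeff 0)) := by
  have h : aeval (jordanBlock k 0) p - algebraMap ℂ _ (p.coeff 0)
      = aeval (jordanBlock k 0) (p.divX) * jordanBlock k 0 := by
    conv_lhs => rw [← divX_mul_X_add p]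
    simp
  have hc := Commute.map (Commute.all p.divX (Polynomial.X : ℂ[X])) (aeval (jordanBlock k 0))
  rw [aeval_X] at hc
  rw [h]
  exact hc.isNilpotent_mul_left (jordanBlock_zero_nilpotent k)

lemma commute_of_sq {k : ℕ} {μ : ℂ} {X : Matrix (Fin k) (Fin k) ℂ}
    (hX : X * X = jordanBlock k μ) : Commute X (jordanBlock k 0) := by
  have h : jordanBlock k 0 = X * X - algebraMap ℂ _ μ := by
    rw [hX, jordanBlock_eq_add k μ]; simp
  rw [h]
  exact ((Commute.refl X).mul_right (Commute.refl X)).sub_right (Algebra.commutes μ X).symm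

open Polynomial in
lemma coeff_zero_sq {k : ℕ} (hk : 0 < k) {μ : ℂ} (p : ℂ[X])
    (hp : aeval (jordanBlock k 0) p * aeval (jordanBlock k 0) p = jordanBlock k μ) :
    p.coeff 0 ^ 2 = μ := by
  have : Nonempty (Fin k) := ⟨⟨0, hk⟩⟩
  -- `p² - μ - x` vanishes at `N`, so its constant coefficient is a nilpotent scalar.
  have h := aeval_sub_coeff_zero_nilpotent k (p * p - C μ - Polynomial.X)
  have h0 : aeval (jordanBlock k 0) (p * p - C μ - Polynomial.X) = 0 := by
    simp [hp, jordanBlock_eq_add k μ]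
  rw [h0, zero_sub, isNilpotent_neg_iff,
    IsNilpotent.map_iff (algebraMap ℂ (Matrix (Fin k) (Fin k) ℂ)).injective] at h
  have h' := h.eq_zero
  simp [mul_coeff_zero] at h'
  linear_combination h'

open Polynomial in
/-- Square roots `p(N)`, `q(N)` of the Jordan block with the same nonzero diagonal entry
`p(0) = q(0)` coincide. -/
lemma sqrt_unique {k : ℕ} {μ : ℂ} (p q : ℂ[X])
    (hp : aeval (jordanBlock k 0) p * aeval (jordanBlock k 0) p = jordanBlock k μ)
    (hq : aeval (jordanBlock k 0) q * aeval (jordanBlock k 0) q = jordanBlock k μ)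
    (h0 : p.coeff 0 ≠ 0) (h : p.coeff 0 = q.coeff 0) :
    aeval (jordanBlock k 0) p = aeval (jordanBlock k 0) q := by
  have hn := aeval_sub_coeff_zero_nilpotent k (p + q)
  have hs : (p + q).coeff 0 ≠ 0 := by
    rw [coeff_add, ← h, ← two_mul]
    exact mul_ne_zero two_ne_zero h0
  have hu : IsUnit (aeval (jordanBlock k 0) (p + q)) := by
    have := hn.isUnit_add_left_of_commute
      ((IsUnit.mk0 _ hs).map (algebraMap ℂ (Matrix (Fin k) (Fin k) ℂ)))
      (Algebra.commutes _ _).symm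
    simpa using this
  have hz : aeval (jordanBlock k 0) (p - q) * aeval (jordanBlock k 0) (p + q) = 0 := by
    rw [← map_mul, show (p - q) * (p + q) = p * p - q * q by ring, map_sub, map_mul, map_mul,
      hp, hq, sub_self]
  rw [hu.mul_left_eq_zero, map_sub, sub_eq_zero] at hz
  exact hz

open Polynomial in
lemma exists_sqrt_s10 (k : ℕ) {μ : ℂ} (hμ : μ ≠ 0) :
    ∃ X : Matrix (Fin k) (Fin k) ℂ, X * X = jordanBlock k μ := by
  obtain ⟨s, hs⟩ := IsAlgClosed.exists_pow_nat_eq μ (n := 2) two_pos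
  have hs0 : s ≠ 0 := by rintro rfl; exact hμ (by simpa using hs.symm)
  obtain ⟨n, hN⟩ := jordanBlock_zero_nilpotent k
  let S := AdjoinRoot (Polynomial.X ^ n : ℂ[X])
  let x : S := AdjoinRoot.root _
  have hx : IsNilpotent x := ⟨n, by
    have := AdjoinRoot.eval₂_root (Polynomial.X ^ n : ℂ[X])
    simpa using this⟩
  let P : S[X] := Polynomial.X ^ 2 - C (algebraMap ℂ S μ + x)
  obtain ⟨r, ⟨-, hr⟩, -⟩ := existsUnique_nilpotent_sub_and_aeval_eq_zero
    (P := P) (x := algebraMap ℂ S s)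
    (by
      have : aeval (algebraMap ℂ S s) P = -x := by
        simp [P, ← hs]
      rw [this]
      exact hx.neg)
    (by
      have : aeval (algebraMap ℂ S s) (derivative P) = algebraMap ℂ S (2 * s) := by
        simp [P, ← one_add_one_eq_two]
      rw [this]
      exact (IsUnit.mk0 _ (mul_ne_zero two_ne_zero hs0)).map _)
  have hr' : r * r = algebraMap ℂ S μ + x := by
    have : r ^ 2 - (algebraMap ℂ S μ + x) = 0 := by simpa [P] using hr
    linear_combination this
  let φ : S →ₐ[ℂ] Matrix (Fin k) (Fin k) ℂ :=
    Ideal.Quotient.liftₐ _ (aeval (jordanBlock k 0)) (by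
      intro a ha
      obtain ⟨b, rfl⟩ := Ideal.mem_span_singleton.1 ha
      simp [hN])
  have hφ : φ x = jordanBlock k 0 := by
    have : φ x = aeval (jordanBlock k 0) (Polynomial.X : ℂ[X]) := rfl
    rw [this, aeval_X]
  refine ⟨φ r, ?_⟩
  rw [← map_mul, hr', map_add, hφ, AlgHom.commutes, ← jordanBlock_eq_add]

theorem jordanBlock_two_sqrts (k : ℕ) (hk : 1 ≤ k) (μ : ℂ) (hμ : μ ≠ 0) :
    ({X : Matrix (Fin k) (Fin k) ℂ | X * X = jordanBlock k μ}).ncard = 2 ∧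
    ∀ X : Matrix (Fin k) (Fin k) ℂ, X * X = jordanBlock k μ →
      ∀ i j : Fin k, (j : ℕ) < (i : ℕ) → X i j = 0 := by
  constructor
  · obtain ⟨X, hX⟩ := exists_sqrt_s10 k hμ
    rw [Set.ncard_eq_two]
    refine ⟨X, -X, fun h => ?_, ?_⟩
    · have hX0 : X = 0 := by
        ext i j
        exact self_eq_neg.1 (congrFun (congrFun h i) j)
      have := congrFun (congrFun hX ⟨0, hk⟩) ⟨0, hk⟩
      simp [hX0, jordanBlock] at this
      exact hμ this.symm
    · ext Y
      simp only [Set.mem_ofPred_eq, Set.mem_insert_iff, Set.mem_singleton_iff]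
      constructor
      · intro hY
        obtain ⟨p, rfl⟩ := exists_aeval_of_commute hk (commute_of_sq hX)
        obtain ⟨q, rfl⟩ := exists_aeval_of_commute hk (commute_of_sq hY)
        have hp := coeff_zero_sq hk p hX
        have hq := coeff_zero_sq hk q hY
        have hq0 : q.coeff 0 ≠ 0 := by
          intro h
          rw [h] at hq
          exact hμ (by simpa using hq.symm)
        rcases sq_eq_sq_iff_eq_or_eq_neg.1 (hq.trans hp.symm) with h | h
        · exact Or.inl (sqrt_unique q p hY hX hq0 h)
        · right
          rw [← map_neg]
          exact sqrt_unique q (-p) hY (by simpa using hX) hq0 (by simpa using h)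
      · rintro (rfl | rfl)
        · exact hX
        · simpa using hX
  · intro X hX i j hij
    obtain ⟨p, rfl⟩ := exists_aeval_of_commute hk (commute_of_sq hX)
    exact aeval_jordanBlock_upper p i j hij
end

section
/- Let k ≥ 1 and let λ ∈ ℝ with λ ≠ 0, and regard the Jordan block J_k(λ) as a complex matrix. If λ > 0, then every upper triangular X ∈ ℂ^{k×k} with X² = J_k(λ) has all entries real. If λ < 0, then every upper triangular X ∈ ℂ^{k×k} with X² = J_k(λ) has all entries purely imaginary (every entry has real part 0). -/
/-!
The diagonal entries of an upper triangular square root `X` of `J_k(l)` square to `l`, and the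
superdiagonal entries of `X ^ 2 = J_k(l)` say `X i (i+1) * (X i i + X (i+1) (i+1)) = 1`, so
consecutive diagonal entries cannot be opposite; hence all of them equal one `r ≠ 0` with
`r ^ 2 = l` (`sqrt_diag_eq`).

An upper triangular square root is determined by its diagonal as long as no sum of two diagonal
entries vanishes (`eq_of_sq_eq`). For real `l` the matrix `ε • conj X` with `ε = ±1` is again an
upper triangular square root of `J_k(l)`. With `ε = 1` if `l > 0` and `ε = -1` if `l < 0` it has
the same diagonal as `X`, so `X = ε • conj X`: the entries are real, respectively purely imaginary.
-/

open Matrix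

/-- Two upper triangular matrices with the same square are equal when `X i i + Y j j` never
vanishes: `D = X - Y` satisfies `X * D + D * Y = 0`, and this homogeneous Sylvester equation forces
the diagonals of `D` to vanish one after the other. -/
lemma eq_of_sq_eq {k : ℕ} (X Y : Matrix (Fin k) (Fin k) ℂ)
    (hX : ∀ i j : Fin k, (j : ℕ) < (i : ℕ) → X i j = 0)
    (hY : ∀ i j : Fin k, (j : ℕ) < (i : ℕ) → Y i j = 0)
    (h : X * X = Y * Y) (hne : ∀ i j, X i i + Y j j ≠ 0) : X = Y := by
  have hD : X * (X - Y) + (X - Y) * Y = 0 := by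
    rw [mul_sub, sub_mul, h]; abel
  have key : ∀ d : ℕ, ∀ i j : Fin k, (j : ℕ) < i + d → (X - Y) i j = 0 := by
    intro d
    induction d with
    | zero =>
      intro i j hij
      simp [hX i j (by omega), hY i j (by omega)]
    | succ d ih =>
      intro i j hij
      rcases Nat.lt_or_ge (j : ℕ) (i + d) with hlt | hge
      · exact ih i j hlt
      -- on the `d`-th diagonal only one term of each product survives
      have e := congrFun (congrFun hD i) j
      rw [Matrix.add_apply, Matrix.mul_apply, Matrix.mul_apply, Finset.sum_eq_single i,
        Finset.sum_eq_single j] at e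
      · have e2 : (X i i + Y j j) * (X - Y) i j = 0 := by
          rw [Matrix.zero_apply] at e
          linear_combination e
        exact (mul_eq_zero.mp e2).resolve_left (hne i j)
      · intro m _ hm
        have hm' : (m : ℕ) ≠ j := fun h => hm (Fin.ext h)
        rcases Nat.lt_or_ge (j : ℕ) m with h1 | h1
        · rw [hY m j h1, mul_zero]
        · rw [ih i m (by omega), zero_mul]
      · simp
      · intro m _ hm
        have hm' : (m : ℕ) ≠ i := fun h => hm (Fin.ext h)
        rcases Nat.lt_or_ge (m : ℕ) i with h1 | h1
        · rw [hX i m h1, zero_mul]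
        · rw [ih m j (by omega), mul_zero]
      · simp
  ext i j
  exact sub_eq_zero.mp (key k i j (by omega))

lemma sqrt_diag_sq {k : ℕ} {μ : ℂ} (X : Matrix (Fin k) (Fin k) ℂ)
    (hX : ∀ i j : Fin k, (j : ℕ) < (i : ℕ) → X i j = 0)
    (h : X * X = jordanBlock k μ) (i : Fin k) : X i i * X i i = μ := by
  have e := congrFun (congrFun h i) i
  rw [Matrix.mul_apply, Finset.sum_eq_single i] at e
  · simpa [jordanBlock] using e
  · intro m _ hm
    have hm' : (m : ℕ) ≠ i := fun h => hm (Fin.ext h)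
    rcases Nat.lt_or_ge (m : ℕ) i with h1 | h1
    · rw [hX i m h1, zero_mul]
    · rw [hX m i (by omega), mul_zero]
  · simp

/-- All diagonal entries coincide: neighbouring ones are equal up to sign, and opposite signs are
excluded by the entry `1` on the superdiagonal. -/
lemma sqrt_diag_eq {k : ℕ} {μ : ℂ} (X : Matrix (Fin k) (Fin k) ℂ)
    (hX : ∀ i j : Fin k, (j : ℕ) < (i : ℕ) → X i j = 0)
    (h : X * X = jordanBlock k μ) (i j : Fin k) : X i i = X j j := by
  have step : ∀ (n : ℕ) (hn : n + 1 < k),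
      X ⟨n + 1, hn⟩ ⟨n + 1, hn⟩ = X ⟨n, by omega⟩ ⟨n, by omega⟩ := by
    intro n hn
    have ha := sqrt_diag_sq X hX h ⟨n, by omega⟩
    have hb := sqrt_diag_sq X hX h ⟨n + 1, hn⟩
    have e := congrFun (congrFun h ⟨n, by omega⟩) ⟨n + 1, hn⟩
    rw [Matrix.mul_apply, Finset.sum_eq_add (⟨n, by omega⟩ : Fin k) ⟨n + 1, hn⟩ (by simp)] at e
    · simp only [jordanBlock, Matrix.of_apply, Fin.mk.injEq, Nat.left_eq_add, one_ne_zero,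
        if_false, if_true] at e
      rcases mul_self_eq_mul_self_iff.mp (hb.trans ha.symm) with h1 | h1
      · exact h1
      · rw [h1] at e
        exact absurd (by linear_combination e) (zero_ne_one (α := ℂ))
    · rintro m _ ⟨hm1, hm2⟩
      have h1 : (m : ℕ) ≠ n := fun h => hm1 (Fin.ext h)
      have h2 : (m : ℕ) ≠ n + 1 := fun h => hm2 (Fin.ext h)
      rcases Nat.lt_or_ge (m : ℕ) n with h3 | h3
      · rw [hX _ m h3, zero_mul]
      · rw [hX m ⟨n + 1, hn⟩ (by simp only; omega), mul_zero]
    · simp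
    · simp
  have all : ∀ (n : ℕ) (hn : n < k), X ⟨n, hn⟩ ⟨n, hn⟩ = X ⟨0, by omega⟩ ⟨0, by omega⟩ := by
    intro n
    induction n with
    | zero => intro _; rfl
    | succ n ih => intro hn; rw [step n hn, ih]
  exact (all i i.2).trans (all j j.2).symm

/-- If conjugation acts on the diagonal of the square root by a sign `ε`, it acts on every entry by
that sign. -/
lemma sqrt_eq_conj {k : ℕ} {l : ℝ} (hl : l ≠ 0) (X : Matrix (Fin k) (Fin k) ℂ)
    (hX : ∀ i j : Fin k, (j : ℕ) < (i : ℕ) → X i j = 0)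
    (h : X * X = jordanBlock k (l : ℂ)) (ε : ℂ) (hε : ε * ε = 1)
    (hd : ∀ i, ε * star (X i i) = X i i) (i j : Fin k) : X i j = ε * star (X i j) := by
  have hconj : (X.map star) * (X.map star) = jordanBlock k (l : ℂ) := by
    have h1 : (X * X).map (starRingEnd ℂ) = X.map (starRingEnd ℂ) * X.map (starRingEnd ℂ) :=
      Matrix.map_mul
    change X.map (starRingEnd ℂ) * X.map (starRingEnd ℂ) = _
    rw [← h1, h]
    ext a b
    simp only [jordanBlock, Matrix.map_apply, Matrix.of_apply]
    split_ifs <;> simp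
  have hXY : X = ε • X.map star := by
    apply eq_of_sq_eq X _ hX
    · intro a b hab
      simp [hX a b hab]
    · rw [Matrix.smul_mul, Matrix.mul_smul, smul_smul, hε, one_smul, hconj, h]
    · intro a b h0
      have h1 : X a a + X b b = 0 := by
        rw [← h0, ← hd b]; simp
      rw [sqrt_diag_eq X hX h a b] at h1
      have h2 : X b b = 0 := by linear_combination h1 / 2
      have h3 := sqrt_diag_sq X hX h b
      rw [h2, mul_zero] at h3
      exact hl (by exact_mod_cast h3.symm)
  exact congrFun (congrFun hXY i) j

theorem jordanBlock_real_sqrts_real_or_imaginary (k : ℕ) (hk : 1 ≤ k)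
    (l : ℝ) (hl : l ≠ 0) :
    (0 < l → ∀ X : Matrix (Fin k) (Fin k) ℂ,
      (∀ i j : Fin k, (j : ℕ) < (i : ℕ) → X i j = 0) →
      X * X = jordanBlock k (l : ℂ) →
      ∀ i j : Fin k, (X i j).im = 0) ∧
    (l < 0 → ∀ X : Matrix (Fin k) (Fin k) ℂ,
      (∀ i j : Fin k, (j : ℕ) < (i : ℕ) → X i j = 0) →
      X * X = jordanBlock k (l : ℂ) →
      ∀ i j : Fin k, (X i j).re = 0) := by
  constructor
  · intro hpos X hX h i j
    have hij := sqrt_eq_conj hl X hX h 1 (by norm_num) (fun m => by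
      have hs := sqrt_diag_sq X hX h m
      have hre := congrArg Complex.re hs
      have him := congrArg Complex.im hs
      simp only [Complex.mul_re, Complex.mul_im, Complex.ofReal_re, Complex.ofReal_im] at hre him
      -- a nonreal square root of `l` would be purely imaginary, making `l` negative
      have h0 : (X m m).im = 0 := by
        by_contra hne
        have hz : (X m m).re = 0 := by
          have h2 : (X m m).re * (X m m).im = 0 := by linarith
          exact (mul_eq_zero.mp h2).resolve_right hne
        rw [hz] at hre
        nlinarith [mul_self_nonneg (X m m).im]
      apply Complex.ext <;> simp [h0]) i j
    have := congrArg Complex.im hij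
    simp at this
    linarith
  · intro hneg X hX h i j
    have hij := sqrt_eq_conj hl X hX h (-1) (by norm_num) (fun m => by
      have hs := sqrt_diag_sq X hX h m
      have hre := congrArg Complex.re hs
      have him := congrArg Complex.im hs
      simp only [Complex.mul_re, Complex.mul_im, Complex.ofReal_re, Complex.ofReal_im] at hre him
      -- a square root of `l` with nonzero real part would be real, making `l` positive
      have h0 : (X m m).re = 0 := by
        by_contra hne
        have hz : (X m m).im = 0 := by
          have h2 : (X m m).re * (X m m).im = 0 := by linarith
          exact (mul_eq_zero.mp h2).resolve_left hne
        rw [hz] at hre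
        nlinarith [mul_self_nonneg (X m m).re]
      apply Complex.ext <;> simp [h0]) i j
    have := congrArg Complex.re hij
    simp at this
    linarith
end

section
/- Let A ∈ ℝ^{2×2} satisfy (tr A)² < 4·det A (equivalently, A has complex conjugate nonreal eigenvalues θ ± iμ with μ ≠ 0). Then, regarding A as a complex matrix, the set {X ∈ ℂ^{2×2} : X² = A} has exactly four elements, each of which is a polynomial in A; exactly two of them have all entries real, and the other two have all entries purely imaginary (real part 0). -/
open Matrix Polynomial

/-!
For a `2 × 2` matrix `X` with `X² = A`, Cayley–Hamilton gives `τ X = A + δ` with `τ = tr X` and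
`δ = det X`, and moreover `δ² = det A`, `τ² = tr A + 2 δ` (`sqrt_two_by_two_relations`).
Put `s = √(det A)`. The hypothesis says `|tr A| < 2 s`, so either `δ = s` and
`τ = ± r` with `r = √(tr A + 2 s) > 0`, or `δ = -s` and `τ = ± i q` with `q = √(2 s - tr A) > 0`.
Hence the only candidates are `± P` and `± i Q` with the real matrices `P = r⁻¹ (A + s)` and
`Q = q⁻¹ (A - s)`, and all of them are square roots since `P² = A` and `Q² = -A`.
The upper right entry of `A` cannot vanish (the eigenvalues would be real), and it distinguishes
the four roots.
-/

/-- Cayley–Hamilton for a square root `X` of `B`, together with the resulting equations for the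
determinant and the trace of `X`. -/
lemma sqrt_two_by_two_relations {X B : Matrix (Fin 2) (Fin 2) ℂ} (hX : X * X = B) :
    X.det ^ 2 = B.det ∧ X.trace ^ 2 = B.trace + 2 * X.det ∧
      X.trace • X = B + X.det • (1 : Matrix (Fin 2) (Fin 2) ℂ) := by
  subst hX
  refine ⟨by rw [det_mul, sq], ?_, ?_⟩
  · simp [trace_fin_two, det_fin_two, mul_apply, Fin.sum_univ_two]
    ring
  · ext i j
    fin_cases i <;> fin_cases j <;>
      simp [trace_fin_two, det_fin_two, mul_apply, Fin.sum_univ_two] <;> ring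

/-- If `δ² = det A` and `k² = tr A + 2 δ ≠ 0`, then `k⁻¹ (A + δ)` is a square root of `A`: by
Cayley–Hamilton, `(A + δ)² = k² A`. -/
lemma inv_smul_add_sq (A : Matrix (Fin 2) (Fin 2) ℂ) {k δ : ℂ} (hδ : δ ^ 2 = A.det)
    (hk : k ^ 2 = A.trace + 2 * δ) (hk0 : k ≠ 0) :
    (k⁻¹ • (A + δ • (1 : Matrix (Fin 2) (Fin 2) ℂ))) *
      (k⁻¹ • (A + δ • (1 : Matrix (Fin 2) (Fin 2) ℂ))) = A := by
  have key : (A + δ • (1 : Matrix (Fin 2) (Fin 2) ℂ)) * (A + δ • (1 : Matrix (Fin 2) (Fin 2) ℂ))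
      = k ^ 2 • A := by
    rw [hk]
    rw [det_fin_two] at hδ
    ext i j
    fin_cases i <;> fin_cases j <;>
      simp [trace_fin_two, mul_apply, Fin.sum_univ_two] <;> first | ring1 | linear_combination hδ
  rw [smul_mul_smul_comm, key, smul_smul]
  have : k⁻¹ * k⁻¹ * k ^ 2 = 1 := by field_simp
  rw [this, one_smul]

/-- If `tr A + 2 δ` is a nonzero square `k²`, the square roots of `A` of determinant `δ` are among
`± k⁻¹ (A + δ)`. -/
lemma eq_or_eq_neg_of_det {X A : Matrix (Fin 2) (Fin 2) ℂ} {k : ℂ} (hX : X * X = A)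
    (hk : k ^ 2 = A.trace + 2 * X.det) (hk0 : k ≠ 0) :
    X = k⁻¹ • (A + X.det • (1 : Matrix (Fin 2) (Fin 2) ℂ)) ∨
      X = -(k⁻¹ • (A + X.det • (1 : Matrix (Fin 2) (Fin 2) ℂ))) := by
  obtain ⟨-, h2, h3⟩ := sqrt_two_by_two_relations hX
  rw [← hk, sq_eq_sq_iff_eq_or_eq_neg] at h2
  rw [← h3]
  rcases h2 with h2 | h2
  · left; rw [h2, smul_smul, inv_mul_cancel₀ hk0, one_smul]
  · right; rw [h2, smul_smul, mul_neg, inv_mul_cancel₀ hk0, neg_smul, one_smul, neg_neg]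

theorem real_2x2_nonreal_eigenvalues_four_sqrts
    (A : Matrix (Fin 2) (Fin 2) ℝ) (h : A.trace ^ 2 < 4 * A.det) :
    ({X : Matrix (Fin 2) (Fin 2) ℂ | X * X = A.map Complex.ofReal}).ncard = 4 ∧
    (∀ X : Matrix (Fin 2) (Fin 2) ℂ, X * X = A.map Complex.ofReal →
      ∃ p : Polynomial ℂ, X = Polynomial.aeval (A.map Complex.ofReal) p) ∧
    ({X : Matrix (Fin 2) (Fin 2) ℂ | X * X = A.map Complex.ofReal ∧
        ∀ i j : Fin 2, (X i j).im = 0}).ncard = 2 ∧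
    ({X : Matrix (Fin 2) (Fin 2) ℂ | X * X = A.map Complex.ofReal ∧
        ∀ i j : Fin 2, (X i j).re = 0}).ncard = 2 := by
  have hb : A 0 1 ≠ 0 := by
    intro hb
    rw [trace_fin_two, det_fin_two, hb] at h
    nlinarith [sq_nonneg (A 0 0 - A 1 1)]
  obtain ⟨s, hs0, hs⟩ : ∃ s : ℝ, 0 ≤ s ∧ s ^ 2 = A.det :=
    ⟨√A.det, Real.sqrt_nonneg _, Real.sq_sqrt (by nlinarith [sq_nonneg A.trace])⟩
  have habs : |A.trace| < 2 * s := abs_lt_of_sq_lt_sq (by nlinarith) (by positivity)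
  obtain ⟨hlo, hhi⟩ := abs_lt.mp habs
  obtain ⟨r, hr0, hr⟩ : ∃ r : ℝ, 0 < r ∧ r ^ 2 = A.trace + 2 * s :=
    ⟨√(A.trace + 2 * s), Real.sqrt_pos.mpr (by linarith), Real.sq_sqrt (by linarith)⟩
  obtain ⟨q, hq0, hq⟩ : ∃ q : ℝ, 0 < q ∧ q ^ 2 = 2 * s - A.trace :=
    ⟨√(2 * s - A.trace), Real.sqrt_pos.mpr (by linarith), Real.sq_sqrt (by linarith)⟩
  set B : Matrix (Fin 2) (Fin 2) ℂ := A.map Complex.ofReal with hB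
  have hBt : B.trace = (A.trace : ℂ) := by simp [hB, trace_fin_two]
  have hBd : B.det = (A.det : ℂ) := by simp [hB, det_fin_two]
  have hrC : (r : ℂ) ^ 2 = B.trace + 2 * (s : ℂ) := by rw [hBt]; exact_mod_cast hr
  have hsC : (s : ℂ) ^ 2 = B.det := by rw [hBd]; exact_mod_cast hs
  have hqC : (Complex.I * q) ^ 2 = B.trace + 2 * (-s : ℂ) := by
    have : (q : ℂ) ^ 2 = 2 * s - A.trace := by exact_mod_cast hq
    rw [hBt, mul_pow, Complex.I_sq, this]; ring
  have hr1 : (r : ℂ) ≠ 0 := by exact_mod_cast hr0.ne'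
  have hq1 : Complex.I * (q : ℂ) ≠ 0 := mul_ne_zero Complex.I_ne_zero (by exact_mod_cast hq0.ne')
  have hinv : (Complex.I * (q : ℂ))⁻¹ = ((-q⁻¹ : ℝ) : ℂ) * Complex.I := by
    rw [mul_inv, Complex.inv_I]; push_cast; ring
  obtain ⟨R, hR⟩ : ∃ R, R = (r : ℂ)⁻¹ • (B + (s : ℂ) • (1 : Matrix (Fin 2) (Fin 2) ℂ)) := ⟨_, rfl⟩
  obtain ⟨J, hJ⟩ : ∃ J, J = (Complex.I * q)⁻¹ • (B + (-s : ℂ) • (1 : Matrix (Fin 2) (Fin 2) ℂ)) :=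
    ⟨_, rfl⟩
  have hRR : R * R = B := hR ▸ inv_smul_add_sq B hsC hrC hr1
  have hJJ : J * J = B := hJ ▸ inv_smul_add_sq B (by rw [neg_sq, hsC]) hqC hq1
  have hall : ∀ X, X * X = B ↔ X = R ∨ X = -R ∨ X = J ∨ X = -J := by
    intro X
    constructor
    · intro hX
      have h1 := (sqrt_two_by_two_relations hX).1
      rw [← hsC, sq_eq_sq_iff_eq_or_eq_neg] at h1
      rcases h1 with h1 | h1
      · have := eq_or_eq_neg_of_det (k := r) hX (by rw [h1, hrC]) hr1
        rw [h1, ← hR] at this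
        tauto
      · have := eq_or_eq_neg_of_det (k := Complex.I * q) hX (by rw [h1, hqC]) hq1
        rw [h1, ← hJ] at this
        tauto
    · rintro (rfl | rfl | rfl | rfl) <;> simp [hRR, hJJ]
  have hRim : ∀ i j, (R i j).im = 0 := by
    intro i j
    rw [hR, ← Complex.ofReal_inv]
    fin_cases i <;> fin_cases j <;> simp [hB]
  have hJre : ∀ i j, (J i j).re = 0 := by
    intro i j
    rw [hJ, hinv]
    fin_cases i <;> fin_cases j <;> simp [hB]
  have hRre : (R 0 1).re ≠ 0 := by
    rw [hR, ← Complex.ofReal_inv]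
    simp [hB, hb, hr0.ne']
  have hJim : (J 0 1).im ≠ 0 := by
    rw [hJ, hinv]
    simp [hB, hb, hq0.ne']
  have hRR' : R ≠ -R := fun e => hRre (by
    have := congrArg (fun M : Matrix (Fin 2) (Fin 2) ℂ => (M 0 1).re) e
    simp only [Matrix.neg_apply, Complex.neg_re] at this
    linarith)
  have hJJ' : J ≠ -J := fun e => hJim (by
    have := congrArg (fun M : Matrix (Fin 2) (Fin 2) ℂ => (M 0 1).im) e
    simp only [Matrix.neg_apply, Complex.neg_im] at this
    linarith)
  have hRJ : R ≠ J := fun e => hRre (by rw [e, hJre])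
  have hRJ' : R ≠ -J := fun e => hRre (by rw [e, Matrix.neg_apply, Complex.neg_re, hJre, neg_zero])
  refine ⟨?_, ?_, ?_, ?_⟩
  · have : {X | X * X = B} = {R, -R, J, -J} := by
      ext X; simpa using hall X
    rw [this, Set.ncard_insert_of_notMem, Set.ncard_insert_of_notMem, Set.ncard_pair hJJ']
    · simp only [Set.mem_insert_iff, Set.mem_singleton_iff, neg_inj, not_or]
      exact ⟨fun e => hRJ' (by rw [← e, neg_neg]), hRJ⟩
    · simp only [Set.mem_insert_iff, Set.mem_singleton_iff, not_or]
      exact ⟨hRR', hRJ, hRJ'⟩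
  · have hpoly : ∀ a b : ℂ, aeval B (C a * (X + C b)) =
        a • (B + b • (1 : Matrix (Fin 2) (Fin 2) ℂ)) := by
      intro a b
      simp [Algebra.algebraMap_eq_smul_one]
    intro X hX
    rcases (hall X).1 hX with rfl | rfl | rfl | rfl
    · exact ⟨_, hR.trans (hpoly _ _).symm⟩
    · exact ⟨-_, by rw [map_neg, hpoly, ← hR]⟩
    · exact ⟨_, hJ.trans (hpoly _ _).symm⟩
    · exact ⟨-_, by rw [map_neg, hpoly, ← hJ]⟩
  · refine Eq.trans (congrArg Set.ncard ?_) (Set.ncard_pair hRR')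
    ext X
    simp only [Set.mem_ofPred_eq, Set.mem_insert_iff, Set.mem_singleton_iff, hall]
    constructor
    · rintro ⟨rfl | rfl | rfl | rfl, hi⟩
      · exact Or.inl rfl
      · exact Or.inr rfl
      · exact absurd (hi 0 1) hJim
      · exact absurd (hi 0 1) (by simpa using hJim)
    · rintro (rfl | rfl) <;> simp [hRim]
  · refine Eq.trans (congrArg Set.ncard ?_) (Set.ncard_pair hJJ')
    ext X
    simp only [Set.mem_ofPred_eq, Set.mem_insert_iff, Set.mem_singleton_iff, hall]
    constructor
    · rintro ⟨rfl | rfl | rfl | rfl, hi⟩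
      · exact absurd (hi 0 1) hRre
      · exact absurd (hi 0 1) (by simpa using hRre)
      · exact Or.inl rfl
      · exact Or.inr rfl
    · rintro (rfl | rfl) <;> simp [hJre]
end
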